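/- There exists an absolute constant C > 0 with the following property. Let N ≥ 2 be a square-free integer and let u, v be integers with gcd(u, v, N) = 1. Let v_P be a vector of minimal Euclidean norm among the nonzero vectors of Λ_{(u:v)}, and let w_P be a vector of minimal Euclidean norm among the vectors of Λ_{(u:v)} that are not real scalar multiples of v_P. Then there exists an integer λ with |λ| ≤ C·(log N)² such that the two coordinates of w_P + λ·v_P are coprime. -/

import Mathlib

/-- The lattice of integer representatives of the point `(u : v)` of `ℙ¹(ℤ/Nℤ)`. -/
def repLattice (N : ℕ) (u v : ℤ) : Set (ℤ × ℤ) := {p | (N : ℤ) ∣ p.1 * v - p.2 * u}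


namespace Jac
open Finset

lemma log_fact_eq (n : ℕ) : Real.log (n.factorial : ℝ) =
    ∑ p ∈ Nat.primesBelow (n+1), (n.factorial.factorization p : ℝ) * Real.log p := by
  rw [Real.log_nat_eq_sum_factorization]
  rw [Finsupp.sum_of_support_subset _ (s := Nat.primesBelow (n+1))]
  · intro p hp
    rw [Nat.support_factorization, Nat.mem_primeFactors] at hp
    rw [Nat.mem_primesBelow]
    exact ⟨Nat.lt_succ_of_le ((Nat.Prime.dvd_factorial hp.1).1 hp.2.1), hp.1⟩
  · intro i _; simp

lemma fact_val_le (n p : ℕ) (hp : p.Prime) :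
    (n.factorial.factorization p : ℝ) ≤ n / ((p:ℝ) - 1) := by
  haveI : Fact p.Prime := ⟨hp⟩
  have h := sub_one_mul_padicValNat_factorial (p := p) n
  rw [← Nat.factorization_def _ hp] at h
  have h2 : (p - 1) * n.factorial.factorization p ≤ n := by omega
  have hp1 : (1:ℝ) < p := by exact_mod_cast hp.one_lt
  rw [le_div_iff₀ (by linarith)]
  have : (((p - 1) * n.factorial.factorization p : ℕ) : ℝ) ≤ n := by exact_mod_cast h2
  rw [Nat.cast_mul, Nat.cast_sub hp.one_lt.le] at this
  push_cast at this; linarith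

lemma fact_val_ge (n p : ℕ) (hp : p.Prime) :
    (n:ℝ) / p - 1 ≤ n.factorial.factorization p := by
  have h := Nat.factorization_factorial hp (n := n) (b := Nat.log p n + 2) (by omega)
  have h2 : n / p ≤ n.factorial.factorization p := by
    rw [h]
    have := Finset.single_le_sum (f := fun i => n / p ^ i) (s := Finset.Ico 1 (Nat.log p n + 2))
      (fun i _ => Nat.zero_le _) (show 1 ∈ _ by simp)
    simpa using this
  have h3 : (n:ℝ) / p < (n / p : ℕ) + 1 := by
    have hp0 : (0:ℝ) < p := by exact_mod_cast hp.pos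
    rw [div_lt_iff₀ hp0]
    have := Nat.lt_div_mul_add (a := n) hp.pos
    have h4 : n < (n / p + 1) * p := by linarith
    exact_mod_cast h4
  have h4 : ((n / p : ℕ) : ℝ) ≤ n.factorial.factorization p := by exact_mod_cast h2
  linarith

lemma log_fact_ge (n : ℕ) (hn : 1 ≤ n) : (n:ℝ) * Real.log n - n ≤ Real.log (n.factorial : ℝ) := by
  have h := Real.pow_div_factorial_le_exp (n:ℝ) (by positivity) n
  have hn' : (0:ℝ) < n := by exact_mod_cast hn
  have hf : (0:ℝ) < n.factorial := by exact_mod_cast n.factorial_pos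
  have h2 := Real.log_le_log (by positivity) h
  rw [Real.log_exp, Real.log_div (by positivity) (by positivity), Real.log_pow] at h2
  linarith

lemma log_fact_le (n : ℕ) (hn : 1 ≤ n) : Real.log (n.factorial : ℝ) ≤ (n:ℝ) * Real.log n := by
  rw [← Real.log_pow]
  apply Real.log_le_log (by exact_mod_cast n.factorial_pos)
  exact_mod_cast n.factorial_le_pow

noncomputable def Ls (l : ℕ) : ℝ := ∑ q ∈ Nat.primesBelow l, Real.log q / ((q:ℝ) - 1)
noncomputable def Rs (l : ℕ) : ℝ := ∑ q ∈ Nat.primesBelow l, Real.log q / (q:ℝ)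

lemma Ls_ge (n : ℕ) (hn : 1 ≤ n) : Real.log n - 1 ≤ Ls (n+1) := by
  have hn' : (0:ℝ) < n := by exact_mod_cast hn
  have h1 := log_fact_ge n hn
  rw [log_fact_eq] at h1
  have h2 : ∑ p ∈ Nat.primesBelow (n+1), (n.factorial.factorization p : ℝ) * Real.log p
      ≤ n * Ls (n+1) := by
    rw [Ls, Finset.mul_sum]
    apply Finset.sum_le_sum
    intro p hp
    have hp := (Nat.mem_primesBelow.1 hp).2
    have := fact_val_le n p hp
    have hl : 0 ≤ Real.log p := Real.log_natCast_nonneg p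
    calc _ ≤ n / ((p:ℝ) - 1) * Real.log p := by gcongr
      _ = _ := by ring
  have h3 : (n:ℝ) * (Real.log n - 1) ≤ n * Ls (n+1) := by linarith
  exact le_of_mul_le_mul_left h3 hn'

lemma theta_pb (n : ℕ) : ∑ p ∈ Nat.primesBelow (n+1), Real.log p = Chebyshev.theta n := by
  rw [Chebyshev.theta_eq_sum_primesLE_log]; rfl

lemma Rs_le (n : ℕ) (hn : 1 ≤ n) : Rs (n+1) ≤ Real.log n + Real.log 4 := by
  have hn' : (0:ℝ) < n := by exact_mod_cast hn
  have h1 := log_fact_le n hn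
  rw [log_fact_eq] at h1
  have h2 : n * Rs (n+1) - Chebyshev.theta n ≤
      ∑ p ∈ Nat.primesBelow (n+1), (n.factorial.factorization p : ℝ) * Real.log p := by
    rw [Rs, Finset.mul_sum, ← theta_pb, ← Finset.sum_sub_distrib]
    apply Finset.sum_le_sum
    intro p hp
    have hp := (Nat.mem_primesBelow.1 hp).2
    have := fact_val_ge n p hp
    have hl : 0 ≤ Real.log p := Real.log_natCast_nonneg p
    calc _ = (n / (p:ℝ) - 1) * Real.log p := by ring
      _ ≤ _ := by gcongr
  have h3 := Chebyshev.theta_le_log4_mul_x (x := n) hn'.le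
  have h4 : (n:ℝ) * Rs (n+1) ≤ n * (Real.log n + Real.log 4) := by linarith
  exact le_of_mul_le_mul_left h4 hn'

lemma Ls_sub_Rs : ∃ A : ℝ, 0 ≤ A ∧ ∀ l, Ls l - Rs l ≤ A := by
  have hs : Summable (fun n : ℕ => 4 * (1 / (n:ℝ) ^ (3/2 : ℝ))) :=
    (Real.summable_one_div_nat_rpow.2 (by norm_num)).mul_left 4
  refine ⟨∑' n : ℕ, 4 * (1 / (n:ℝ) ^ (3/2 : ℝ)), tsum_nonneg (fun n => by positivity), fun l => ?_⟩
  rw [Ls, Rs, ← Finset.sum_sub_distrib]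
  refine le_trans (Finset.sum_le_sum ?_) (hs.sum_le_tsum (Nat.primesBelow l) (fun i _ => by positivity))
  intro p hp
  have hp := (Nat.mem_primesBelow.1 hp).2
  have hp2 : (2:ℝ) ≤ p := by exact_mod_cast hp.two_le
  have hlog : Real.log p ≤ 2 * Real.sqrt p := by
    have := Real.log_le_sub_one_of_pos (x := Real.sqrt p) (by positivity)
    rw [Real.log_sqrt (by positivity)] at this; linarith
  have e : (p:ℝ) ^ (3/2:ℝ) = p * Real.sqrt p := by
    rw [Real.sqrt_eq_rpow, show (3/2:ℝ) = 1 + 1/2 by norm_num, Real.rpow_add (by positivity), Real.rpow_one]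
  rw [e]
  have h1 : Real.log p / ((p:ℝ) - 1) - Real.log p / p = Real.log p / (p * (p-1)) := by
    have : (p:ℝ) - 1 ≠ 0 := by linarith
    field_simp; ring
  rw [h1]
  have hsq : Real.sqrt p * Real.sqrt p = p := Real.mul_self_sqrt (by positivity)
  have hs0 : 0 < Real.sqrt p := by positivity
  calc Real.log p / (p * (p-1)) ≤ 2 * Real.sqrt p / (p * (p/2)) := by
        gcongr
        linarith
    _ = 4 * (1 / (p * Real.sqrt p)) := by
        field_simp
        nlinarith

/-- Mertens-type bounds. -/
lemma mertens : ∃ A : ℝ, 1 ≤ A ∧ ∀ l : ℕ, 1 ≤ l →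
    Real.log l - A ≤ Rs l ∧ Rs l ≤ Ls l ∧ Ls l ≤ Real.log l + A := by
  obtain ⟨A, hA, h⟩ := Ls_sub_Rs
  have h4 : Real.log 4 ≤ 2 := by
    have : Real.log 4 = 2 * Real.log 2 := by
      rw [show (4:ℝ) = 2^2 by norm_num, Real.log_pow]; norm_num
    linarith [Real.log_two_lt_d9]
  refine ⟨A + 2, by linarith, fun l hl => ?_⟩
  have hm : Rs l ≤ Ls l := by
    apply Finset.sum_le_sum
    intro p hp
    have hp := (Nat.mem_primesBelow.1 hp).2
    have hp2 : (2:ℝ) ≤ p := by exact_mod_cast hp.two_le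
    have hl : 0 ≤ Real.log p := Real.log_natCast_nonneg p
    gcongr
    · linarith
    · linarith
  rcases Nat.lt_or_ge l 2 with h2 | h2
  · have : l = 1 := by omega
    subst this
    have e : Nat.primesBelow 1 = ∅ := by decide
    simp only [Rs, Ls, e, Finset.sum_empty, Nat.cast_one, Real.log_one]
    exact ⟨by linarith, le_refl _, by linarith⟩
  obtain ⟨n, rfl⟩ : ∃ n, l = n + 1 := ⟨l - 1, by omega⟩
  have hn : 1 ≤ n := by omega
  have h1 := Ls_ge n hn
  have h2' := Rs_le n hn
  have h3 := h (n+1)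
  have hn' : (1:ℝ) ≤ n := by exact_mod_cast hn
  have hlog : Real.log ((n+1:ℕ):ℝ) ≤ Real.log n + 1 := by
    have : Real.log ((n+1:ℕ):ℝ) ≤ Real.log (2 * n) := by
      apply Real.log_le_log (by positivity); push_cast; linarith
    rw [Real.log_mul (by norm_num) (by positivity)] at this
    linarith [Real.log_two_lt_d9]
  have hlog2 : Real.log n ≤ Real.log ((n+1:ℕ):ℝ) := by
    apply Real.log_le_log (by positivity); push_cast; linarith
  refine ⟨by linarith, hm, by linarith⟩

lemma pi_le {x : ℝ} (hx : 1 < x) : (Nat.primeCounting ⌊x⌋₊ : ℝ) ≤ 5 * x / Real.log x := by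
  have h := Chebyshev.pi_le_log4_mul_div hx
  have hl : 0 < Real.log x := Real.log_pos hx
  rw [Real.log_sqrt (by linarith)] at h
  have h4 : Real.log 4 ≤ 1.4 := by
    have : Real.log 4 = 2 * Real.log 2 := by
      rw [show (4:ℝ) = 2^2 by norm_num, Real.log_pow]; norm_num
    linarith [Real.log_two_lt_d9]
  have hs : Real.log x ≤ 2 * Real.sqrt x := by
    have := Real.log_le_sub_one_of_pos (x := Real.sqrt x) (by positivity)
    rw [Real.log_sqrt (by positivity)] at this; linarith
  have hsq : Real.sqrt x * Real.sqrt x = x := Real.mul_self_sqrt (by positivity)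
  have hs0 : 0 < Real.sqrt x := by positivity
  have h5 : Real.sqrt x ≤ 2 * x / Real.log x := by
    rw [le_div_iff₀ hl]; nlinarith
  have h6 : Real.log 4 * x / (Real.log x / 2) ≤ 2.8 * x / Real.log x := by
    rw [div_div_eq_mul_div]
    apply div_le_div_of_nonneg_right _ hl.le
    nlinarith
  have : 5 * x / Real.log x = 2.8 * x / Real.log x + 2 * x / Real.log x + 0.2 * x / Real.log x := by
    field_simp; norm_num
  have : 0 ≤ 0.2 * x / Real.log x := by positivity
  linarith

lemma card_pb_le {l : ℕ} {x : ℝ} (hx : 1 < x) (hl : (l:ℝ) ≤ x) :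
    ((Nat.primesBelow l).card : ℝ) ≤ 5 * x / Real.log x := by
  refine le_trans ?_ (pi_le hx)
  rw [Nat.primesBelow_card_eq_primeCounting']
  have : l ≤ ⌊x⌋₊ := Nat.le_floor hl
  have h1 : Nat.primeCounting' l ≤ Nat.primeCounting' (⌊x⌋₊ + 1) := Nat.monotone_primeCounting' (by omega)
  exact_mod_cast h1

/-- Many primes in `(x/4, x]`. -/
lemma primes_quarter : ∃ X0 : ℝ, 2 ≤ X0 ∧ ∀ x : ℝ, X0 ≤ x → ∀ s : Finset ℕ,
    (∀ p : ℕ, p.Prime → x / 4 < p → (p:ℝ) ≤ x → p ∈ s) → x / (10 * Real.log x) ≤ s.card := by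
  have hev : ∀ᶠ x : ℝ in Filter.atTop, Real.log x ≤ (1/100) * Real.sqrt x := by
    have := (isLittleO_log_rpow_atTop (r := 1/2) (by norm_num)).bound (show (0:ℝ) < 1/100 by norm_num)
    filter_upwards [this, Filter.eventually_ge_atTop 1] with x hx h1
    rw [← Real.sqrt_eq_rpow, Real.norm_of_nonneg (Real.log_nonneg h1), Real.norm_of_nonneg (by positivity)] at hx
    exact hx
  obtain ⟨X1, hX1⟩ := Filter.eventually_atTop.1 hev
  refine ⟨max X1 10000, le_trans (by norm_num) (le_max_right _ _), fun x hx s hs => ?_⟩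
  have hx1 : X1 ≤ x := le_trans (le_max_left _ _) hx
  have hx2 : 10000 ≤ x := le_trans (le_max_right _ _) hx
  have hl := hX1 x hx1
  have hlp : 0 < Real.log x := Real.log_pos (by linarith)
  have ht := Chebyshev.theta_ge' (x := x) (by linarith)
  have ht2 := Chebyshev.theta_le_log4_mul_x (x := x/4) (by linarith)
  have h4 : Real.log 4 = 2 * Real.log 2 := by
    rw [show (4:ℝ) = 2^2 by norm_num, Real.log_pow]; norm_num
  have hsq : Real.sqrt x * Real.sqrt x = x := Real.mul_self_sqrt (by positivity)
  have hs0 : 0 < Real.sqrt x := by positivity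
  have hs1 : 100 ≤ Real.sqrt x := Real.le_sqrt_of_sq_le (by norm_num; linarith)
  have hlx2 : Real.log (x+2) ≤ 2 * Real.log x := by
    rw [← Real.log_rpow (by linarith)]
    apply Real.log_le_log (by linarith)
    norm_cast; nlinarith
  have hdiff : x / 10 ≤ Chebyshev.theta x - Chebyshev.theta (x/4) := by
    have h2 := Real.log_two_gt_d9
    have h3 := Real.log_two_lt_d9
    have : Real.sqrt x * Real.log x ≤ x / 100 := by nlinarith
    nlinarith
  have hsum : Chebyshev.theta x - Chebyshev.theta (x/4) ≤ s.card * Real.log x := by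
    rw [Chebyshev.theta_eq_sum_primesLE, Chebyshev.theta_eq_sum_primesLE]
    have hsub : Nat.primesLE ⌊x/4⌋₊ ⊆ Nat.primesLE ⌊x⌋₊ := by
      intro p hp
      rw [Nat.mem_primesLE] at hp ⊢
      exact ⟨hp.1.trans (Nat.floor_le_floor (by linarith)), hp.2⟩
    rw [← Finset.sum_sdiff_eq_sub hsub]
    have hs' : Nat.primesLE ⌊x⌋₊ \ Nat.primesLE ⌊x/4⌋₊ ⊆ s := by
      intro p hp
      rw [Finset.mem_sdiff, Nat.mem_primesLE, Nat.mem_primesLE] at hp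
      apply hs p hp.1.2
      · by_contra hc
        exact hp.2 ⟨Nat.le_floor (not_lt.1 hc), hp.1.2⟩
      · exact (Nat.le_floor_iff (by linarith)).1 hp.1.1
    calc _ ≤ ∑ p ∈ Nat.primesLE ⌊x⌋₊ \ Nat.primesLE ⌊x/4⌋₊, Real.log x := by
          apply Finset.sum_le_sum
          intro p hp
          rw [Finset.mem_sdiff, Nat.mem_primesLE] at hp
          apply Real.log_le_log (by exact_mod_cast hp.1.2.pos)
          exact (Nat.le_floor_iff (by linarith)).1 hp.1.1
      _ = (Nat.primesLE ⌊x⌋₊ \ Nat.primesLE ⌊x/4⌋₊).card * Real.log x := by simp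
      _ ≤ _ := by
          gcongr
  rw [div_le_iff₀ (by positivity)]
  linarith

end Jac


namespace Jac
open Finset

lemma Ls_succ (l : ℕ) : Ls (l+1) = Ls l + if l.Prime then Real.log l / ((l:ℝ)-1) else 0 := by
  rw [Ls, Nat.primesBelow_succ]
  split_ifs with h
  · rw [Finset.sum_insert (by simp [Nat.mem_primesBelow]), Ls]; ring
  · simp [Ls]

lemma exp_inv_le (p : ℕ) (hp : p.Prime) : Real.exp (1/(p:ℝ)) ≤ p / ((p:ℝ)-1) := by
  have hp2 : (2:ℝ) ≤ p := by exact_mod_cast hp.two_le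
  have h := Real.add_one_le_exp (-(1/(p:ℝ)))
  rw [Real.exp_neg] at h
  have h0 : 0 < Real.exp (1/(p:ℝ)) := Real.exp_pos _
  rw [le_div_iff₀ (by linarith)]
  have h1 : -(1/(p:ℝ)) + 1 = (p-1)/p := by field_simp; ring
  rw [h1, div_le_iff₀ (by linarith), inv_mul_eq_div, le_div_iff₀ h0] at h
  linarith

lemma clock_exists : ∃ (T : ℕ → ℝ) (AT : ℝ), 1 ≤ AT ∧ Monotone T ∧ (∀ l, 0 < T l) ∧
    (∀ p : ℕ, p.Prime → T p * Real.exp (1/(p:ℝ)) ≤ T (p+1)) ∧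
    (∀ l : ℕ, Real.log l - AT ≤ T l) ∧ (∀ l : ℕ, T l ≤ Real.log l + 1) := by
  obtain ⟨A, hA, hM⟩ := mertens
  let E : ℕ → ℝ := fun l => Ls l - A
  let V : ℕ → ℝ := fun l => ∏ q ∈ Nat.primesBelow l, ((q:ℝ) / ((q:ℝ)-1))
  have hVpos : ∀ l, 0 < V l := by
    intro l
    apply Finset.prod_pos
    intro q hq
    have hq2 : (2:ℝ) ≤ q := by exact_mod_cast (Nat.mem_primesBelow.1 hq).2.two_le
    apply div_pos <;> linarith
  have hVs : ∀ l, V (l+1) = if l.Prime then V l * ((l:ℝ)/((l:ℝ)-1)) else V l := by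
    intro l
    simp only [V]
    rw [Nat.primesBelow_succ]
    split_ifs with h
    · rw [Finset.prod_insert (by simp [Nat.mem_primesBelow]), mul_comm]
    · rfl
  obtain ⟨p0, hp0⟩ : ∃ p0 : ℕ, Real.exp (2*A+1) ≤ p0 := exists_nat_ge _
  have hp0pos : 1 ≤ p0 := by
    have : (0:ℝ) < p0 := lt_of_lt_of_le (Real.exp_pos _) hp0
    exact_mod_cast this
  have hElow : ∀ l : ℕ, 1 ≤ l → Real.log l - 2*A ≤ E l := by
    intro l hl
    have := hM l hl
    simp only [E]; linarith
  have hEup : ∀ l, 1 ≤ l → E l ≤ Real.log l := by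
    intro l hl
    have := hM l hl
    simp only [E]; linarith
  have hEp0 : 1 ≤ E p0 := by
    have := hElow p0 hp0pos
    have h2 : 2*A+1 ≤ Real.log p0 := by
      rw [Real.le_log_iff_exp_le (by exact_mod_cast hp0pos)]; exact hp0
    linarith
  have hEs : ∀ l, E l ≤ E (l+1) := by
    intro l
    simp only [E]
    rw [Ls_succ]
    split_ifs with h
    · have hq2 : (2:ℝ) ≤ l := by exact_mod_cast h.two_le
      have : 0 ≤ Real.log l / ((l:ℝ)-1) := div_nonneg (Real.log_natCast_nonneg l) (by linarith)
      linarith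
    · simp
  have hEmono : Monotone E := monotone_nat_of_le_succ hEs
  let T : ℕ → ℝ := fun l => if l < p0 then V l / V p0 else E l
  have hV1 : ∀ l, V l ≤ V (l+1) := by
    intro l
    rw [hVs]
    split_ifs with h
    · have hq2 : (2:ℝ) ≤ l := by exact_mod_cast h.two_le
      have : 1 ≤ (l:ℝ)/((l:ℝ)-1) := by rw [le_div_iff₀ (by linarith)]; linarith
      nlinarith [hVpos l]
    · exact le_rfl
  have hVmono : Monotone V := monotone_nat_of_le_succ hV1
  have hTs : ∀ l, T l ≤ T (l+1) := by
    intro l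
    simp only [T]
    split_ifs with h1 h2 h2
    · exact div_le_div_of_nonneg_right (hV1 l) (hVpos _).le
    · have : l + 1 = p0 := by omega
      rw [this]
      refine le_trans ?_ hEp0
      rw [div_le_one (hVpos _)]
      exact hVmono (by omega)
    · omega
    · exact hEs l
  refine ⟨T, 2*A + Real.log p0, ?_, monotone_nat_of_le_succ hTs, ?_, ?_, ?_, ?_⟩
  · have := Real.log_natCast_nonneg p0; linarith
  · intro l
    simp only [T]
    split_ifs with h
    · exact div_pos (hVpos _) (hVpos _)
    · exact lt_of_lt_of_le (by linarith) (hEmono (not_lt.1 h))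
  · intro p hp
    have hexp := exp_inv_le p hp
    have hp2 : (2:ℝ) ≤ p := by exact_mod_cast hp.two_le
    have hVp : V (p+1) = V p * ((p:ℝ)/((p:ℝ)-1)) := by rw [hVs, if_pos hp]
    by_cases h1 : p < p0
    · have e1 : T p = V p / V p0 := by simp only [T]; rw [if_pos h1]
      have e2 : T p * Real.exp (1/(p:ℝ)) ≤ V (p+1) / V p0 := by
        rw [e1, hVp, mul_div_right_comm]
        have := div_pos (hVpos p) (hVpos p0)
        gcongr
      refine e2.trans ?_
      by_cases h2 : p + 1 < p0
      · simp only [T]; rw [if_pos h2]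
      · have : p + 1 = p0 := by omega
        simp only [T]
        rw [if_neg h2, this, div_self (hVpos p0).ne']
        exact hEp0
    · have e1 : T p = E p := by simp only [T]; rw [if_neg h1]
      have e2 : T (p+1) = E (p+1) := by simp only [T]; rw [if_neg (by omega)]
      rw [e1, e2]
      have hE1 : 1 ≤ E p := hEp0.trans (hEmono (not_lt.1 h1))
      have hE2 := hEup p hp.pos
      have e3 : E (p+1) = E p + Real.log p / ((p:ℝ)-1) := by
        simp only [E]; rw [Ls_succ, if_pos hp]; ring
      rw [e3]
      calc E p * Real.exp (1/(p:ℝ)) ≤ E p * (p / ((p:ℝ)-1)) := by gcongr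
        _ = E p + E p / ((p:ℝ)-1) := by
            have : (p:ℝ) - 1 ≠ 0 := by linarith
            field_simp; ring
        _ ≤ _ := by
            have : (0:ℝ) < p - 1 := by linarith
            gcongr
  · intro l
    simp only [T]
    split_ifs with h
    · have h3 : 0 < V l / V p0 := div_pos (hVpos _) (hVpos _)
      have : Real.log l ≤ Real.log p0 := by
        rcases Nat.eq_zero_or_pos l with rfl | hl
        · simpa using Real.log_natCast_nonneg p0
        · apply Real.log_le_log (by exact_mod_cast hl); exact_mod_cast h.le
      linarith
    · have := hElow l (by omega)
      have := Real.log_natCast_nonneg p0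
      linarith
  · intro l
    simp only [T]
    split_ifs with h
    · have : V l / V p0 ≤ 1 := by
        rw [div_le_one (hVpos _)]; exact hVmono h.le
      have := Real.log_natCast_nonneg l
      linarith
    · have := hEup l (by omega)
      linarith

noncomputable def Tk : ℕ → ℝ := Classical.choose clock_exists
noncomputable def AT : ℝ := Classical.choose (Classical.choose_spec clock_exists)
lemma Tk_spec : 1 ≤ AT ∧ Monotone Tk ∧ (∀ l, 0 < Tk l) ∧
    (∀ p : ℕ, p.Prime → Tk p * Real.exp (1/(p:ℝ)) ≤ Tk (p+1)) ∧
    (∀ l : ℕ, Real.log l - AT ≤ Tk l) ∧ (∀ l : ℕ, Tk l ≤ Real.log l + 1) := Classical.choose_spec (Classical.choose_spec clock_exists)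
lemma AT_ge : 1 ≤ AT := Tk_spec.1
lemma Tk_mono : Monotone Tk := Tk_spec.2.1
lemma Tk_pos (l : ℕ) : 0 < Tk l := Tk_spec.2.2.1 l
lemma Tk_step {p : ℕ} (hp : p.Prime) : Tk p * Real.exp (1/(p:ℝ)) ≤ Tk (p+1) := Tk_spec.2.2.2.1 p hp
lemma Tk_ge (l : ℕ) : Real.log l - AT ≤ Tk l := Tk_spec.2.2.2.2.1 l
lemma Tk_le (l : ℕ) : Tk l ≤ Real.log l + 1 := Tk_spec.2.2.2.2.2 l

/-- clock summation lemma -/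
lemma clock_sum (R w : ℝ → ℝ) (l : ℕ) (hR : ∀ x, 0 < x → x ≤ Tk l → 0 ≤ R x)
    (hw : ∀ x, 0 < x → x ≤ Tk l → 0 ≤ w x)
    (h : ∀ x y, 0 < x → x ≤ y → y ≤ Tk l → w x * Real.log (y/x) ≤ R y - R x) :
    ∑ p ∈ Nat.primesBelow l, (1/(p:ℝ)) * w (Tk p) ≤ R (Tk l) := by
  suffices H : ∀ m, m ≤ l → ∑ p ∈ Nat.primesBelow m, (1/(p:ℝ)) * w (Tk p) ≤ R (Tk m) from H l le_rfl
  intro m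
  induction m with
  | zero => intro _; simpa using hR _ (Tk_pos 0) (Tk_mono (Nat.zero_le _))
  | succ m ih =>
    intro hm
    have ih' := ih (by omega)
    have hx := Tk_pos m
    have hxy : Tk m ≤ Tk (m+1) := Tk_mono (by omega)
    have hy : Tk (m+1) ≤ Tk l := Tk_mono hm
    have h1 := h _ _ hx hxy hy
    have hw1 := hw _ hx (hxy.trans hy)
    rw [Nat.primesBelow_succ]
    split_ifs with hp
    · rw [Finset.sum_insert (by simp [Nat.mem_primesBelow])]
      have : 1/(m:ℝ) ≤ Real.log (Tk (m+1) / Tk m) := by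
        rw [Real.le_log_iff_exp_le (div_pos (Tk_pos _) hx), le_div_iff₀ hx, mul_comm]
        exact Tk_step hp
      nlinarith
    · have : 0 ≤ Real.log (Tk (m+1) / Tk m) := Real.log_nonneg (by rw [le_div_iff₀ hx]; linarith)
      nlinarith

end Jac


namespace Jac
open Finset

lemma div_eq_sum (N n : ℕ) : N / n = ∑ k ∈ Icc 1 N, if n ∣ k then 1 else 0 := by
  rw [← Finset.card_filter]
  have : Icc 1 N = Ioc 0 N := by ext; simp [Nat.succ_le_iff]
  rw [this, Nat.Ioc_filter_dvd_card_eq_div]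

lemma lsum_prime_pow (p k : ℕ) (hp : p.Prime) :
    (ArithmeticFunction.liouville * (ArithmeticFunction.zeta : ArithmeticFunction ℤ)) (p^k)
      = if Even k then 1 else 0 := by
  rw [ArithmeticFunction.coe_mul_zeta_apply, Nat.sum_divisors_prime_pow hp]
  have : ∀ i ∈ Finset.range (k+1), ArithmeticFunction.liouville (p^i) = (-1)^i := by
    intro i _
    rw [ArithmeticFunction.liouville_apply (pow_ne_zero _ hp.ne_zero),
      ArithmeticFunction.cardFactors_apply_prime_pow hp]
  rw [Finset.sum_congr rfl this]
  induction k with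
  | zero => simp
  | succ k ih =>
    rw [Finset.sum_range_succ, ih]
    · by_cases h : Even k
      · simp [h, Nat.even_add_one, Even.neg_one_pow h, pow_succ]
      · rw [if_neg h, if_pos (by rwa [Nat.even_add_one])]
        have : Even (k+1) := by rwa [Nat.even_add_one]
        rw [Even.neg_one_pow this]; simp
    · intro i hi
      exact this i (by simp at hi ⊢; omega)

lemma lsum_abs (k : ℕ) :
    |∑ d ∈ k.divisors, ArithmeticFunction.liouville d| ≤ if IsSquare k then 1 else 0 := by
  rcases Nat.eq_zero_or_pos k with rfl | hk
  · simp
  rw [← ArithmeticFunction.coe_mul_zeta_apply]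
  have hm : (ArithmeticFunction.liouville * (ArithmeticFunction.zeta : ArithmeticFunction ℤ)).IsMultiplicative :=
    ArithmeticFunction.isMultiplicative_liouville.mul ArithmeticFunction.isMultiplicative_zeta.natCast
  rw [hm.multiplicative_factorization _ hk.ne', Finsupp.prod]
  have hv : ∀ p ∈ k.factorization.support,
      (ArithmeticFunction.liouville * (ArithmeticFunction.zeta : ArithmeticFunction ℤ)) (p^(k.factorization p))
      = if Even (k.factorization p) then 1 else 0 := by
    intro p hp
    rw [Nat.support_factorization] at hp
    exact lsum_prime_pow p _ (Nat.prime_of_mem_primeFactors hp)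
  rw [Finset.prod_congr rfl hv]
  by_cases h : ∀ p ∈ k.factorization.support, Even (k.factorization p)
  · rw [Finset.prod_eq_one (fun p hp => if_pos (h p hp))]
    have : IsSquare k := by
      refine ⟨k.factorization.support.prod (fun p => p ^ (k.factorization p / 2)), ?_⟩
      rw [← Finset.prod_mul_distrib]
      conv_lhs => rw [← Nat.prod_factorization_pow_eq_self hk.ne']
      rw [Finsupp.prod]
      apply Finset.prod_congr rfl
      intro p hp
      obtain ⟨r, hr⟩ := h p hp
      rw [← pow_add]; congr 1; omega
    simp [this]
  · push Not at h
    obtain ⟨p, hp, hpo⟩ := h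
    rw [Finset.prod_eq_zero hp (if_neg hpo)]
    split_ifs <;> simp

lemma card_squares (N : ℕ) : ∑ k ∈ Icc 1 N, (if IsSquare k then (1:ℤ) else 0) ≤ Nat.sqrt N := by
  rw [← Finset.sum_filter, Finset.sum_const, nsmul_eq_mul, mul_one]
  have : (Finset.filter (fun k => IsSquare k) (Icc 1 N)) ⊆ (Icc 1 (Nat.sqrt N)).image (fun x => x*x) := by
    intro k hk
    rw [mem_filter, mem_Icc] at hk
    obtain ⟨⟨h1, h2⟩, r, rfl⟩ := hk
    rw [mem_image]
    refine ⟨r, ?_, rfl⟩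
    rw [mem_Icc]
    refine ⟨?_, Nat.le_sqrt.2 h2⟩
    by_contra hr
    have : r = 0 := by omega
    subst this; omega
  have h2 := (Finset.card_le_card this).trans Finset.card_image_le
  rw [Nat.card_Icc] at h2
  exact_mod_cast h2

lemma liouville_floor (N K : ℕ) (hK : N ≤ K) :
    |∑ n ∈ Icc 1 K, ArithmeticFunction.liouville n * ((N / n : ℕ) : ℤ)| ≤ Nat.sqrt N := by
  have h1 : ∑ n ∈ Icc 1 K, ArithmeticFunction.liouville n * ((N / n : ℕ) : ℤ) =
      ∑ k ∈ Icc 1 N, ∑ d ∈ k.divisors, ArithmeticFunction.liouville d := by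
    simp_rw [div_eq_sum]
    push_cast
    simp_rw [Finset.mul_sum]
    rw [Finset.sum_comm]
    apply Finset.sum_congr rfl
    intro k hk
    rw [mem_Icc] at hk
    simp only [mul_ite, mul_one, mul_zero]
    rw [← Finset.sum_filter]
    apply Finset.sum_congr _ (fun _ _ => rfl)
    ext d
    simp only [mem_filter, mem_Icc, Nat.mem_divisors]
    constructor
    · rintro ⟨_, h⟩; exact ⟨h, by omega⟩
    · rintro ⟨h, h'⟩
      have := Nat.le_of_dvd (by omega) h
      exact ⟨⟨Nat.pos_of_dvd_of_pos h (by omega), by omega⟩, h⟩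
  rw [h1]
  refine (Finset.abs_sum_le_sum_abs _ _).trans ?_
  exact (Finset.sum_le_sum (fun k _ => lsum_abs k)).trans (card_squares N)

lemma mod_eq (N n : ℕ) : (((N / n) % 4 : ℕ) : ℤ) = ((N / n : ℕ):ℤ) - 4 * ((N / 4 / n : ℕ) : ℤ) := by
  have h : N / 4 / n = N / n / 4 := by rw [Nat.div_div_eq_div_mul, Nat.div_div_eq_div_mul, mul_comm]
  rw [h]; omega

lemma Gsum (N : ℕ) : |∑ n ∈ Icc 1 N, ArithmeticFunction.liouville n * (((N / n) % 4 : ℕ) : ℤ)| ≤ 5 * Nat.sqrt N := by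
  simp_rw [mod_eq, mul_sub, Finset.sum_sub_distrib]
  have h1 := liouville_floor N N le_rfl
  have h2 := liouville_floor (N/4) N (Nat.div_le_self _ _)
  have h3 : (Nat.sqrt (N/4) : ℤ) ≤ Nat.sqrt N := by exact_mod_cast Nat.sqrt_le_sqrt (Nat.div_le_self _ _)
  have h4 : ∑ n ∈ Icc 1 N, ArithmeticFunction.liouville n * (4 * ((N / 4 / n : ℕ) : ℤ)) =
     4 * ∑ n ∈ Icc 1 N, ArithmeticFunction.liouville n * ((N / 4 / n : ℕ) : ℤ) := by
    rw [Finset.mul_sum]; apply Finset.sum_congr rfl; intros; ring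
  rw [h4]
  rw [abs_le] at *
  constructor <;> linarith [h1.1, h1.2, h2.1, h2.2]

/-- the sequence `1,1,1,-3` -/
def cv (v : ℕ) : ℤ := if 4 ∣ v then -3 else 1

lemma cv_sum (m : ℕ) : ∑ v ∈ Icc 1 m, cv v = ((m % 4 : ℕ) : ℤ) := by
  induction m with
  | zero => simp
  | succ m ih =>
    rw [Finset.sum_Icc_succ_top (by omega), ih, cv]
    split_ifs <;> omega

lemma cv_abs (v : ℕ) : |cv v| ≤ 3 := by
  rw [cv]; split_ifs <;> simp

lemma Fsum_split (N V s : ℕ) (hs : N < (V+1) * (s+1)) :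
    |∑ n ∈ Icc 1 N, (((N / n) % 4 : ℕ) : ℤ) - ∑ v ∈ Icc 1 V, cv v * ((N / v : ℕ) : ℤ)| ≤ 3 * s := by
  have h1 : ∑ v ∈ Icc 1 V, cv v * ((N / v : ℕ) : ℤ) =
      ∑ n ∈ Icc 1 N, ∑ v ∈ Icc 1 (min V (N/n)), cv v := by
    have : ∀ v ∈ Icc 1 V, cv v * ((N / v : ℕ) : ℤ) = ∑ n ∈ Icc 1 (N/v), cv v := by
      intro v _; simp [mul_comm]
    rw [Finset.sum_congr rfl this]
    apply Finset.sum_comm'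
    intro v n
    simp only [mem_Icc, le_min_iff]
    constructor
    · rintro ⟨⟨a, b⟩, c, d⟩
      have := (Nat.le_div_iff_mul_le (by omega)).1 d
      refine ⟨⟨a, b, ?_⟩, c, ?_⟩
      · rw [Nat.le_div_iff_mul_le (by omega)]; linarith
      · nlinarith
    · rintro ⟨⟨a, b, e⟩, c, d⟩
      have := (Nat.le_div_iff_mul_le (by omega)).1 e
      refine ⟨⟨a, b⟩, c, ?_⟩
      rw [Nat.le_div_iff_mul_le (by omega)]; linarith
  rw [h1, ← Finset.sum_sub_distrib]
  refine (Finset.abs_sum_le_sum_abs _ _).trans ?_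
  have h2 : ∀ n ∈ Icc 1 N, |(((N / n) % 4 : ℕ) : ℤ) - ∑ v ∈ Icc 1 (min V (N/n)), cv v| ≤ if n ≤ s then 3 else 0 := by
    intro n hn
    rw [mem_Icc] at hn
    rw [cv_sum]
    split_ifs with h
    · rw [abs_le]; omega
    · have : N / n ≤ V := by
        rw [← Nat.lt_succ_iff, Nat.div_lt_iff_lt_mul (by omega)]
        push Not at h
        refine hs.trans_le ?_
        exact Nat.mul_le_mul le_rfl h
      rw [min_eq_right this]; simp
  refine (Finset.sum_le_sum h2).trans ?_
  rw [← Finset.sum_filter, Finset.sum_const, nsmul_eq_mul]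
  have : (Finset.filter (fun n => n ≤ s) (Icc 1 N)) ⊆ Icc 1 s := by
    intro n; simp only [mem_filter, mem_Icc]; omega
  have := Finset.card_le_card this
  rw [Nat.card_Icc] at this
  have : ((Finset.filter (fun n => n ≤ s) (Icc 1 N)).card : ℤ) ≤ s := by exact_mod_cast this
  linarith

lemma harm_diff (t : ℕ) (ht : 1 ≤ t) :
    |∑ v ∈ Icc 1 (4*t), (cv v : ℝ) / v - Real.log 4| ≤ 1 / t := by
  have key : ∀ t : ℕ, ∑ v ∈ Icc 1 (4*t), (cv v : ℝ) / v = ∑ j ∈ Ico (t+1) (4*t+1), (1:ℝ)/j := by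
    intro t
    induction t with
    | zero => simp
    | succ t ih =>
      rw [show 4 * (t+1) = 4*t+1+1+1+1 by ring]
      iterate 4 rw [Finset.sum_Icc_succ_top (by omega)]
      rw [ih]
      have c1 : cv (4*t+1) = 1 := by rw [cv, if_neg (by omega)]
      have c2 : cv (4*t+1+1) = 1 := by rw [cv, if_neg (by omega)]
      have c3 : cv (4*t+1+1+1) = 1 := by rw [cv, if_neg (by omega)]
      have c4 : cv (4*t+1+1+1+1) = -3 := by rw [cv, if_pos (by omega)]
      rw [c1, c2, c3, c4]
      rcases Nat.eq_zero_or_pos t with rfl | ht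
      · norm_num [Finset.sum_Ico_succ_top]
      rw [Finset.sum_Ico_succ_top (show t+1+1 ≤ 4*t+1+1+1+1 by omega),
        Finset.sum_Ico_succ_top (show t+1+1 ≤ 4*t+1+1+1 by omega),
        Finset.sum_Ico_succ_top (show t+1+1 ≤ 4*t+1+1 by omega),
        Finset.sum_Ico_succ_top (show t+1+1 ≤ 4*t+1 by omega)]
      rw [Finset.sum_eq_sum_Ico_succ_bot (show t + 1 < 4*t+1 by omega)]
      push_cast
      have : (t:ℝ) + 1 ≠ 0 := by positivity
      have h4 : (4*(t:ℝ)+1+1+1+1) ≠ 0 := by positivity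
      have : (1:ℝ)/(t+1) = 1/(4*(t:ℝ)+1+1+1+1) + 3/(4*(t:ℝ)+1+1+1+1) := by
        field_simp; ring
      rw [this]; ring
  rw [key]
  have up : ∀ j : ℕ, 1 ≤ j → (1:ℝ)/(j+1:ℕ) ≤ Real.log (j+1:ℕ) - Real.log j := by
    intro j hj
    have hj' : (0:ℝ) < j := by exact_mod_cast hj
    have := Real.one_sub_inv_le_log_of_pos (x := ((j+1:ℕ):ℝ)/j) (by positivity)
    rw [Real.log_div (by positivity) (by positivity)] at this
    refine le_trans (le_of_eq ?_) this
    push_cast; field_simp; ring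
  have lo : ∀ j : ℕ, 1 ≤ j → Real.log (j+1:ℕ) - Real.log j ≤ (1:ℝ)/j := by
    intro j hj
    have hj' : (0:ℝ) < j := by exact_mod_cast hj
    have := Real.log_le_sub_one_of_pos (x := ((j+1:ℕ):ℝ)/j) (by positivity)
    rw [Real.log_div (by positivity) (by positivity)] at this
    refine le_trans this (le_of_eq ?_)
    push_cast; field_simp; ring
  have U : ∀ n, t ≤ n → ∑ j ∈ Ico (t+1) (n+1), (1:ℝ)/j ≤ Real.log n - Real.log t := by
    intro n hn
    induction n, hn using Nat.le_induction with
    | base => simp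
    | succ n hn ih =>
      rw [Finset.sum_Ico_succ_top (by omega)]
      have := up n (by omega)
      linarith
  have L : ∀ n, t ≤ n → Real.log (n+1:ℕ) - Real.log (t+1:ℕ) ≤ ∑ j ∈ Ico (t+1) (n+1), (1:ℝ)/j := by
    intro n hn
    induction n, hn using Nat.le_induction with
    | base => simp
    | succ n hn ih =>
      rw [Finset.sum_Ico_succ_top (by omega)]
      have := lo (n+1) (by omega)
      linarith
  have h1 := U (4*t) (by omega)
  have h2 := L (4*t) (by omega)
  have ht' : (1:ℝ) ≤ t := by exact_mod_cast ht
  have e1 : Real.log ((4*t:ℕ):ℝ) = Real.log 4 + Real.log t := by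
    push_cast; rw [Real.log_mul (by norm_num) (by positivity)]
  have e2 : Real.log 4 + Real.log t ≤ Real.log ((4*t+1:ℕ):ℝ) := by
    rw [← e1]; apply Real.log_le_log (by push_cast; linarith); push_cast; linarith
  have e3 := lo t ht
  rw [abs_le]
  have : (0:ℝ) ≤ 1/t := by positivity
  constructor <;> linarith

lemma Fsum (N : ℕ) : |((∑ n ∈ Icc 1 N, (((N / n) % 4 : ℕ) : ℤ) : ℤ) : ℝ) - N * Real.log 4| ≤ 40 * Real.sqrt N := by
  rcases Nat.eq_zero_or_pos N with rfl | hN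
  · simp
  set s := Nat.sqrt N with hs
  have hs1 : 1 ≤ s := Nat.le_sqrt.2 (by omega)
  have hNs : N < (s+1)*(s+1) := Nat.lt_succ_sqrt N
  have hsN : s * s ≤ N := Nat.sqrt_le N
  have hsR : (s:ℝ) ≤ Real.sqrt N := by
    apply Real.le_sqrt_of_sq_le; rw [sq]; exact_mod_cast hsN
  have h1 := Fsum_split N (4*(s+1)) s (by nlinarith)
  have h1' : |((∑ n ∈ Icc 1 N, (((N / n) % 4 : ℕ) : ℤ) : ℤ) : ℝ) -
      ((∑ v ∈ Icc 1 (4*(s+1)), cv v * ((N / v : ℕ) : ℤ) : ℤ) : ℝ)| ≤ 3 * s := by exact_mod_cast h1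
  have h2 : |((∑ v ∈ Icc 1 (4*(s+1)), cv v * ((N / v : ℕ) : ℤ) : ℤ) : ℝ) -
      N * ∑ v ∈ Icc 1 (4*(s+1)), (cv v : ℝ) / v| ≤ 12 * (s+1) := by
    push_cast
    rw [Finset.mul_sum, ← Finset.sum_sub_distrib]
    refine (Finset.abs_sum_le_sum_abs _ _).trans ?_
    have : ∀ v ∈ Icc 1 (4*(s+1)), |(cv v:ℝ) * ((N / v : ℕ) : ℝ) - N * ((cv v:ℝ)/v)| ≤ 3 := by
      intro v hv
      rw [mem_Icc] at hv
      have hv' : (0:ℝ) < v := by exact_mod_cast hv.1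
      have e : (cv v:ℝ) * ((N / v : ℕ) : ℝ) - N * ((cv v:ℝ)/v) = cv v * (((N / v : ℕ) : ℝ) - N / v) := by ring
      rw [e, abs_mul]
      have c : |(cv v : ℝ)| ≤ 3 := by exact_mod_cast cv_abs v
      have d : |((N / v : ℕ) : ℝ) - N / v| ≤ 1 := by
        have a1 := Nat.cast_div_le (α := ℝ) (m := N) (n := v)
        have a2 : (N:ℝ) / v < (N / v : ℕ) + 1 := by
          rw [div_lt_iff₀ hv']
          have := Nat.lt_div_mul_add (a := N) hv.1
          have h4 : N < (N / v + 1) * v := by linarith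
          exact_mod_cast h4
        rw [abs_le]; constructor <;> linarith
      nlinarith [abs_nonneg (cv v : ℝ), abs_nonneg (((N / v : ℕ) : ℝ) - N / v)]
    refine (Finset.sum_le_sum this).trans ?_
    simp; linarith
  have h3 := harm_diff (s+1) (by omega)
  have h4 : |(N:ℝ) * ∑ v ∈ Icc 1 (4*(s+1)), (cv v : ℝ) / v - N * Real.log 4| ≤ s + 1 := by
    rw [← mul_sub, abs_mul, Nat.abs_cast]
    calc _ ≤ (N:ℝ) * (1 / ((s+1:ℕ):ℝ)) := by gcongr
      _ ≤ _ := by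
        rw [mul_one_div, div_le_iff₀ (by positivity)]
        push_cast
        have : (N:ℝ) ≤ (s+1)*(s+1) := by exact_mod_cast hNs.le
        exact this
  have hs1' : (1:ℝ) ≤ s := by exact_mod_cast hs1
  rw [abs_le] at *
  constructor <;> linarith [h1'.1, h1'.2, h2.1, h2.2, h4.1, h4.2]

noncomputable def kap : ℝ := 2 / Real.log 4

lemma log4_gt : 1 < Real.log 4 := by
  have : Real.log 4 = 2 * Real.log 2 := by
    rw [show (4:ℝ) = 2^2 by norm_num, Real.log_pow]; norm_num
  linarith [Real.log_two_gt_d9]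

lemma kap_pos : 0 < kap := div_pos (by norm_num) (by linarith [log4_gt])
lemma kap_le : kap ≤ 2 := by
  rw [kap, div_le_iff₀ (by linarith [log4_gt])]; linarith [log4_gt]

open Classical in
/-- the model weighted count -/
noncomputable def Mset (σ N l : ℕ) : Finset ℕ :=
  (Icc 1 N).filter (fun n => (∀ p : ℕ, p.Prime → p ∣ n → l ≤ p) ∧
    ArithmeticFunction.cardFactors n % 2 = σ)

noncomputable def M (σ N l : ℕ) : ℝ := ∑ n ∈ Mset σ N l, (((N / n) % 4 : ℕ) : ℝ)

lemma M_nonneg (σ N l : ℕ) : 0 ≤ M σ N l := Finset.sum_nonneg (fun _ _ => by positivity)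

lemma Mset_zero (σ N : ℕ) : Mset σ N 0 = (Icc 1 N).filter (fun n => ArithmeticFunction.cardFactors n % 2 = σ) := by
  ext n; simp [Mset]

lemma M_base (σ N : ℕ) (hσ : σ < 2) : |kap * M σ N 0 - N| ≤ 50 * Real.sqrt N := by
  have hF := Fsum N
  have hG := Gsum N
  have hG' : |((∑ n ∈ Icc 1 N, ArithmeticFunction.liouville n * (((N / n) % 4 : ℕ) : ℤ) : ℤ) : ℝ)| ≤ 5 * Nat.sqrt N := by
    exact_mod_cast hG
  have hs : (Nat.sqrt N : ℝ) ≤ Real.sqrt N := by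
    apply Real.le_sqrt_of_sq_le; rw [sq]; exact_mod_cast Nat.sqrt_le N
  have key : 2 * M σ N 0 = ((∑ n ∈ Icc 1 N, (((N / n) % 4 : ℕ) : ℤ) : ℤ) : ℝ) +
     (-1)^σ * ((∑ n ∈ Icc 1 N, ArithmeticFunction.liouville n * (((N / n) % 4 : ℕ) : ℤ) : ℤ) : ℝ) := by
    rw [M, Mset_zero, Finset.sum_filter]
    simp only [Int.cast_sum, Int.cast_mul, Int.cast_natCast]
    rw [Finset.mul_sum, Finset.mul_sum, ← Finset.sum_add_distrib]
    apply Finset.sum_congr rfl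
    intro n hn
    rw [mem_Icc] at hn
    rw [ArithmeticFunction.liouville_apply (by omega)]
    have hpar : ((-1:ℝ))^σ * (-1)^(ArithmeticFunction.cardFactors n) =
        if ArithmeticFunction.cardFactors n % 2 = σ then 1 else -1 := by
      rw [← pow_add]
      split_ifs with h
      · apply Even.neg_one_pow; rw [Nat.even_iff]; omega
      · apply Odd.neg_one_pow; rw [Nat.odd_iff]; omega
    simp only [Int.cast_pow, Int.cast_neg, Int.cast_one]
    rw [← mul_assoc, hpar]
    split_ifs <;> ring
  have h4 := log4_gt
  have e : kap * M σ N 0 - N = (2 * M σ N 0 - N * Real.log 4) / Real.log 4 := by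
    rw [kap]; field_simp
  rw [e, abs_div, abs_of_pos (show (0:ℝ) < Real.log 4 by linarith), div_le_iff₀ (by linarith)]
  have hb : |2 * M σ N 0 - N * Real.log 4| ≤ 50 * Real.sqrt N := by
    rw [key]
    have hsg : ((-1:ℝ))^σ = 1 ∨ ((-1:ℝ))^σ = -1 := neg_one_pow_eq_or ℝ σ
    rw [abs_le] at *
    rcases hsg with h | h <;> rw [h] <;> constructor <;> nlinarith [hF.1, hF.2, hG'.1, hG'.2, Real.sqrt_nonneg (N:ℝ)]
  have : 0 ≤ Real.sqrt N := Real.sqrt_nonneg _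
  nlinarith

lemma M_step (σ N l : ℕ) (hσ : σ < 2) :
    M σ N (l+1) = M σ N l - if l.Prime then M (1-σ) (N/l) l else 0 := by
  by_cases hl : l.Prime
  · rw [if_pos hl]
    classical
    have hsplit := Finset.sum_filter_add_sum_filter_not (Mset σ N l) (fun n => l ∣ n)
      (fun n => (((N / n) % 4 : ℕ) : ℝ))
    have h1 : (Mset σ N l).filter (fun n => ¬ l ∣ n) = Mset σ N (l+1) := by
      ext n
      simp only [Mset, mem_filter, mem_Icc]
      constructor
      · rintro ⟨⟨a, b, c⟩, d⟩
        refine ⟨a, fun p hp hpn => ?_, c⟩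
        have := b p hp hpn
        rcases Nat.lt_or_ge l p with h | h
        · exact h
        · exact absurd ((le_antisymm this h) ▸ hpn) d
      · rintro ⟨a, b, c⟩
        refine ⟨⟨a, fun p hp hpn => (Nat.le_succ l).trans (b p hp hpn), c⟩, fun d => ?_⟩
        have := b l hl d
        omega
    have h2 : ∑ n ∈ (Mset σ N l).filter (fun n => l ∣ n), (((N / n) % 4 : ℕ) : ℝ) = M (1-σ) (N/l) l := by
      rw [M]
      symm
      refine Finset.sum_bij (fun m _ => l * m) ?_ ?_ ?_ ?_
      · intro m hm
        simp only [Mset, mem_filter, mem_Icc] at hm ⊢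
        obtain ⟨⟨a, a'⟩, b, c⟩ := hm
        refine ⟨⟨⟨Nat.mul_pos hl.pos a, ?_⟩, ?_, ?_⟩, Dvd.intro _ rfl⟩
        · rw [Nat.le_div_iff_mul_le hl.pos] at a'; linarith
        · intro p hp hpn
          rcases (Nat.Prime.dvd_mul hp).1 hpn with h | h
          · exact (Nat.prime_dvd_prime_iff_eq hp hl).1 h ▸ le_rfl
          · exact b p hp h
        · rw [ArithmeticFunction.cardFactors_mul hl.ne_zero (by omega),
            ArithmeticFunction.cardFactors_apply_prime hl]
          omega
      · intro a _ b _ h; exact Nat.eq_of_mul_eq_mul_left hl.pos h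
      · intro n hn
        simp only [Mset, mem_filter, mem_Icc] at hn
        obtain ⟨⟨⟨a, a'⟩, b, c⟩, m, rfl⟩ := hn
        have hm0 : m ≠ 0 := by rintro rfl; simp at a
        refine ⟨m, ?_, rfl⟩
        simp only [Mset, mem_filter, mem_Icc]
        rw [ArithmeticFunction.cardFactors_mul hl.ne_zero hm0,
            ArithmeticFunction.cardFactors_apply_prime hl] at c
        refine ⟨⟨Nat.pos_of_ne_zero hm0, ?_⟩, fun p hp hpm => b p hp (hpm.mul_left l), by omega⟩
        rw [Nat.le_div_iff_mul_le hl.pos]; linarith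
      · intro m _
        rw [Nat.div_div_eq_div_mul]
    rw [h1, h2] at hsplit
    rw [M, M, ← hsplit]; ring
  · rw [if_neg hl, sub_zero, M, M]
    apply Finset.sum_congr _ (fun _ _ => rfl)
    ext n
    simp only [Mset, mem_filter, mem_Icc]
    refine and_congr_right fun _ => and_congr_left fun _ => ?_
    constructor
    · intro h p hp hpn; exact (Nat.le_succ l).trans (h p hp hpn)
    · intro h p hp hpn
      have := h p hp hpn
      rcases Nat.lt_or_ge l p with h' | h'
      · exact h'
      · exact absurd ((le_antisymm this h') ▸ hp) hl

lemma M_buch (σ N l : ℕ) (hσ : σ < 2) :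
    M σ N l = M σ N 0 - ∑ p ∈ Nat.primesBelow l, M (1-σ) (N/p) p := by
  induction l with
  | zero => simp
  | succ l ih =>
    rw [M_step σ N l hσ, ih, Nat.primesBelow_succ]
    split_ifs with h
    · rw [Finset.sum_insert (by simp [Nat.mem_primesBelow])]; ring
    · ring

end Jac


namespace Jac
open Finset

/-- sifted set -/
def sft (a : ℕ → ℤ) (A : Finset ℤ) (l : ℕ) : Finset ℤ :=
  A.filter (fun n => ∀ p ∈ Nat.primesBelow l, ¬ n ≡ a p [ZMOD p])

def hit (a : ℕ → ℤ) (A : Finset ℤ) (p : ℕ) : Finset ℤ := A.filter (fun n => n ≡ a p [ZMOD p])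

lemma sft_zero (a : ℕ → ℤ) (A : Finset ℤ) : sft a A 0 = A := by simp [sft]

lemma sft_step (a : ℕ → ℤ) (A : Finset ℤ) (l : ℕ) :
    ((sft a A (l+1)).card : ℝ) = (sft a A l).card - if l.Prime then ((sft a (hit a A l) l).card : ℝ) else 0 := by
  by_cases hl : l.Prime
  · rw [if_pos hl]
    have h := Finset.card_filter_add_card_filter_not (s := sft a A l) (fun n => n ≡ a l [ZMOD l])
    have h1 : (sft a A l).filter (fun n => n ≡ a l [ZMOD l]) = sft a (hit a A l) l := by
      ext n; simp only [sft, hit, mem_filter]; tauto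
    have h2 : (sft a A l).filter (fun n => ¬ n ≡ a l [ZMOD l]) = sft a A (l+1) := by
      ext n
      simp only [sft, mem_filter]
      rw [Nat.primesBelow_succ, if_pos hl]
      simp only [Finset.mem_insert, forall_eq_or_imp]
      tauto
    rw [h1, h2] at h
    rw [← h]; push_cast; ring
  · rw [if_neg hl, sft, sft, Nat.primesBelow_succ, if_neg hl, sub_zero]

lemma sft_buch (a : ℕ → ℤ) (A : Finset ℤ) (l : ℕ) :
    ((sft a A l).card : ℝ) = A.card - ∑ p ∈ Nat.primesBelow l, ((sft a (hit a A p) p).card : ℝ) := by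
  induction l with
  | zero => simp [sft_zero]
  | succ l ih =>
    rw [sft_step, ih, Nat.primesBelow_succ]
    split_ifs with h
    · rw [Finset.sum_insert (by simp [Nat.mem_primesBelow])]; ring
    · ring

lemma sft_buch2 (a : ℕ → ℤ) (A : Finset ℤ) (l : ℕ) :
    ((sft a A l).card : ℝ) = A.card - ∑ p ∈ Nat.primesBelow l, ((hit a A p).card : ℝ)
      + ∑ p ∈ Nat.primesBelow l, ∑ q ∈ Nat.primesBelow p, ((sft a (hit a (hit a A p) q) q).card : ℝ) := by
  rw [sft_buch]
  have : ∀ p ∈ Nat.primesBelow l, ((sft a (hit a A p) p).card : ℝ) =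
    (hit a A p).card - ∑ q ∈ Nat.primesBelow p, ((sft a (hit a (hit a A p) q) q).card : ℝ) :=
    fun p _ => sft_buch a _ p
  rw [Finset.sum_congr rfl this, Finset.sum_sub_distrib]; ring

noncomputable def prog (x0 : ℤ) (W d : ℕ) (r : ℤ) : Finset ℤ := (Ioc x0 (x0 + W)).filter (fun n => n ≡ r [ZMOD d])

lemma prog_card (x0 : ℤ) (W d : ℕ) (hd : 0 < d) (r : ℤ) :
    |((prog x0 W d r).card : ℝ) - (W:ℝ)/d| ≤ 1 := by
  have h := Int.Ioc_filter_modEq_card x0 (x0 + W) (r := (d:ℤ)) (by exact_mod_cast hd) r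
  rw [← prog] at h
  have hd' : (0:ℚ) < d := by exact_mod_cast hd
  set F1 := ⌊((x0 + W - r : ℤ):ℚ) / ((d:ℤ):ℚ)⌋ with hF1
  set F2 := ⌊((x0 - r : ℤ):ℚ) / ((d:ℤ):ℚ)⌋ with hF2
  have a1 := Int.floor_le (((x0 + W - r : ℤ):ℚ) / ((d:ℤ):ℚ))
  have a2 := Int.lt_floor_add_one (((x0 + W - r : ℤ):ℚ) / ((d:ℤ):ℚ))
  have b1 := Int.floor_le (((x0 - r : ℤ):ℚ) / ((d:ℤ):ℚ))
  have b2 := Int.lt_floor_add_one (((x0 - r : ℤ):ℚ) / ((d:ℤ):ℚ))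
  rw [← hF1] at a1 a2
  rw [← hF2] at b1 b2
  have e : ((x0 + W - r : ℤ):ℚ) / ((d:ℤ):ℚ) = ((x0 - r : ℤ):ℚ) / ((d:ℤ):ℚ) + (W:ℚ)/d := by
    push_cast; ring
  have hmono : F2 ≤ F1 := by
    apply Int.floor_le_floor
    rw [e]; have : (0:ℚ) ≤ (W:ℚ)/d := by positivity
    linarith
  have h' : ((prog x0 W d r).card : ℤ) = F1 - F2 := by
    have e1 : F1 = ⌊(((x0 + W : ℤ):ℚ) - (r:ℚ)) / ((d:ℤ):ℚ)⌋ := by rw [hF1]; push_cast; rfl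
    have e2 : F2 = ⌊(((x0 : ℤ):ℚ) - (r:ℚ)) / ((d:ℤ):ℚ)⌋ := by rw [hF2]; push_cast; rfl
    rw [← e1, ← e2] at h
    rw [h, max_eq_left (by omega)]
  have hq : |((prog x0 W d r).card : ℚ) - (W:ℚ)/d| ≤ 1 := by
    have : ((prog x0 W d r).card : ℚ) = (F1:ℚ) - F2 := by exact_mod_cast h'
    rw [this, abs_le]
    rw [e] at a1 a2
    constructor <;> linarith
  have h3 : ((|((prog x0 W d r).card : ℚ) - (W:ℚ)/d| : ℚ) : ℝ) ≤ ((1:ℚ):ℝ) := Rat.cast_le.2 hq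
  push_cast at h3
  exact h3

lemma hit_prog (a : ℕ → ℤ) (x0 : ℤ) (W d p : ℕ) (hc : Nat.Coprime d p) (r : ℤ) :
    ∃ r', hit a (prog x0 W d r) p = prog x0 W (d*p) r' := by
  have hc' : IsCoprime (d:ℤ) (p:ℤ) := Nat.isCoprime_iff_coprime.2 hc
  obtain ⟨u, v, huv⟩ := hc'
  refine ⟨u * d * a p + v * p * r, ?_⟩
  ext n
  simp only [hit, prog, mem_filter, and_assoc]
  refine and_congr_right fun _ => ?_
  have e1 : (u * d * a p + v * p * r) ≡ r [ZMOD d] := by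
    rw [Int.modEq_iff_dvd]
    have : r - (u * d * a p + v * p * r) = d * (u * r - u * a p) := by
      linear_combination (-r) * huv
    rw [this]; exact Dvd.intro _ rfl
  have e2 : (u * d * a p + v * p * r) ≡ a p [ZMOD p] := by
    rw [Int.modEq_iff_dvd]
    have : a p - (u * d * a p + v * p * r) = p * (v * a p - v * r) := by
      linear_combination (-(a p)) * huv
    rw [this]; exact Dvd.intro _ rfl
  have hcc : (d:ℤ).natAbs.Coprime (p:ℤ).natAbs := by simpa using hc
  rw [Nat.cast_mul, ← Int.modEq_and_modEq_iff_modEq_mul hcc]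
  constructor
  · rintro ⟨h1, h2⟩; exact ⟨h1.trans e1.symm, h2.trans e2.symm⟩
  · rintro ⟨h1, h2⟩; exact ⟨h1.trans e1, h2.trans e2⟩

noncomputable def Mr (σ : ℕ) (Q : ℝ) (l : ℕ) : ℝ := M σ ⌊Q⌋₊ l

lemma Mr_nonneg (σ : ℕ) (Q : ℝ) (l : ℕ) : 0 ≤ Mr σ Q l := M_nonneg _ _ _

lemma Mr_base (σ : ℕ) (hσ : σ < 2) (Q : ℝ) (hQ : 0 ≤ Q) : |kap * Mr σ Q 0 - Q| ≤ 51 * Real.sqrt Q := by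
  have h := M_base σ ⌊Q⌋₊ hσ
  rw [← Mr] at h
  have h1 := Nat.floor_le hQ
  have h2 := Nat.lt_floor_add_one Q
  have hs : Real.sqrt ⌊Q⌋₊ ≤ Real.sqrt Q := Real.sqrt_le_sqrt h1
  have h3 : Q - ⌊Q⌋₊ ≤ Real.sqrt Q := by
    rcases lt_or_ge Q 1 with hq | hq
    · rw [Nat.floor_eq_zero.2 hq]
      simp only [Nat.cast_zero, sub_zero]
      apply Real.le_sqrt_of_sq_le; nlinarith
    · have : 1 ≤ Real.sqrt Q := Real.one_le_sqrt.2 hq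
      linarith
  rw [abs_le] at *
  constructor <;> linarith [h.1, h.2]

lemma Mr_buch (σ : ℕ) (hσ : σ < 2) (Q : ℝ) (l : ℕ) :
    Mr σ Q l = Mr σ Q 0 - ∑ p ∈ Nat.primesBelow l, Mr (1-σ) (Q/p) p := by
  rw [Mr, M_buch _ _ _ hσ]
  simp only [Mr, Nat.floor_div_natCast]

lemma Mr_buch2 (Q : ℝ) (l : ℕ) :
    Mr 0 Q l = Mr 0 Q 0 - ∑ p ∈ Nat.primesBelow l, Mr 1 (Q/p) 0
      + ∑ p ∈ Nat.primesBelow l, ∑ q ∈ Nat.primesBelow p, Mr 0 (Q/p/q) q := by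
  rw [Mr_buch 0 (by norm_num)]
  have : ∀ p ∈ Nat.primesBelow l, Mr (1-0) (Q/p) p =
    Mr 1 (Q/p) 0 - ∑ q ∈ Nat.primesBelow p, Mr 0 (Q/p/q) q :=
    fun p _ => Mr_buch 1 (by norm_num) _ p
  rw [Finset.sum_congr rfl this, Finset.sum_sub_distrib]; ring

/-- the pairs `q<p<l`. `good`: `p q³ ≤ Q`. -/
noncomputable def good (Q : ℝ) (p : ℕ) : Finset ℕ := (Nat.primesBelow p).filter (fun q => (p:ℝ) * (q:ℝ)^3 ≤ Q)
noncomputable def badq (Q : ℝ) (p : ℕ) : Finset ℕ := (Nat.primesBelow p).filter (fun q => ¬ (p:ℝ) * (q:ℝ)^3 ≤ Q)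

lemma good_bad (Q : ℝ) (p : ℕ) (f : ℕ → ℝ) :
    ∑ q ∈ Nat.primesBelow p, f q = ∑ q ∈ good Q p, f q + ∑ q ∈ badq Q p, f q :=
  (Finset.sum_filter_add_sum_filter_not _ _ _).symm

noncomputable def badK (K : ℝ) (Q : ℝ) (l : ℕ) : ℝ :=
  ∑ p ∈ Nat.primesBelow l, ∑ q ∈ badq Q p, Mr 0 (K*Q/p/q) q

noncomputable def pib (l : ℕ) : ℝ := ((Nat.primesBelow l).card : ℝ)

lemma Mr_bad_le (Q : ℝ) (q : ℕ) (hQ : Q < (q:ℝ)^2) : Mr 0 Q q ≤ 3 := by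
  rw [Mr, M]
  have : Mset 0 ⌊Q⌋₊ q ⊆ {1} := by
    intro n hn
    simp only [Mset, mem_filter, mem_Icc] at hn
    obtain ⟨⟨h1, h2⟩, h3, h4⟩ := hn
    rw [mem_singleton]
    by_contra hne
    have hnq : n < q^2 := by
      have : (n:ℝ) < (q:ℝ)^2 := lt_of_le_of_lt ((Nat.le_floor_iff' (by omega)).1 h2) hQ
      exact_mod_cast this
    obtain ⟨p, hp, m, rfl⟩ := Nat.exists_prime_and_dvd hne
    have hm0 : m ≠ 0 := by rintro rfl; simp at h1
    rw [ArithmeticFunction.cardFactors_mul hp.ne_zero hm0, ArithmeticFunction.cardFactors_apply_prime hp] at h4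
    have hm1 : m ≠ 1 := by rintro rfl; simp at h4
    obtain ⟨p', hp', hpm⟩ := Nat.exists_prime_and_dvd hm1
    have a1 := h3 p hp (Dvd.intro _ rfl)
    have a2 := h3 p' hp' (hpm.mul_left p)
    have a3 := Nat.le_of_dvd (Nat.pos_of_ne_zero hm0) hpm
    have : q * q ≤ p * m := Nat.mul_le_mul a1 (a2.trans a3)
    rw [sq] at hnq; omega
  calc ∑ n ∈ Mset 0 ⌊Q⌋₊ q, (((⌊Q⌋₊ / n) % 4 : ℕ) : ℝ) ≤ ∑ n ∈ ({1} : Finset ℕ), (((⌊Q⌋₊ / n) % 4 : ℕ) : ℝ) :=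
        Finset.sum_le_sum_of_subset_of_nonneg this (fun _ _ _ => by positivity)
    _ ≤ 3 := by
      rw [Finset.sum_singleton]
      have : (⌊Q⌋₊ / 1) % 4 ≤ 3 := by omega
      exact_mod_cast this

lemma pib_mono {a b : ℕ} (h : a ≤ b) : pib a ≤ pib b := by
  have : Nat.primesBelow a ⊆ Nat.primesBelow b := by
    intro p; simp only [Nat.mem_primesBelow]; rintro ⟨h1, h2⟩; exact ⟨by omega, h2⟩
  unfold pib
  exact_mod_cast Finset.card_le_card this

lemma bad1_le (Q : ℝ) (l : ℕ) : ∑ p ∈ Nat.primesBelow l, ∑ q ∈ badq Q p, Mr 0 (Q/p/q) q ≤ 3 * pib l ^ 2 := by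
  calc _ ≤ ∑ p ∈ Nat.primesBelow l, 3 * pib l := by
        apply Finset.sum_le_sum
        intro p hp
        calc _ ≤ ∑ q ∈ badq Q p, (3:ℝ) := by
              apply Finset.sum_le_sum
              intro q hq
              rw [badq, mem_filter, Nat.mem_primesBelow] at hq
              rw [Nat.mem_primesBelow] at hp
              apply Mr_bad_le
              have hp0 : (0:ℝ) < p := by exact_mod_cast hp.2.pos
              have hq0 : (0:ℝ) < q := by exact_mod_cast hq.1.2.pos
              rw [div_div, div_lt_iff₀ (by positivity)]
              nlinarith [hq.2]
          _ = 3 * ((badq Q p).card : ℝ) := by simp [mul_comm]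
          _ ≤ 3 * pib p := by
              gcongr
              unfold pib badq
              exact_mod_cast Finset.card_filter_le _ _
          _ ≤ 3 * pib l := by
              gcongr
              exact pib_mono (Nat.mem_primesBelow.1 hp).1.le
    _ = 3 * pib l ^ 2 := by simp [pib]; ring

noncomputable def Hs (Q : ℝ) (l : ℕ) : ℝ :=
  154 * (Real.sqrt Q + ∑ p ∈ Nat.primesBelow l, Real.sqrt (Q/p)) +
    ∑ p ∈ Nat.primesBelow l, ∑ q ∈ good Q p, 12 * pib q ^ 2

lemma comb_base (σ : ℕ) (hσ : σ < 2) (ε K Q : ℝ) (h0 : 0 ≤ ε) (h1 : ε ≤ 1) (hK : 1 ≤ K) (hQ : 0 ≤ Q) :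
    |kap * ((1+ε) * Mr σ Q 0 - ε/K * Mr σ (K*Q) 0) - Q| ≤ 153 * Real.sqrt Q := by
  have a1 := Mr_base σ hσ Q hQ
  have a2 := Mr_base σ hσ (K*Q) (by positivity)
  have hs : Real.sqrt (K*Q) ≤ K * Real.sqrt Q := by
    rw [Real.sqrt_mul (by linarith)]
    gcongr
    rw [Real.sqrt_le_left (by linarith)]; nlinarith
  have hs0 := Real.sqrt_nonneg Q
  have e : kap * ((1+ε) * Mr σ Q 0 - ε/K * Mr σ (K*Q) 0) - Q =
    (1+ε) * (kap * Mr σ Q 0 - Q) - ε/K * (kap * Mr σ (K*Q) 0 - K*Q) := by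
    field_simp; ring
  rw [e]
  have b1 : |(1+ε) * (kap * Mr σ Q 0 - Q)| ≤ 102 * Real.sqrt Q := by
    rw [abs_mul, abs_of_nonneg (by linarith : 0 ≤ 1+ε)]
    nlinarith [abs_nonneg (kap * Mr σ Q 0 - Q)]
  have b2 : |ε/K * (kap * Mr σ (K*Q) 0 - K*Q)| ≤ 51 * Real.sqrt Q := by
    rw [abs_mul, abs_of_nonneg (by positivity : 0 ≤ ε/K)]
    calc _ ≤ 1/K * (51 * (K * Real.sqrt Q)) := by
          gcongr
          linarith
      _ = _ := by field_simp
  have := abs_sub ((1+ε) * (kap * Mr σ Q 0 - Q)) (ε/K * (kap * Mr σ (K*Q) 0 - K*Q))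
  linarith

set_option maxHeartbeats 600000 in
/-- The generic comparison lemma. -/
lemma lemG (a : ℕ → ℤ) (x0 : ℤ) (W : ℕ) (ε K : ℝ) (h0 : 0 ≤ ε) (h1 : ε ≤ 1) (hK : 1 ≤ K)
    (P : ℝ → ℕ → ℝ)
    (hP : ∀ (Q : ℝ) (l : ℕ), 1 ≤ Q → (l:ℝ)^2 ≤ Q →
      Hs Q l + ∑ p ∈ Nat.primesBelow l, ∑ q ∈ good Q p, P (Q/p/q) q ≤ P Q l + kap * ε / K * badK K Q l) :
    ∀ (l d : ℕ) (r : ℤ), 0 < d → (∀ p : ℕ, p.Prime → p < l → Nat.Coprime d p) →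
      1 ≤ (W:ℝ)/d → (l:ℝ)^2 ≤ (W:ℝ)/d →
      kap * ((1+ε) * Mr 0 ((W:ℝ)/d) l - ε/K * Mr 0 (K*((W:ℝ)/d)) l) - 12 * pib l ^ 2 - P ((W:ℝ)/d) l
        ≤ (sft a (prog x0 W d r) l).card := by
  intro l
  induction l using Nat.strong_induction_on with
  | _ l ih =>
  intro d r hd hcop hQ1 hlQ
  set Q := (W:ℝ)/d with hQ
  have hc := hP Q l hQ1 hlQ
  rw [sft_buch2, Mr_buch2 Q l, Mr_buch2 (K*Q) l]
  have hA := prog_card x0 W d hd r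
  rw [← hQ] at hA
  have hbase := comb_base 0 (by norm_num) ε K Q h0 h1 hK (by linarith)
  have hsQ : 1 ≤ Real.sqrt Q := Real.one_le_sqrt.2 hQ1
  -- first order terms
  have hfirst : ∑ p ∈ Nat.primesBelow l, ((hit a (prog x0 W d r) p).card : ℝ) ≤
      ∑ p ∈ Nat.primesBelow l, (kap * ((1+ε) * Mr 1 (Q/p) 0 - ε/K * Mr 1 (K*Q/p) 0) + 154 * Real.sqrt (Q/p)) := by
    apply Finset.sum_le_sum
    intro p hp
    rw [Nat.mem_primesBelow] at hp
    have hp0 : (0:ℝ) < p := by exact_mod_cast hp.2.pos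
    have hp1 : (1:ℝ) ≤ p := by exact_mod_cast hp.2.pos
    obtain ⟨r', hr'⟩ := hit_prog a x0 W d p (hcop p hp.2 hp.1) r
    rw [hr']
    have c1 := prog_card x0 W (d*p) (Nat.mul_pos hd hp.2.pos) r'
    have e : (W:ℝ)/((d*p:ℕ):ℝ) = Q/p := by rw [hQ]; push_cast; rw [div_div]
    rw [e] at c1
    have c2 := comb_base 1 (by norm_num) ε K (Q/p) h0 h1 hK (by positivity)
    rw [← mul_div_assoc] at c2
    have hpl : (p:ℝ) ≤ l := by exact_mod_cast hp.1.le
    have : 1 ≤ Q/p := by rw [le_div_iff₀ hp0]; nlinarith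
    have : 1 ≤ Real.sqrt (Q/p) := Real.one_le_sqrt.2 this
    rw [abs_le] at c1 c2
    linarith [c1.2, c2.1]
  -- second order
  have hsecond : ∑ p ∈ Nat.primesBelow l, ∑ q ∈ Nat.primesBelow p,
        kap * ((1+ε) * Mr 0 (Q/p/q) q - ε/K * Mr 0 (K*Q/p/q) q)
        - ∑ p ∈ Nat.primesBelow l, ∑ q ∈ good Q p, (12 * pib q ^ 2 + P (Q/p/q) q)
        - kap * (1+ε) * (∑ p ∈ Nat.primesBelow l, ∑ q ∈ badq Q p, Mr 0 (Q/p/q) q)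
        + kap * ε / K * badK K Q l
      ≤ ∑ p ∈ Nat.primesBelow l, ∑ q ∈ Nat.primesBelow p,
        ((sft a (hit a (hit a (prog x0 W d r) p) q) q).card : ℝ) := by
    rw [badK, Finset.mul_sum, Finset.mul_sum, ← Finset.sum_sub_distrib, ← Finset.sum_sub_distrib,
      ← Finset.sum_add_distrib]
    apply Finset.sum_le_sum
    intro p hp
    rw [Nat.mem_primesBelow] at hp
    have hp0 : (0:ℝ) < p := by exact_mod_cast hp.2.pos
    rw [good_bad Q p, good_bad Q p (fun q => ((sft a (hit a (hit a (prog x0 W d r) p) q) q).card : ℝ))]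
    have g1 : ∑ q ∈ good Q p, kap * ((1+ε) * Mr 0 (Q/p/q) q - ε/K * Mr 0 (K*Q/p/q) q)
        - ∑ q ∈ good Q p, (12 * pib q ^ 2 + P (Q/p/q) q) ≤
        ∑ q ∈ good Q p, ((sft a (hit a (hit a (prog x0 W d r) p) q) q).card : ℝ) := by
      rw [← Finset.sum_sub_distrib]
      apply Finset.sum_le_sum
      intro q hq
      rw [good, mem_filter, Nat.mem_primesBelow] at hq
      obtain ⟨⟨hqp, hqpr⟩, hq3⟩ := hq
      have hq0 : (0:ℝ) < q := by exact_mod_cast hqpr.pos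
      have hq1 : (1:ℝ) ≤ q := by exact_mod_cast hqpr.pos
      obtain ⟨r', hr'⟩ := hit_prog a x0 W d p (hcop p hp.2 hp.1) r
      have hcq : Nat.Coprime (d*p) q := Nat.Coprime.mul_left (hcop q hqpr (by omega))
        ((Nat.coprime_primes hp.2 hqpr).2 (by omega))
      obtain ⟨r'', hr''⟩ := hit_prog a x0 W (d*p) q hcq r'
      rw [hr', hr'']
      have e : (W:ℝ)/((d*p*q:ℕ):ℝ) = Q/p/q := by rw [hQ]; push_cast; rw [div_div, div_div]; ring_nf
      have hq2 : (q:ℝ)^2 ≤ Q/p/q := by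
        rw [div_div, le_div_iff₀ (by positivity)]; nlinarith
      have := ih q (by omega) (d*p*q) r'' (Nat.mul_pos (Nat.mul_pos hd hp.2.pos) hqpr.pos) (by
        intro p' hp' hlt
        refine Nat.Coprime.mul_left (Nat.Coprime.mul_left (hcop p' hp' (by omega)) ?_) ?_
        · exact (Nat.coprime_primes hp.2 hp').2 (by omega)
        · exact (Nat.coprime_primes hqpr hp').2 (by omega)) (by
        rw [e]; nlinarith) (by rw [e]; exact hq2)
      rw [e] at this
      have e2 : K * (Q/p/q) = K*Q/p/q := by ring
      rw [e2] at this
      linarith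
    have g2 : ∑ q ∈ badq Q p, kap * ((1+ε) * Mr 0 (Q/p/q) q - ε/K * Mr 0 (K*Q/p/q) q)
       - kap * (1+ε) * (∑ q ∈ badq Q p, Mr 0 (Q/p/q) q) + kap * ε / K * ∑ q ∈ badq Q p, Mr 0 (K*Q/p/q) q = 0 := by
      rw [Finset.mul_sum, Finset.mul_sum, ← Finset.sum_sub_distrib, ← Finset.sum_add_distrib]
      apply Finset.sum_eq_zero
      intro q _; ring
    have g3 : 0 ≤ ∑ q ∈ badq Q p, ((sft a (hit a (hit a (prog x0 W d r) p) q) q).card : ℝ) :=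
      Finset.sum_nonneg (fun _ _ => by positivity)
    linarith
  have hb1 := bad1_le Q l
  have hk := kap_pos
  have hk2 := kap_le
  have hb2 : kap * (1+ε) * (∑ p ∈ Nat.primesBelow l, ∑ q ∈ badq Q p, Mr 0 (Q/p/q) q) ≤ 12 * pib l ^ 2 := by
    have hn : 0 ≤ ∑ p ∈ Nat.primesBelow l, ∑ q ∈ badq Q p, Mr 0 (Q/p/q) q :=
      Finset.sum_nonneg (fun _ _ => Finset.sum_nonneg (fun _ _ => Mr_nonneg _ _ _))
    generalize (∑ p ∈ Nat.primesBelow l, ∑ q ∈ badq Q p, Mr 0 (Q/p/q) q) = s at hb1 hn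
    have h5 : kap * (1+ε) ≤ 4 := by nlinarith
    nlinarith
  rw [Hs] at hc
  rw [abs_le] at hA hbase
  have hb3 := hbase.2
  have e1 : ∑ p ∈ Nat.primesBelow l, (kap * ((1+ε) * Mr 1 (Q/p) 0 - ε/K * Mr 1 (K*Q/p) 0) + 154 * Real.sqrt (Q/p))
     = kap * ((1+ε) * ∑ p ∈ Nat.primesBelow l, Mr 1 (Q/p) 0 - ε/K * ∑ p ∈ Nat.primesBelow l, Mr 1 (K*Q/p) 0)
      + 154 * ∑ p ∈ Nat.primesBelow l, Real.sqrt (Q/p) := by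
    rw [Finset.sum_add_distrib, ← Finset.mul_sum, ← Finset.mul_sum, Finset.sum_sub_distrib, ← Finset.mul_sum,
      ← Finset.mul_sum]
  have e2 : ∑ p ∈ Nat.primesBelow l, ∑ q ∈ Nat.primesBelow p,
        kap * ((1+ε) * Mr 0 (Q/p/q) q - ε/K * Mr 0 (K*Q/p/q) q)
     = kap * ((1+ε) * ∑ p ∈ Nat.primesBelow l, ∑ q ∈ Nat.primesBelow p, Mr 0 (Q/p/q) q
        - ε/K * ∑ p ∈ Nat.primesBelow l, ∑ q ∈ Nat.primesBelow p, Mr 0 (K*Q/p/q) q) := by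
    rw [Finset.mul_sum, Finset.mul_sum, ← Finset.sum_sub_distrib, Finset.mul_sum]
    refine Finset.sum_congr rfl fun p _ => ?_
    rw [Finset.mul_sum, Finset.mul_sum, ← Finset.sum_sub_distrib, Finset.mul_sum]
  have e3 : ∑ p ∈ Nat.primesBelow l, ∑ q ∈ good Q p, (12 * pib q ^ 2 + P (Q/p/q) q) =
      ∑ p ∈ Nat.primesBelow l, ∑ q ∈ good Q p, 12 * pib q ^ 2
      + ∑ p ∈ Nat.primesBelow l, ∑ q ∈ good Q p, P (Q/p/q) q := by
    rw [← Finset.sum_add_distrib]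
    refine Finset.sum_congr rfl fun p _ => ?_
    rw [Finset.sum_add_distrib]
  rw [e1] at hfirst
  rw [e2, e3] at hsecond
  clear e1 e2 e3 hbase ih hP
  generalize ∑ p ∈ Nat.primesBelow l, Mr 1 (Q/p) 0 = s1 at *
  generalize ∑ p ∈ Nat.primesBelow l, Mr 1 (K*Q/p) 0 = s2 at *
  generalize ∑ p ∈ Nat.primesBelow l, ∑ q ∈ Nat.primesBelow p, Mr 0 (Q/p/q) q = s3 at *
  generalize ∑ p ∈ Nat.primesBelow l, ∑ q ∈ Nat.primesBelow p, Mr 0 (K*Q/p/q) q = s4 at *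
  generalize ∑ p ∈ Nat.primesBelow l, ∑ q ∈ good Q p, 12 * pib q ^ 2 = s5 at *
  generalize ∑ p ∈ Nat.primesBelow l, ∑ q ∈ good Q p, P (Q/p/q) q = s6 at *
  generalize ∑ p ∈ Nat.primesBelow l, Real.sqrt (Q/p) = s7 at *
  generalize kap * (1+ε) * (∑ p ∈ Nat.primesBelow l, ∑ q ∈ badq Q p, Mr 0 (Q/p/q) q) = s8 at *
  generalize kap * ε / K * badK K Q l = s9 at *
  have key : kap * ((1+ε) * (Mr 0 Q 0 - s1 + s3) - ε/K * (Mr 0 (K*Q) 0 - s2 + s4)) =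
    kap * ((1+ε) * Mr 0 Q 0 - ε/K * Mr 0 (K*Q) 0) - kap * ((1+ε) * s1 - ε/K * s2) + kap * ((1+ε) * s3 - ε/K * s4) := by
    ring
  rw [key]
  linarith [hA.1]

end Jac


namespace Jac
open Finset

noncomputable def Fb (y : ℝ) : ℝ := if y ≤ 1 then y^3/3 else 1/3 + Real.log y

lemma Fb_le1 {y : ℝ} (h : y ≤ 1) : Fb y = y^3/3 := if_pos h
lemma Fb_ge1 {y : ℝ} (h : 1 ≤ y) : Fb y = 1/3 + Real.log y := by
  rcases eq_or_lt_of_le h with rfl | h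
  · simp [Fb]
  · exact if_neg (not_le.2 h)

lemma Fb_nonneg {y : ℝ} (h : 0 ≤ y) : 0 ≤ Fb y := by
  rcases le_total y 1 with h1 | h1
  · rw [Fb_le1 h1]; positivity
  · rw [Fb_ge1 h1]; have := Real.log_nonneg h1; linarith

lemma cube_low {a b : ℝ} (ha : 0 < a) (hab : a ≤ b) : a^3 * Real.log (b/a) ≤ (b^3 - a^3)/3 := by
  have h1 : Real.log (b/a) ≤ b/a - 1 := Real.log_le_sub_one_of_pos (by have : 0 < b := by linarith
                                                                       positivity)
  have h2 : a^3 * Real.log (b/a) ≤ a^3 * (b/a - 1) := by gcongr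
  have h3 : a^3 * (b/a-1) = a^2*(b-a) := by field_simp
  have h4 : (b^3-a^3) - 3*(a^2*(b-a)) = (b-a)^2*(b+2*a) := by ring
  have h5 : 0 ≤ (b-a)^2*(b+2*a) := by have : 0 < b := by linarith
                                      positivity
  linarith

lemma Fb_diff {a b : ℝ} (ha : 0 < a) (hab : a ≤ b) : min 1 (a^3) * Real.log (b/a) ≤ Fb b - Fb a := by
  have hb : 0 < b := by linarith
  have hl : 0 ≤ Real.log (b/a) := Real.log_nonneg (by rw [le_div_iff₀ ha]; linarith)
  rcases le_total b 1 with h1 | h1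
  · rw [Fb_le1 h1, Fb_le1 (hab.trans h1)]
    have := cube_low ha hab
    have h3 : min 1 (a^3) * Real.log (b/a) ≤ a^3 * Real.log (b/a) := by gcongr; exact min_le_right _ _
    linarith
  · rw [Fb_ge1 h1]
    rcases le_total a 1 with h2 | h2
    · rw [Fb_le1 h2]
      have h3 := cube_low ha h2
      have h4 : min 1 (a^3) * Real.log (b/a) ≤ a^3 * Real.log (b/a) := by gcongr; exact min_le_right _ _
      have h5 : Real.log (b/a) = Real.log b + Real.log (1/a) := by
        rw [Real.log_div hb.ne' ha.ne', Real.log_div one_ne_zero ha.ne', Real.log_one]; ring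
      have h6 : a^3 * Real.log b ≤ 1 * Real.log b := by
        have := Real.log_nonneg h1
        gcongr
        exact pow_le_one₀ ha.le h2
      rw [h5] at h4
      rw [h5]
      linarith
    · rw [Fb_ge1 h2]
      have h3 : min 1 (a^3) * Real.log (b/a) ≤ 1 * Real.log (b/a) := by gcongr; exact min_le_left _ _
      rw [Real.log_div hb.ne' ha.ne'] at h3 ⊢
      linarith

lemma Fb_mono {a b : ℝ} (ha : 0 < a) (hab : a ≤ b) : Fb a ≤ Fb b := by
  have := Fb_diff ha hab
  have hl : 0 ≤ Real.log (b/a) := Real.log_nonneg (by rw [le_div_iff₀ ha]; linarith)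
  have : 0 ≤ min 1 (a^3) := le_min zero_le_one (by positivity)
  nlinarith [mul_nonneg this hl]

lemma R2_ineq {L x y : ℝ} (hx : 0 < x) (hxy : x ≤ y) (hy : y < L) :
    x^3/(L-x)^4 * Real.log (y/x) ≤ 1/(3*L) * (y/(L-y))^3 - 1/(3*L) * (x/(L-x))^3 := by
  have hLx : 0 < L - x := by linarith
  have hLy : 0 < L - y := by linarith
  have hL : 0 < L := by linarith
  have hu : x/(L-x) ≤ y/(L-y) := by gcongr; linarith
  have h1 : Real.log (y/x) ≤ y/x - 1 := Real.log_le_sub_one_of_pos (by have : 0 < y := by linarith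
                                                                       positivity)
  have h2 : x^3/(L-x)^4 * Real.log (y/x) ≤ x^3/(L-x)^4 * (y/x-1) := by gcongr
  have h3 : x^3/(L-x)^4 * (y/x-1) = (x/(L-x))^2 * ((y-x)/(L-x)^2) := by field_simp
  have h4 : (y-x)/(L-x)^2 * L ≤ y/(L-y) - x/(L-x) := by
    rw [div_sub_div _ _ hLy.ne' hLx.ne', div_mul_eq_mul_div]
    rw [show y * (L-x) - (L-y)*x = (y-x)*L by ring, sq]
    have : 0 ≤ y - x := by linarith
    gcongr
  set a := x/(L-x)
  set b := y/(L-y)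
  have ha : 0 < a := by positivity
  have h5 : 3*a^2*(b-a) ≤ b^3-a^3 := by
    have h4 : (b^3-a^3) - 3*(a^2*(b-a)) = (b-a)^2*(b+2*a) := by ring
    have h5 : 0 ≤ (b-a)^2*(b+2*a) := by have : 0 < b := by linarith
                                        positivity
    linarith
  have h6 : 3 * a^2 * ((y-x)/(L-x)^2 * L) ≤ 3*a^2*(b-a) := by gcongr
  have h7 : 1/(3*L) * (3 * a^2 * ((y-x)/(L-x)^2 * L)) ≤ 1/(3*L) * (b^3-a^3) := by
    gcongr; linarith
  have h8 : 1/(3*L) * (3 * a^2 * ((y-x)/(L-x)^2 * L)) = a^2 * ((y-x)/(L-x)^2) := by field_simp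
  rw [h8] at h7
  rw [h3] at h2
  linarith

lemma R1_ineq {L m x y : ℝ} (hm : 0 < m) (hx : 0 < x) (hxy : x ≤ y) (hy : y < L) :
    (1/(L-x) * min 1 ((x/(L-x)/m)^3)) * Real.log (y/x) ≤ 1/L * Fb (y/(L-y)/m) - 1/L * Fb (x/(L-x)/m) := by
  have hLx : 0 < L - x := by linarith
  have hLy : 0 < L - y := by linarith
  have hL : 0 < L := by linarith
  have hy0 : 0 < y := by linarith
  have hu : x/(L-x)/m ≤ y/(L-y)/m := by gcongr
  have hF := Fb_diff (a := x/(L-x)/m) (b := y/(L-y)/m) (by positivity) hu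
  have e : y/(L-y)/m/(x/(L-x)/m) = (y/x)/((L-y)/(L-x)) := by field_simp
  rw [e, Real.log_div (by positivity) (by positivity)] at hF
  have h1 : Real.log ((L-y)/(L-x)) ≤ (L-y)/(L-x) - 1 := Real.log_le_sub_one_of_pos (by positivity)
  have h2 : Real.log (y/x) ≤ y/x - 1 := Real.log_le_sub_one_of_pos (by positivity)
  have h3 : x/(L-x) * Real.log (y/x) ≤ x/(L-x) * (y/x-1) := by gcongr
  have h4 : x/(L-x) * (y/x-1) = 1 - (L-y)/(L-x) := by field_simp; ring
  have h5 : L/(L-x) * Real.log (y/x) ≤ Real.log (y/x) - Real.log ((L-y)/(L-x)) := by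
    have : L/(L-x) = 1 + x/(L-x) := by field_simp; ring
    rw [this]; linarith
  have hmin : 0 ≤ min 1 ((x/(L-x)/m)^3) := le_min zero_le_one (by positivity)
  have h6 : min 1 ((x/(L-x)/m)^3) * (L/(L-x) * Real.log (y/x)) ≤ Fb (y/(L-y)/m) - Fb (x/(L-x)/m) :=
    (mul_le_mul_of_nonneg_left h5 hmin).trans hF
  rw [← mul_sub]
  calc _ = 1/L * (min 1 ((x/(L-x)/m)^3) * (L/(L-x) * Real.log (y/x))) := by field_simp
    _ ≤ _ := by gcongr

/-- inner sum -/
lemma inner_sum {L m : ℝ} (hL : 0 < L) (hm : 0 < m) (hm1 : m < 1) (hmL : AT + 2 ≤ m * L) (p : ℕ) (S : Finset ℕ)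
    (hS : S ⊆ Nat.primesBelow p) (hq : ∀ q ∈ S, Tk q ≤ m * L - (AT + 2)) :
    ∑ q ∈ S, (1/(q:ℝ)) * (Tk q^3/(L - Tk q)^4) ≤ 1/(3*L) * (m/(1-m))^3 * min 1 ((Tk p/(m*L))^3) := by
  have hmL' : m * L < L := by nlinarith
  have hAT := AT_ge
  obtain ⟨l, hl1, hl2, hl3⟩ : ∃ l : ℕ, S ⊆ Nat.primesBelow l ∧ Tk l ≤ m * L ∧ l ≤ p := by
    rcases S.eq_empty_or_nonempty with rfl | hne
    · refine ⟨0, by simp, ?_, by omega⟩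
      have := Tk_le 0
      simp at this
      linarith
    · have hmem := S.max'_mem hne
      refine ⟨S.max' hne + 1, ?_, ?_, ?_⟩
      · intro q hqS
        have := S.le_max' q hqS
        have h2 := hS hqS
        rw [Nat.mem_primesBelow] at h2 ⊢
        exact ⟨by omega, h2.2⟩
      · have h1 := hq _ hmem
        have h2 := Tk_le (S.max' hne + 1)
        have h3 := Tk_ge (S.max' hne)
        have h4 := (Nat.mem_primesBelow.1 (hS hmem)).2.one_lt
        have h5 : Real.log ((S.max' hne + 1 : ℕ)) ≤ Real.log (S.max' hne) + 1 := by
          have : ((S.max' hne + 1 : ℕ):ℝ) ≤ Real.exp 1 * (S.max' hne) := by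
            have := Real.exp_one_gt_d9
            have : (1:ℝ) ≤ S.max' hne := by exact_mod_cast h4.le
            push_cast; nlinarith
          have h6 := Real.log_le_log (by positivity) this
          rw [Real.log_mul (by positivity) (by positivity), Real.log_exp] at h6
          linarith
        linarith
      · have := (Nat.mem_primesBelow.1 (hS hmem)).1
        omega
  have hTl := Tk_pos l
  have hTp := Tk_pos p
  have hTlp : Tk l ≤ Tk p := Tk_mono hl3
  have h1 := clock_sum (fun x => 1/(3*L) * (x/(L-x))^3) (fun x => x^3/(L-x)^4) l
    (fun x h1 h2 => by have : 0 < L - x := by linarith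
                       positivity)
    (fun x h1 h2 => by have : 0 < L - x := by linarith
                       positivity)
    (fun x y h1 h2 h3 => R2_ineq h1 h2 (by linarith))
  have h2 : ∑ q ∈ S, (1/(q:ℝ)) * (Tk q^3/(L - Tk q)^4) ≤ ∑ q ∈ Nat.primesBelow l, (1/(q:ℝ)) * (Tk q^3/(L - Tk q)^4) := by
    apply Finset.sum_le_sum_of_subset_of_nonneg hl1
    intro q _ _
    have := Tk_pos q
    positivity
  refine h2.trans (h1.trans ?_)
  rw [mul_assoc]
  gcongr
  have hm2 : 0 < 1 - m := by linarith
  have h3 : Tk l/(L - Tk l) ≤ m/(1-m) * (Tk l/(m*L)) := by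
    have : m/(1-m) * (Tk l/(m*L)) = Tk l/((1-m)*L) := by field_simp
    rw [this]
    gcongr
    linarith
  have h4 : (Tk l/(L - Tk l))^3 ≤ (m/(1-m) * (Tk l/(m*L)))^3 := by
    have : 0 < L - Tk l := by linarith
    gcongr
  refine h4.trans ?_
  rw [mul_pow]
  gcongr
  apply le_min
  · apply pow_le_one₀ (by positivity)
    rw [div_le_one (by positivity)]; exact hl2
  · gcongr

lemma outer_sum {L m : ℝ} (hm : 0 < m) (l : ℕ) (hl : Tk l < L) :
    ∑ p ∈ Nat.primesBelow l, (1/(p:ℝ)) * (1/(L-Tk p) * min 1 ((Tk p/(L-Tk p)/m)^3)) ≤ 1/L * Fb (Tk l/(L-Tk l)/m) := by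
  have hL : 0 < L := (Tk_pos l).trans hl
  exact clock_sum (fun x => 1/L * Fb (x/(L-x)/m)) (fun x => 1/(L-x) * min 1 ((x/(L-x)/m)^3)) l
    (fun x h1 h2 => by have : 0 < L - x := by linarith
                       have := Fb_nonneg (y := x/(L-x)/m) (by positivity)
                       positivity)
    (fun x h1 h2 => by have : 0 < L - x := by linarith
                       have : 0 ≤ min 1 ((x/(L-x)/m)^3) := le_min zero_le_one (by positivity)
                       positivity)
    (fun x y h1 h2 h3 => R1_ineq hm h1 h2 (by linarith))

lemma log_le_sinh {y : ℝ} (h : 1 ≤ y) : Real.log y ≤ (y - y⁻¹)/2 := by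
  rw [← Real.sinh_log (by linarith)]
  exact Real.self_le_sinh_iff.2 (Real.log_nonneg h)

/-- numeric inequality for exponent 4 -/
lemma num4 {y : ℝ} (h0 : 0 < y) (h : y ≤ 3) : Fb y * (3+y)^3 ≤ 23 * y^3 := by
  rcases le_total y 1 with h1 | h1
  · rw [Fb_le1 h1]
    have : (3+y)^3 ≤ 64 := by
      calc (3+y)^3 ≤ (3+1)^3 := by gcongr
        _ = 64 := by norm_num
    have : 0 < y^3 := by positivity
    nlinarith
  · rw [Fb_ge1 h1]
    have := log_le_sinh h1
    have h2 : (1/3 + Real.log y) * (3+y)^3 ≤ (1/3 + (y-y⁻¹)/2) * (3+y)^3 := by gcongr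
    refine h2.trans ?_
    have e : (1/3 + (y-y⁻¹)/2) * (3+y)^3 = ((2*y + 3*y^2-3) * (3+y)^3)/(6*y) := by field_simp; ring
    rw [e, div_le_iff₀ (by positivity)]
    obtain ⟨t, rfl⟩ : ∃ t, y = 1 + t := ⟨y-1, by ring⟩
    have ht : 0 ≤ t := by linarith
    have ht2 : t ≤ 2 := by linarith
    have e2 : 23*(1+t)^3*(6*(1+t)) - (2*(1+t) + 3*(1+t)^2-3)*(3+(1+t))^3 =
      (10 - 56*t + 228*t^2) + 310*t^3 + t^4*(94-3*t) := by ring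
    have h3 : 0 ≤ 10 - 56*t + 228*t^2 := by nlinarith [sq_nonneg (t - 1/8)]
    have h4 : 0 ≤ t^4*(94-3*t) := mul_nonneg (by positivity) (by linarith)
    have h5 : 0 ≤ 310*t^3 := by positivity
    linarith

lemma num6 {y : ℝ} (h0 : 0 < y) (h : y ≤ 1.68) : Fb y * (1+0.204*y)^5 ≤ 0.92 * y^3 := by
  rcases le_total y 1 with h1 | h1
  · rw [Fb_le1 h1]
    have : (1+0.204*y)^5 ≤ 2.75 := by
      calc (1+0.204*y)^5 ≤ (1+0.204*1)^5 := by gcongr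
        _ ≤ 2.75 := by norm_num
    have : 0 < y^3 := by positivity
    nlinarith
  · rw [Fb_ge1 h1]
    have := log_le_sinh h1
    have h2 : (1/3 + Real.log y) * (1+0.204*y)^5 ≤ (1/3 + (y-y⁻¹)/2) * (1+0.204*y)^5 := by gcongr
    refine h2.trans ?_
    have e : (1/3 + (y-y⁻¹)/2) * (1+0.204*y)^5 = ((2*y + 3*y^2-3) * (1+0.204*y)^5)/(6*y) := by field_simp; ring
    rw [e, div_le_iff₀ (by positivity)]
    obtain ⟨t, rfl⟩ : ∃ t, y = 1 + t := ⟨y-1, by ring⟩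
    have ht : 0 ≤ t := by linarith
    have ht2 : t ≤ 1 := by linarith
    have q2 : 0 ≤ t^2 := by positivity
    have q3 : 0 ≤ t^3 := by positivity
    have q4 : 0 ≤ t^4 := by positivity
    have q5 : t^5 ≤ t^3 := pow_le_pow_of_le_one ht ht2 (by norm_num)
    have q6 : t^6 ≤ t^3 := pow_le_pow_of_le_one ht ht2 (by norm_num)
    have q7 : t^7 ≤ t^3 := pow_le_pow_of_le_one ht ht2 (by norm_num)
    have h3 : 0 ≤ 0.45 - 2.448*t + 6.92*t^2 := by nlinarith [sq_nonneg (t - 0.177)]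
    nlinarith

noncomputable def c0 : ℝ := 20000 * (AT + 3)
noncomputable def Lg (Q : ℝ) : ℝ := Real.log Q + c0

lemma Lg_ge {Q : ℝ} (h : 1 ≤ Q) : c0 ≤ Lg Q := by
  have := Real.log_nonneg h
  unfold Lg; linarith

lemma Lg_div {Q p : ℝ} (hQ : 0 < Q) (hp : 0 < p) : Lg (Q/p) = Lg Q - Real.log p := by
  unfold Lg; rw [Real.log_div hQ.ne' hp.ne']; ring

lemma delta_ineq {X T l : ℝ} (h1 : l - AT ≤ T) (h2 : 10000 * AT ≤ X - T) : 0.9999 * (X - T) ≤ X - l := by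
  linarith

lemma contr {m : ℝ} (hm : 1/10 ≤ m) (hm2 : m ≤ 1/2) (Q : ℝ) (l : ℕ) (hQ : 1 ≤ Q) (hl : (l:ℝ)^2 ≤ Q)
    (S : ℕ → Finset ℕ) (hS : ∀ p ∈ Nat.primesBelow l, S p ⊆ Nat.primesBelow p)
    (hq : ∀ p ∈ Nat.primesBelow l, ∀ q ∈ S p, Tk q ≤ m * Lg (Q/p) - (AT+2)) :
    ∑ p ∈ Nat.primesBelow l, ∑ q ∈ S p, (Q/p/q) * (Tk q^3 / Lg (Q/p/q)^4) ≤
      Q * (1.001 * (1/3 * (m/(1-m))^3 * (1/Lg Q * Fb (Tk l/(Lg Q - Tk l)/m)))) := by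
  have hAT := AT_ge
  have hc : c0 = 20000 * (AT+3) := rfl
  have hLc := Lg_ge hQ
  have hlog : ∀ p : ℕ, p ≤ l → Real.log p ≤ Real.log Q / 2 := by
    intro p hp
    rcases Nat.eq_zero_or_pos p with rfl | hp0
    · simp; have := Real.log_nonneg hQ; linarith
    · have h1 : (p:ℝ)^2 ≤ Q := le_trans (by gcongr) hl
      have := Real.log_le_log (by positivity) h1
      rw [Real.log_pow] at this
      push_cast at this
      linarith
  have hTl : Lg Q / 2 ≤ Lg Q - Tk l := by
    have := Tk_le l
    have := hlog l le_rfl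
    unfold Lg; linarith
  have step : ∀ p ∈ Nat.primesBelow l, ∑ q ∈ S p, (Q/p/q) * (Tk q^3 / Lg (Q/p/q)^4) ≤
      Q * (1.001 * (1/3 * (m/(1-m))^3)) * ((1/(p:ℝ)) * (1/(Lg Q-Tk p) * min 1 ((Tk p/(Lg Q-Tk p)/m)^3))) := by
    intro p hp
    have hp' := Nat.mem_primesBelow.1 hp
    have hp0 : (0:ℝ) < p := by exact_mod_cast hp'.2.pos
    have hlp := hlog p hp'.1.le
    have hLY : Lg (Q/p) = Lg Q - Real.log p := Lg_div (by linarith) hp0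
    have hTp := Tk_pos p
    have hLQ : Lg Q = Real.log Q + c0 := rfl
    have hlogQ := Real.log_nonneg hQ
    have hLYc : c0 ≤ Lg (Q/p) := by linarith
    have hd1 : 0.9999 * (Lg Q - Tk p) ≤ Lg (Q/p) := by
      rw [hLY]
      apply delta_ineq (Tk_ge p)
      have := Tk_le p
      linarith
    have hLTp : 0 < Lg Q - Tk p := by
      have := Tk_le p
      linarith
    set Y := Lg (Q/p) with hY
    have hY0 : 0 < Y := by linarith
    have hin := inner_sum (L := Y) (m := m) hY0 (by linarith) (by linarith) (by nlinarith) p (S p) (hS p hp) (hq p hp)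
    have hc1 : ∑ q ∈ S p, (Q/p/q) * (Tk q^3 / Lg (Q/p/q)^4) ≤
        ∑ q ∈ S p, (Q/p*(1/0.9999)^4) * ((1/(q:ℝ)) * (Tk q^3/(Y - Tk q)^4)) := by
      apply Finset.sum_le_sum
      intro q hqS
      have hq' := Nat.mem_primesBelow.1 (hS p hp hqS)
      have hq0 : (0:ℝ) < q := by exact_mod_cast hq'.2.pos
      have hTq := hq p hp q hqS
      have hYT : 10000 * AT ≤ Y - Tk q := by nlinarith
      have hd2 : 0.9999 * (Y - Tk q) ≤ Lg (Q/p/q) := by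
        rw [Lg_div (by positivity) hq0]
        exact delta_ineq (Tk_ge q) hYT
      have hpos := Tk_pos q
      have hYT0 : 0 < Y - Tk q := by linarith
      calc (Q/p/q) * (Tk q^3 / Lg (Q/p/q)^4) ≤ (Q/p/q) * (Tk q^3 / (0.9999 * (Y - Tk q))^4) := by gcongr
        _ = _ := by rw [mul_pow, one_div_pow]; field_simp
    refine hc1.trans ?_
    rw [← Finset.mul_sum]
    have hm1 : 0 < 1 - m := by linarith
    have hm0 : 0 < m := by linarith
    have hmin : min 1 ((Tk p/(m*Y))^3) ≤ (1/0.9999)^3 * min 1 ((Tk p/(Lg Q-Tk p)/m)^3) := by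
      rcases le_total 1 ((Tk p/(Lg Q-Tk p)/m)^3) with h | h
      · rw [min_eq_left h]
        refine (min_le_left _ _).trans (by norm_num)
      · rw [min_eq_right h]
        refine (min_le_right _ _).trans ?_
        rw [← mul_pow]
        gcongr
        rw [show 1/0.9999 * (Tk p/(Lg Q-Tk p)/m) = Tk p / (m * (0.9999 * (Lg Q - Tk p))) by field_simp]
        gcongr
    have hmin0 : 0 ≤ min 1 ((Tk p/(m*Y))^3) := le_min zero_le_one (by positivity)
    calc Q/p*(1/0.9999)^4 * ∑ q ∈ S p, ((1/(q:ℝ)) * (Tk q^3/(Y - Tk q)^4))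
        ≤ Q/p*(1/0.9999)^4 * (1/(3*Y) * (m/(1-m))^3 * min 1 ((Tk p/(m*Y))^3)) := by gcongr
      _ ≤ Q/p*(1/0.9999)^4 * (1/(3*(0.9999 * (Lg Q - Tk p))) * (m/(1-m))^3 * ((1/0.9999)^3 * min 1 ((Tk p/(Lg Q-Tk p)/m)^3))) := by
        gcongr
      _ = (Q/p * (1/3 * (m/(1-m))^3) * (1/(Lg Q-Tk p) * min 1 ((Tk p/(Lg Q-Tk p)/m)^3))) * (1/0.9999)^8 := by
        field_simp
      _ ≤ (Q/p * (1/3 * (m/(1-m))^3) * (1/(Lg Q-Tk p) * min 1 ((Tk p/(Lg Q-Tk p)/m)^3))) * 1.001 := by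
        have : 0 ≤ min 1 ((Tk p/(Lg Q-Tk p)/m)^3) := le_min zero_le_one (by positivity)
        gcongr
        norm_num
      _ = _ := by ring
  calc _ ≤ ∑ p ∈ Nat.primesBelow l, Q * (1.001 * (1/3 * (m/(1-m))^3)) * ((1/(p:ℝ)) * (1/(Lg Q-Tk p) * min 1 ((Tk p/(Lg Q-Tk p)/m)^3))) :=
        Finset.sum_le_sum step
    _ ≤ Q * (1.001 * (1/3 * (m/(1-m))^3)) * (1/Lg Q * Fb (Tk l/(Lg Q - Tk l)/m)) := by
        rw [← Finset.mul_sum]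
        have hm1 : 0 < 1 - m := by linarith
        gcongr
        exact outer_sum (by linarith) l (by linarith)
    _ = _ := by ring

lemma logs_half {Q : ℝ} {l : ℕ} (hQ : 1 ≤ Q) (hl : (l:ℝ)^2 ≤ Q) {p : ℕ} (hp : p ≤ l) : Real.log p ≤ Real.log Q / 2 := by
  rcases Nat.eq_zero_or_pos p with rfl | hp0
  · simp; have := Real.log_nonneg hQ; linarith
  · have h1 : (p:ℝ)^2 ≤ Q := le_trans (by gcongr) hl
    have := Real.log_le_log (by positivity) h1
    rw [Real.log_pow] at this
    push_cast at this
    linarith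

lemma Tk_half {Q : ℝ} {l : ℕ} (hQ : 1 ≤ Q) (hl : (l:ℝ)^2 ≤ Q) : Tk l ≤ Lg Q / 2 := by
  have := Tk_le l
  have := logs_half hQ hl le_rfl
  have hAT := AT_ge
  have hc : c0 = 20000 * (AT+3) := rfl
  unfold Lg; linarith

lemma good_log {Q : ℝ} {p q : ℕ} (hp : p.Prime) (hq : q ∈ good Q p) :
    3 * Real.log q ≤ Real.log (Q/p) := by
  rw [good, mem_filter, Nat.mem_primesBelow] at hq
  have hp0 : (0:ℝ) < p := by exact_mod_cast hp.pos
  have hq0 : (0:ℝ) < q := by exact_mod_cast hq.1.2.pos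
  have h1 : (q:ℝ)^3 ≤ Q/p := by rw [le_div_iff₀ hp0]; linarith [hq.2]
  have := Real.log_le_log (by positivity) h1
  rw [Real.log_pow] at this
  exact_mod_cast this

theorem C4 (Q : ℝ) (l : ℕ) (hQ : 1 ≤ Q) (hl : (l:ℝ)^2 ≤ Q) :
    ∑ p ∈ Nat.primesBelow l, ∑ q ∈ good Q p, (Q/p/q) * (Tk q^3 / Lg (Q/p/q)^4) ≤
      0.96 * (Q * (Tk l^3 / Lg Q^4)) := by
  have hAT := AT_ge
  have hc : c0 = 20000 * (AT+3) := rfl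
  have hLc := Lg_ge hQ
  have h := contr (m := 1/3) (by norm_num) (by norm_num) Q l hQ hl (good Q)
    (fun p _ => Finset.filter_subset _ _) (by
      intro p hp q hq
      have h1 := good_log (Nat.mem_primesBelow.1 hp).2 hq
      have := Tk_le q
      unfold Lg; linarith)
  refine h.trans ?_
  have hT := Tk_half hQ hl
  have hT0 := Tk_pos l
  set L := Lg Q
  set T := Tk l
  have hL0 : 0 < L := by linarith
  have hLT : 0 < L - T := by linarith
  have h4 := num4 (y := T/(L-T)/(1/3)) (by positivity) (by
    rw [div_div, div_le_iff₀ (by positivity)]; linarith)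
  have e : 3 + T/(L-T)/(1/3) = 3*L/(L-T) := by field_simp; ring
  rw [e] at h4
  have h5 : Fb (T/(L-T)/(1/3)) ≤ 23 * T^3/L^3 := by
    rw [le_div_iff₀ (by positivity)]
    have : Fb (T/(L-T)/(1/3)) * L^3 = (Fb (T/(L-T)/(1/3)) * (3*L/(L-T))^3) * ((L-T)^3/27) := by
      field_simp; ring
    rw [this]
    calc _ ≤ 23 * (T/(L-T)/(1/3))^3 * ((L-T)^3/27) := by gcongr
      _ = _ := by field_simp; ring
  calc Q * (1.001 * (1/3 * ((1/3)/(1-1/3))^3 * (1/L * Fb (T/(L-T)/(1/3)))))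
      ≤ Q * (1.001 * (1/3 * ((1/3)/(1-1/3))^3 * (1/L * (23 * T^3/L^3)))) := by
        gcongr
    _ = (1.001 * 23/24) * (Q * (T^3/L^4)) := by field_simp; ring
    _ ≤ _ := by
        gcongr
        norm_num

theorem C6 (Q : ℝ) (l : ℕ) (hQ : 1 ≤ Q) (hl : (l:ℝ)^2 ≤ Q) (hTl : Tk l ≤ 0.255 * Lg Q) :
    ∑ p ∈ Nat.primesBelow l, ∑ q ∈ (good Q p).filter (fun q => Tk q ≤ 0.255 * Lg (Q/p/q)),
      (Q/p/q) * (Tk q^3 / Lg (Q/p/q)^6) ≤ 0.97 * (Q * (Tk l^3 / Lg Q^6)) := by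
  have hAT := AT_ge
  have hc : c0 = 20000 * (AT+3) := rfl
  have hLc := Lg_ge hQ
  have hlogQ := Real.log_nonneg hQ
  have hLQ : Lg Q = Real.log Q + c0 := rfl
  have hprep : ∀ p ∈ Nat.primesBelow l, ∀ q ∈ (good Q p).filter (fun q => Tk q ≤ 0.255 * Lg (Q/p/q)),
      c0 ≤ Lg (Q/p) ∧ Lg (Q/p/q) = Lg (Q/p) - Real.log q ∧ Tk q ≤ 0.204 * Lg (Q/p) - (AT + 2) := by
    intro p hp q hq
    rw [mem_filter] at hq
    have hp' := Nat.mem_primesBelow.1 hp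
    have hg := hq.1
    rw [good, mem_filter, Nat.mem_primesBelow] at hg
    have hp0 : (0:ℝ) < p := by exact_mod_cast hp'.2.pos
    have hq0 : (0:ℝ) < q := by exact_mod_cast hg.1.2.pos
    have h1 := logs_half hQ hl hp'.1.le
    have hLY : Lg (Q/p) = Lg Q - Real.log p := Lg_div (by linarith) hp0
    have hLq : Lg (Q/p/q) = Lg (Q/p) - Real.log q := Lg_div (by positivity) hq0
    have h2 : c0 ≤ Lg (Q/p) := by linarith
    refine ⟨h2, hLq, ?_⟩
    have h3 := hq.2
    rw [hLq] at h3
    have := Tk_le q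
    linarith
  have h := contr (m := 0.204) (by norm_num) (by norm_num) Q l hQ hl
    (fun p => (good Q p).filter (fun q => Tk q ≤ 0.255 * Lg (Q/p/q)))
    (fun p _ => (Finset.filter_subset _ _).trans (Finset.filter_subset _ _))
    (fun p hp q hq => (hprep p hp q hq).2.2)
  have hT0 := Tk_pos l
  have hLT : 0 < Lg Q - Tk l := by linarith
  have hL0 : 0 < Lg Q := by linarith
  have hstep : ∑ p ∈ Nat.primesBelow l, ∑ q ∈ (good Q p).filter (fun q => Tk q ≤ 0.255 * Lg (Q/p/q)),
      (Q/p/q) * (Tk q^3 / Lg (Q/p/q)^6) ≤ 1/(0.7958*(Lg Q - Tk l))^2 * 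
      ∑ p ∈ Nat.primesBelow l, ∑ q ∈ (good Q p).filter (fun q => Tk q ≤ 0.255 * Lg (Q/p/q)),
      (Q/p/q) * (Tk q^3 / Lg (Q/p/q)^4) := by
    rw [Finset.mul_sum]
    apply Finset.sum_le_sum
    intro p hp
    rw [Finset.mul_sum]
    apply Finset.sum_le_sum
    intro q hq
    obtain ⟨h1, h2, h3⟩ := hprep p hp q hq
    have hp' := Nat.mem_primesBelow.1 hp
    have hp0 : (0:ℝ) < p := by exact_mod_cast hp'.2.pos
    have hTpl := Tk_mono hp'.1.le
    have hge := Tk_ge q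
    have hgep := Tk_ge p
    have hLY : Lg (Q/p) = Lg Q - Real.log p := Lg_div (by linarith) hp0
    have d1 : 0.9999 * (Lg Q - Tk p) ≤ Lg (Q/p) := by
      rw [hLY]; apply delta_ineq hgep; linarith
    have d2 : 0.9999 * (Lg (Q/p) - Tk q) ≤ Lg (Q/p/q) := by
      rw [h2]; apply delta_ineq hge; linarith
    have d3 : 0.7958 * (Lg Q - Tk l) ≤ Lg (Q/p/q) := by linarith
    have hpos := Tk_pos q
    have hL' : 0 < Lg (Q/p/q) := by linarith
    calc (Q/p/q) * (Tk q^3 / Lg (Q/p/q)^6) = 1/(Lg (Q/p/q))^2 * ((Q/p/q) * (Tk q^3 / Lg (Q/p/q)^4)) := by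
          field_simp
      _ ≤ _ := by gcongr
  refine hstep.trans ((mul_le_mul_of_nonneg_left h (by positivity)).trans ?_)
  set L := Lg Q
  set T := Tk l
  have h4 := num6 (y := T/(L-T)/0.204) (by positivity) (by
    rw [div_div, div_le_iff₀ (by positivity)]; linarith)
  have e : 1 + 0.204*(T/(L-T)/0.204) = L/(L-T) := by field_simp; ring
  rw [e] at h4
  have h5 : Fb (T/(L-T)/0.204) / (L-T)^2 ≤ 0.92 * T^3/(0.204^3*L^5) := by
    rw [le_div_iff₀ (by positivity)]
    have : Fb (T/(L-T)/0.204) / (L-T)^2 * (0.204^3*L^5) = (Fb (T/(L-T)/0.204) * (L/(L-T))^5) * ((L-T)^3*0.204^3) := by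
      field_simp
    rw [this]
    calc _ ≤ 0.92 * (T/(L-T)/0.204)^3 * ((L-T)^3*0.204^3) := by gcongr
      _ = _ := by field_simp
  calc 1/(0.7958*(L-T))^2 * (Q * (1.001 * (1/3 * (0.204/(1-0.204))^3 * (1/L * Fb (T/(L-T)/0.204)))))
      = 1/0.7958^2 * (Q * (1.001 * (1/3 * (0.204/(1-0.204))^3 * (1/L * (Fb (T/(L-T)/0.204) / (L-T)^2))))) := by
        field_simp
    _ ≤ 1/0.7958^2 * (Q * (1.001 * (1/3 * (0.204/(1-0.204))^3 * (1/L * (0.92 * T^3/(0.204^3*L^5)))))) := by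
        gcongr
    _ = (1/0.7958^2 * 1.001 * (1/3) * (1/(1-0.204))^3 * 0.92) * (Q * (T^3/L^6)) := by field_simp
    _ ≤ _ := by
        gcongr
        norm_num

end Jac


namespace Jac
open Finset

lemma c0_ge : 1 ≤ c0 := by have := AT_ge; unfold c0; linarith

lemma Lg_pow : ∃ C : ℝ, 1 ≤ C ∧ ∀ Q : ℝ, 1 ≤ Q → Lg Q ^ 6 ≤ C * Q^(1/4:ℝ) := by
  have hc := c0_ge
  refine ⟨(24+c0)^6, one_le_pow₀ (by linarith), fun Q hQ => ?_⟩
  have h1 := Real.log_le_rpow_div (x := Q) (by linarith) (ε := 1/24) (by norm_num)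
  have h2 : 1 ≤ Q^(1/24:ℝ) := Real.one_le_rpow hQ (by norm_num)
  have h3 : Lg Q ≤ (24+c0) * Q^(1/24:ℝ) := by
    unfold Lg
    have : Q^(1/24:ℝ)/(1/24) = 24 * Q^(1/24:ℝ) := by ring
    nlinarith
  have h4 : 0 ≤ Lg Q := by linarith [Lg_ge hQ]
  calc Lg Q ^ 6 ≤ ((24+c0) * Q^(1/24:ℝ))^6 := by gcongr
    _ = _ := by
      rw [mul_pow, ← Real.rpow_natCast (Q^(1/24:ℝ)), ← Real.rpow_mul (by linarith)]
      norm_num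

lemma Tk_clog : ∃ c : ℝ, 0 < c ∧ c ≤ 1 ∧ ∀ p : ℕ, c * Real.log p ≤ Tk p := by
  have hAT := AT_ge
  have h0 := Tk_pos 0
  refine ⟨min (1/2) (Tk 0/(2*AT)), lt_min (by norm_num) (by positivity), (min_le_left _ _).trans (by norm_num), fun p => ?_⟩
  have hlog : 0 ≤ Real.log p := Real.log_natCast_nonneg p
  rcases le_total (Real.log p) (2*AT) with h | h
  · calc _ ≤ Tk 0/(2*AT) * Real.log p := by gcongr; exact min_le_right _ _
      _ ≤ Tk 0/(2*AT) * (2*AT) := by gcongr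
      _ = Tk 0 := by field_simp
      _ ≤ Tk p := Tk_mono (Nat.zero_le _)
  · calc _ ≤ 1/2 * Real.log p := by gcongr; exact min_le_left _ _
      _ ≤ Tk p := by linarith [Tk_ge p]

lemma clock_cube (l : ℕ) : ∑ p ∈ Nat.primesBelow l, (1/(p:ℝ)) * Tk p^3 ≤ Tk l^3/3 := by
  apply clock_sum (fun x => x^3/3) (fun x => x^3) l
  · intro x h _; positivity
  · intro x h _; positivity
  · intro x y h1 h2 h3
    have := cube_low h1 h2
    linarith

lemma pib_nonneg (l : ℕ) : 0 ≤ pib l := by unfold pib; positivity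

lemma pib_le_self (l : ℕ) : pib l ≤ l := by
  unfold pib
  have : Nat.primesBelow l ⊆ Finset.range l := Finset.filter_subset _ _
  have := Finset.card_le_card this
  simp at this
  exact_mod_cast this

/-- sum over good `q` -/
lemma good_src : ∃ C : ℝ, 0 < C ∧ ∀ (Q : ℝ) (l p : ℕ), 1 ≤ Q → (l:ℝ)^2 ≤ Q → p ∈ Nat.primesBelow l →
    ∑ q ∈ good Q p, 12 * pib q ^ 2 ≤ C * ((Q/p) * Tk p^3/Lg Q^6) := by
  obtain ⟨C1, hC1, hL1⟩ := Lg_pow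
  obtain ⟨c, hc0, hc1, hT⟩ := Tk_clog
  have hc0' := c0_ge
  have hT0 := Tk_pos 0
  set M : ℝ := 1 + c0 with hM
  refine ⟨12*C1/Tk 0^3 + 1500*6^3*M^3*(8*M/c)^3, by positivity, fun Q l p hQ hl hp => ?_⟩
  have hp' := Nat.mem_primesBelow.1 hp
  have hp0 : (0:ℝ) < p := by exact_mod_cast hp'.2.pos
  have hp2 : (2:ℝ) ≤ p := by exact_mod_cast hp'.2.two_le
  have hpQ : (p:ℝ)^2 ≤ Q := le_trans (by gcongr; exact_mod_cast hp'.1.le) hl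
  have hQ4 : 4 ≤ Q := by nlinarith
  have hlogQ : 1 < Real.log Q := lt_of_lt_of_le log4_gt (Real.log_le_log (by norm_num) hQ4)
  have hLM : Lg Q ≤ M * Real.log Q := by unfold Lg; rw [hM]; nlinarith
  have hLpos : 0 < Lg Q := by linarith [Lg_ge hQ]
  have hTp := Tk_pos p
  have hTp0 : Tk 0 ≤ Tk p := Tk_mono (Nat.zero_le _)
  rcases le_total ((p:ℝ)^8) Q with h8 | h8
  · have s1 : ∑ q ∈ good Q p, 12 * pib q ^ 2 ≤ 12 * (p:ℝ)^3 := by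
      calc _ ≤ ∑ q ∈ good Q p, 12 * (p:ℝ)^2 := by
            apply Finset.sum_le_sum
            intro q hq
            have hqp : q ≤ p := (Nat.mem_primesBelow.1 (Finset.filter_subset _ _ hq)).1.le
            have h1 := pib_le_self q
            have h2 := pib_nonneg q
            have h3 : pib q ≤ p := h1.trans (by exact_mod_cast hqp)
            gcongr
        _ = ((good Q p).card:ℝ) * (12 * (p:ℝ)^2) := by simp
        _ ≤ (p:ℝ) * (12 * (p:ℝ)^2) := by
            have hh : ((good Q p).card:ℝ) ≤ p := by
              refine le_trans ?_ (pib_le_self p)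
              unfold pib good
              exact_mod_cast Finset.card_filter_le _ _
            exact mul_le_mul_of_nonneg_right hh (by positivity)
        _ = _ := by ring
    have s2 : (p:ℝ)^3 * Lg Q^6 ≤ C1 * (Q/p) := by
      have h1 := hL1 Q hQ
      have h2 : (p:ℝ)^4 * Q^(1/4:ℝ) ≤ Q := by
        have h3 : (p:ℝ)^4 ≤ Q^(1/2:ℝ) := by
          rw [← Real.sqrt_eq_rpow]
          apply Real.le_sqrt_of_sq_le
          calc ((p:ℝ)^4)^2 = (p:ℝ)^8 := by ring
            _ ≤ Q := h8
        calc (p:ℝ)^4 * Q^(1/4:ℝ) ≤ Q^(1/2:ℝ) * Q^(1/2:ℝ) := by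
              refine mul_le_mul h3 ?_ (by positivity) (by positivity)
              exact Real.rpow_le_rpow_of_exponent_le hQ (by norm_num)
          _ = Q := by rw [← Real.rpow_add (by linarith)]; norm_num
      rw [← mul_div_assoc, le_div_iff₀ hp0]
      calc (p:ℝ)^3 * Lg Q^6 * p = (p:ℝ)^4 * Lg Q^6 := by ring
        _ ≤ (p:ℝ)^4 * (C1 * Q^(1/4:ℝ)) := by gcongr
        _ = C1 * ((p:ℝ)^4 * Q^(1/4:ℝ)) := by ring
        _ ≤ C1 * Q := by gcongr
    calc _ ≤ 12 * (p:ℝ)^3 := s1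
      _ ≤ 12 * (C1 * (Q/p)/Lg Q^6) := by gcongr; rw [le_div_iff₀ (by positivity)]; exact s2
      _ = 12*C1/Tk 0^3 * ((Q/p) * Tk 0^3/Lg Q^6) := by field_simp
      _ ≤ (12*C1/Tk 0^3 + 1500*6^3*M^3*(8*M/c)^3) * ((Q/p) * Tk p^3/Lg Q^6) := by
        gcongr
        have : 0 ≤ 1500*6^3*M^3*(8*M/c)^3 := by positivity
        linarith
  · set y : ℝ := (Q/p)^(1/3:ℝ) with hy
    have hQp : 0 < Q/p := by positivity
    have hy3 : y^3 = Q/p := by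
      rw [hy, ← Real.rpow_natCast, ← Real.rpow_mul hQp.le]; norm_num
    have hlogp : Real.log p ≤ Real.log Q/2 := logs_half hQ hl hp'.1.le
    have hlogy : Real.log Q/6 ≤ Real.log y := by
      rw [hy, Real.log_rpow hQp, Real.log_div (by positivity) (by positivity)]; linarith
    have hy1 : 1 < y := by
      by_contra h
      have : Real.log y ≤ 0 := Real.log_nonpos (by positivity) (not_lt.1 h)
      linarith
    have hqy : ∀ q ∈ good Q p, (q:ℝ) ≤ y := by
      intro q hq
      rw [good, mem_filter] at hq
      have : (q:ℝ)^3 ≤ y^3 := by rw [hy3, le_div_iff₀ hp0]; linarith [hq.2]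
      exact le_of_pow_le_pow_left₀ (by norm_num) (by positivity) this
    have hcard : ((good Q p).card:ℝ) ≤ 5*y/Real.log y := by
      refine le_trans ?_ (pi_le hy1)
      rw [Nat.primeCounting, ← Nat.primesBelow_card_eq_primeCounting']
      norm_cast
      apply Finset.card_le_card
      intro q hq
      have h1 := hqy q hq
      rw [Nat.mem_primesBelow]
      exact ⟨Nat.lt_succ_of_le (Nat.le_floor h1), (Nat.mem_primesBelow.1 (Finset.filter_subset _ _ hq)).2⟩
    have hly0 : 0 < Real.log y := by linarith
    have s1 : ∑ q ∈ good Q p, 12 * pib q ^ 2 ≤ 1500 * (Q/p)/(Real.log Q/6)^3 := by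
      calc _ ≤ ∑ q ∈ good Q p, 12 * (5*y/Real.log y)^2 := by
            apply Finset.sum_le_sum
            intro q hq
            have h1 := card_pb_le hy1 (hqy q hq)
            have h2 := pib_nonneg q
            rw [← pib] at h1
            gcongr
        _ = ((good Q p).card:ℝ) * (12 * (5*y/Real.log y)^2) := by simp
        _ ≤ (5*y/Real.log y) * (12 * (5*y/Real.log y)^2) := by gcongr
        _ = 1500 * y^3/(Real.log y)^3 := by field_simp; ring
        _ ≤ 1500 * y^3/(Real.log Q/6)^3 := by gcongr
        _ = _ := by rw [hy3]
    have hTp2 : Lg Q ≤ (8*M/c) * Tk p := by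
      have h1 := hT p
      have h2 : Real.log Q ≤ 8 * Real.log p := by
        have := Real.log_le_log (by linarith) h8
        rw [Real.log_pow] at this; exact_mod_cast this
      have h3 : Real.log p ≤ Tk p/c := by rw [le_div_iff₀ hc0]; linarith
      calc Lg Q ≤ M * (8 * (Tk p/c)) := by
            refine hLM.trans ?_
            gcongr; linarith
        _ = _ := by ring
    have s2 : 1/(Real.log Q/6)^3 ≤ 6^3*M^3*(8*M/c)^3 * (Tk p^3/Lg Q^6) := by
      have h1 : 1/(Real.log Q/6)^3 ≤ 6^3*M^3/Lg Q^3 := by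
        rw [div_le_div_iff₀ (by positivity) (by positivity)]
        calc 1 * Lg Q^3 ≤ 1 * (M * Real.log Q)^3 := by gcongr
          _ = _ := by ring
      refine h1.trans ?_
      rw [← mul_div_assoc, div_le_div_iff₀ (by positivity) (by positivity)]
      calc 6^3*M^3*Lg Q^6 = 6^3*M^3*Lg Q^3 * Lg Q^3 := by ring
        _ ≤ 6^3*M^3*Lg Q^3 * ((8*M/c) * Tk p)^3 := by gcongr
        _ = _ := by ring
    calc _ ≤ 1500 * (Q/p)/(Real.log Q/6)^3 := s1
      _ = 1500 * (Q/p) * (1/(Real.log Q/6)^3) := by ring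
      _ ≤ 1500 * (Q/p) * (6^3*M^3*(8*M/c)^3 * (Tk p^3/Lg Q^6)) := by gcongr
      _ = 1500*6^3*M^3*(8*M/c)^3 * ((Q/p) * Tk p^3/Lg Q^6) := by ring
      _ ≤ _ := by
        gcongr
        have : 0 ≤ 12*C1/Tk 0^3 := by positivity
        linarith

theorem Hs_le : ∃ AH : ℝ, 0 < AH ∧ ∀ (Q : ℝ) (l : ℕ), 1 ≤ Q → (l:ℝ)^2 ≤ Q →
    Hs Q l ≤ AH * (Q * (Tk l^3/Lg Q^6)) := by
  obtain ⟨C1, hC1, hL1⟩ := Lg_pow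
  obtain ⟨C2, hC2, hg⟩ := good_src
  have hc0' := c0_ge
  have hT0 := Tk_pos 0
  set D := C1/Tk 0^3 with hD
  have hD0 : 0 < D := by positivity
  refine ⟨154 * (D + D) + C2, by positivity, fun Q l hQ hl => ?_⟩
  have hLpos : 0 < Lg Q := by linarith [Lg_ge hQ]
  have hTl := Tk_pos l
  have hTl0 : Tk 0 ≤ Tk l := Tk_mono (Nat.zero_le _)
  have hcl := clock_cube l
  have hq : Q^(-1/4:ℝ) ≤ C1/Lg Q^6 := by
    rw [le_div_iff₀ (by positivity)]
    calc Q^(-1/4:ℝ) * Lg Q^6 ≤ Q^(-1/4:ℝ) * (C1 * Q^(1/4:ℝ)) := by gcongr; exact hL1 Q hQ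
      _ = C1 * (Q^(-1/4:ℝ) * Q^(1/4:ℝ)) := by ring
      _ = C1 := by rw [← Real.rpow_add (by linarith)]; norm_num
  have a1 : Real.sqrt Q ≤ D * (Q * (Tk l^3/Lg Q^6)) := by
    calc Real.sqrt Q = Q^(1/2:ℝ) := Real.sqrt_eq_rpow Q
      _ ≤ Q^(3/4:ℝ) := Real.rpow_le_rpow_of_exponent_le hQ (by norm_num)
      _ = Q * Q^(-1/4:ℝ) := by
        nth_rw 2 [← Real.rpow_one Q]; rw [← Real.rpow_add (by linarith)]; norm_num
      _ ≤ Q * (C1/Lg Q^6) := by gcongr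
      _ = D * (Q * (Tk 0^3/Lg Q^6)) := by rw [hD]; field_simp
      _ ≤ _ := by gcongr
  have a2 : ∑ p ∈ Nat.primesBelow l, Real.sqrt (Q/p) ≤ D * (Q * (Tk l^3/Lg Q^6)) := by
    calc _ ≤ ∑ p ∈ Nat.primesBelow l, D * Q/Lg Q^6 * ((1/(p:ℝ)) * Tk p^3) := by
          apply Finset.sum_le_sum
          intro p hp
          have hp' := Nat.mem_primesBelow.1 hp
          have hp0 : (0:ℝ) < p := by exact_mod_cast hp'.2.pos
          have hTp0 : Tk 0 ≤ Tk p := Tk_mono (Nat.zero_le _)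
          have hpQ : (p:ℝ)^2 ≤ Q := le_trans (by gcongr; exact_mod_cast hp'.1.le) hl
          have h1 : Real.sqrt (Q/p) ≤ (Q/p) * Q^(-1/4:ℝ) := by
            rw [Real.sqrt_le_left (by positivity)]
            have h2 : (Q^(-1/4:ℝ))^2 = (Real.sqrt Q)⁻¹ := by
              rw [← Real.rpow_natCast, ← Real.rpow_mul (by linarith), Real.sqrt_eq_rpow, ← Real.rpow_neg (by linarith)]
              norm_num
            rw [mul_pow, h2]
            have h3 : (p:ℝ) ≤ Real.sqrt Q := Real.le_sqrt_of_sq_le hpQ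
            have h4 : Real.sqrt Q * Real.sqrt Q = Q := Real.mul_self_sqrt (by linarith)
            have h5 : 0 < Real.sqrt Q := by linarith
            calc Q/p = Q/p * 1 := by ring
              _ ≤ Q/p * (Real.sqrt Q/p) := by gcongr; rw [le_div_iff₀ hp0]; linarith
              _ = Q/p * ((Real.sqrt Q * Real.sqrt Q)/p * (Real.sqrt Q)⁻¹) := by field_simp
              _ = _ := by rw [h4]; ring
          calc _ ≤ (Q/p) * (C1/Lg Q^6) := h1.trans (by gcongr)
            _ = D * Q/Lg Q^6 * ((1/(p:ℝ)) * Tk 0^3) := by rw [hD]; field_simp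
            _ ≤ _ := by gcongr
      _ ≤ D * Q/Lg Q^6 * (Tk l^3/3) := by rw [← Finset.mul_sum]; gcongr
      _ ≤ D * Q/Lg Q^6 * Tk l^3 := by gcongr; linarith [pow_pos hTl 3]
      _ = _ := by ring
  have a3 : ∑ p ∈ Nat.primesBelow l, ∑ q ∈ good Q p, 12 * pib q ^ 2 ≤ C2 * (Q * (Tk l^3/Lg Q^6)) := by
    calc _ ≤ ∑ p ∈ Nat.primesBelow l, C2 * Q/Lg Q^6 * ((1/(p:ℝ)) * Tk p^3) := by
          apply Finset.sum_le_sum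
          intro p hp
          refine (hg Q l p hQ hl hp).trans (le_of_eq ?_)
          ring
      _ ≤ C2 * Q/Lg Q^6 * (Tk l^3/3) := by rw [← Finset.mul_sum]; gcongr
      _ ≤ C2 * Q/Lg Q^6 * Tk l^3 := by gcongr; linarith [pow_pos hTl 3]
      _ = _ := by ring
  rw [Hs]
  linarith

end Jac


namespace Jac
open Finset

noncomputable def Pr (w b : ℝ) : Finset ℕ := (Nat.primesBelow (⌊b⌋₊+1)).filter (fun p => w < (p:ℝ))

lemma mem_Pr {w b : ℝ} (hb : 0 ≤ b) {p : ℕ} : p ∈ Pr w b ↔ p.Prime ∧ w < p ∧ (p:ℝ) ≤ b := by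
  rw [Pr, mem_filter, Nat.mem_primesBelow, Nat.lt_succ_iff, Nat.le_floor_iff hb]; tauto

lemma Pr_sum_log {w b : ℝ} (hw : 1 ≤ w) (hwb : w ≤ b) :
    ∑ p ∈ Pr w b, Real.log p/p = Rs (⌊b⌋₊+1) - Rs (⌊w⌋₊+1) := by
  have h0 := Finset.sum_filter_add_sum_filter_not (Nat.primesBelow (⌊b⌋₊+1)) (fun p : ℕ => w < (p:ℝ)) (fun p => Real.log p/(p:ℝ))
  have h1 : (Nat.primesBelow (⌊b⌋₊+1)).filter (fun p : ℕ => ¬ w < (p:ℝ)) = Nat.primesBelow (⌊w⌋₊+1) := by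
    ext p
    rw [mem_filter, Nat.mem_primesBelow, Nat.mem_primesBelow, not_lt, Nat.lt_succ_iff, Nat.lt_succ_iff,
      Nat.le_floor_iff (by linarith), Nat.le_floor_iff (by linarith)]
    constructor
    · rintro ⟨⟨h1, h2⟩, h3⟩; exact ⟨h3, h2⟩
    · rintro ⟨h1, h2⟩; exact ⟨⟨h1.trans hwb, h2⟩, h1⟩
  rw [h1] at h0
  rw [Rs, Rs, Pr]; linarith

lemma recip : ∃ A : ℝ, 1 ≤ A ∧ ∀ w b : ℝ, 1 < w → w ≤ b →
    (Real.log b - Real.log w - A)/Real.log b ≤ ∑ p ∈ Pr w b, 1/(p:ℝ) ∧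
    ∑ p ∈ Pr w b, 1/(p:ℝ) ≤ (Real.log b - Real.log w + A)/Real.log w := by
  obtain ⟨A, hA, h⟩ := mertens
  refine ⟨2*A+1, by linarith, fun w b hw hwb => ?_⟩
  have hs := Pr_sum_log hw.le hwb
  have hlw : 0 < Real.log w := Real.log_pos hw
  have hlb : 0 < Real.log b := Real.log_pos (by linarith)
  have key : ∀ x : ℝ, 1 < x → Real.log x ≤ Real.log (⌊x⌋₊+1:ℕ) ∧ Real.log (⌊x⌋₊+1:ℕ) ≤ Real.log x + 1 := by
    intro x hx
    have h1 := Nat.lt_floor_add_one x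
    have h2 := Nat.floor_le (by linarith : 0 ≤ x)
    constructor
    · apply Real.log_le_log (by linarith); push_cast; linarith
    · have : ((⌊x⌋₊+1:ℕ):ℝ) ≤ Real.exp 1 * x := by
        have := Real.exp_one_gt_d9
        push_cast; nlinarith
      have := Real.log_le_log (by positivity) this
      rw [Real.log_mul (by positivity) (by positivity), Real.log_exp] at this
      linarith
  have kb := key b (by linarith)
  have kw := key w hw
  have hb := h (⌊b⌋₊+1) (by omega)
  have hww := h (⌊w⌋₊+1) (by omega)
  have hpp : ∀ p ∈ Pr w b, p.Prime ∧ w < p ∧ (p:ℝ) ≤ b := fun p hp => (mem_Pr (by linarith)).1 hp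
  constructor
  · rw [div_le_iff₀ hlb, Finset.sum_mul]
    calc _ ≤ ∑ p ∈ Pr w b, Real.log p/p := by rw [hs]; linarith [hww.2.1, hww.2.2, hb.1]
      _ ≤ _ := by
        apply Finset.sum_le_sum
        intro p hp
        obtain ⟨h1, h2, h3⟩ := hpp p hp
        have : (0:ℝ) < p := by linarith
        rw [div_mul_eq_mul_div, one_mul]
        gcongr
  · rw [le_div_iff₀ hlw, Finset.sum_mul]
    calc _ ≤ ∑ p ∈ Pr w b, Real.log p/p := by
          apply Finset.sum_le_sum
          intro p hp
          obtain ⟨h1, h2, h3⟩ := hpp p hp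
          have : (0:ℝ) < p := by linarith
          rw [div_mul_eq_mul_div, one_mul]
          gcongr
      _ ≤ _ := by rw [hs]; linarith [hb.2.1, hb.2.2, hww.1]

lemma Mlow : ∃ B0 : ℝ, 16 ≤ B0 ∧ ∀ (Y : ℝ) (z : ℕ), 2 ≤ z → B0 * (z:ℝ)^2 ≤ Y →
    1/40 * Real.log (Y/(z:ℝ)^2) * Y/(Real.log Y)^2 ≤ Mr 0 Y z := by
  obtain ⟨A, hA, hrec⟩ := recip
  obtain ⟨X0, hX0, hq⟩ := primes_quarter
  refine ⟨max (X0^2+16) (Real.exp (4*(A+2))), le_max_of_le_left (by nlinarith), fun Y z hz hY => ?_⟩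
  have hz2 : (2:ℝ) ≤ z := by exact_mod_cast hz
  set B := Y/(z:ℝ)^2 with hB
  have hYB : Y = B * (z:ℝ)^2 := by rw [hB]; field_simp
  have hB1 : max (X0^2+16) (Real.exp (4*(A+2))) ≤ B := by rw [hB, le_div_iff₀ (by positivity)]; exact hY
  have hBX : X0^2 + 16 ≤ B := (le_max_left _ _).trans hB1
  have hBe : Real.exp (4*(A+2)) ≤ B := (le_max_right _ _).trans hB1
  have hB0 : 0 < B := by nlinarith
  set s := Real.sqrt B with hs
  have hss : s * s = B := Real.mul_self_sqrt hB0.le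
  have hs4 : 4 ≤ s := by apply Real.le_sqrt_of_sq_le; nlinarith
  have hsX : X0 ≤ s := by apply Real.le_sqrt_of_sq_le; nlinarith
  have hlogs : Real.log s = Real.log B/2 := Real.log_sqrt hB0.le
  have hlogB : 4*(A+2) ≤ Real.log B := (Real.le_log_iff_exp_le hB0).2 hBe
  set b := z * s/4 with hb
  have hzb : (z:ℝ) ≤ b := by rw [hb]; nlinarith
  have hlogb : Real.log b = Real.log z + Real.log s - Real.log 4 := by
    rw [hb, Real.log_div (by positivity) (by norm_num), Real.log_mul (by positivity) (by positivity)]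
  have hlog4 : Real.log 4 ≤ 2 := by
    have : Real.log 4 = 2 * Real.log 2 := by
      rw [show (4:ℝ) = 2^2 by norm_num, Real.log_pow]; norm_num
    have := Real.log_two_lt_d9
    linarith
  have hY1 : b ≤ Y := by rw [hYB, hb, ← hss]; nlinarith [mul_pos (by linarith : (0:ℝ) < z) (by linarith : 0 < s)]
  have hYpos : 1 < Y := by linarith
  have hlY : 0 < Real.log Y := Real.log_pos hYpos
  have hlb : 0 < Real.log b := Real.log_pos (by linarith)
  have hlbY : Real.log b ≤ Real.log Y := Real.log_le_log (by linarith) hY1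
  have hsum : Real.log B/4/Real.log Y ≤ ∑ p ∈ Pr z b, 1/(p:ℝ) := by
    refine le_trans ?_ (hrec z b (by linarith) hzb).1
    rw [hlogb]
    rw [← hlogb]
    rw [div_le_div_iff₀ hlY hlb]
    have : Real.log B/4 ≤ Real.log b - Real.log z - A := by rw [hlogb]; linarith
    have h0 : 0 ≤ Real.log B/4 := by linarith
    exact mul_le_mul this hlbY hlb.le (by linarith)
  -- second primes
  have hx : ∀ p ∈ Pr z b, z * s ≤ Y/p/4 := by
    intro p hp
    obtain ⟨h1, h2, h3⟩ := (mem_Pr (by linarith)).1 hp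
    have hp0 : (0:ℝ) < p := by linarith
    rw [le_div_iff₀ (by norm_num), le_div_iff₀ hp0, hYB, ← hss]
    rw [hb] at h3
    nlinarith [mul_le_mul_of_nonneg_left h3 (by positivity : (0:ℝ) ≤ z * s)]
  set U : Finset ((_ : ℕ) × ℕ) := (Pr z b).sigma (fun p => Pr (Y/p/4) (Y/p)) with hU
  have hUcard : (Real.log B/4/Real.log Y) * (Y/(10*Real.log Y)) ≤ (U.card:ℝ) := by
    rw [hU, Finset.card_sigma]
    push_cast
    calc _ ≤ (∑ p ∈ Pr z b, 1/(p:ℝ)) * (Y/(10*Real.log Y)) := by gcongr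
      _ = ∑ p ∈ Pr z b, 1/(p:ℝ) * (Y/(10*Real.log Y)) := by rw [Finset.sum_mul]
      _ ≤ _ := by
        apply Finset.sum_le_sum
        intro p hp
        obtain ⟨h1, h2, h3⟩ := (mem_Pr (by linarith)).1 hp
        have hp0 : (0:ℝ) < p := by linarith
        have hp1 : (1:ℝ) ≤ p := by linarith
        have h4 := hx p hp
        have h5 : X0 ≤ Y/p := by nlinarith
        have h6 : 0 < Real.log (Y/p) := Real.log_pos (by linarith)
        refine le_trans ?_ (hq (Y/p) h5 (Pr (Y/p/4) (Y/p)) (fun q hq1 hq2 hq3 => (mem_Pr (by linarith)).2 ⟨hq1, hq2, hq3⟩))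
        have h7 : Real.log (Y/p) ≤ Real.log Y := Real.log_le_log (by linarith) (div_le_self (by linarith) hp1)
        calc 1/(p:ℝ) * (Y/(10*Real.log Y)) = Y/p/(10*Real.log Y) := by field_simp
          _ ≤ _ := by gcongr
  -- map
  have hprop : ∀ x ∈ U, x.1.Prime ∧ x.2.Prime ∧ z ≤ x.1 ∧ x.1 < x.2 ∧ (x.1*x.2 : ℝ) ≤ Y ∧ Y < 4 * (x.1 * x.2) := by
    rintro ⟨p, q⟩ hx1
    rw [hU, Finset.mem_sigma] at hx1
    simp only at hx1 ⊢
    obtain ⟨h1, h2, h3⟩ := (mem_Pr (by linarith)).1 hx1.1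
    have hp0 : (0:ℝ) < p := by linarith
    obtain ⟨g1, g2, g3⟩ := (mem_Pr (by positivity)).1 hx1.2
    have h4 := hx p hx1.1
    refine ⟨h1, g1, by exact_mod_cast h2.le, ?_, ?_, ?_⟩
    · have : (p:ℝ) < q := by rw [hb] at h3; nlinarith
      exact_mod_cast this
    · rw [le_div_iff₀ hp0] at g3; linarith
    · rw [div_lt_iff₀ (by norm_num), div_lt_iff₀ hp0] at g2; linarith
  have hinj : Set.InjOn (fun x : (_ : ℕ) × ℕ => x.1 * x.2) (U : Set ((_ : ℕ) × ℕ)) := by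
    rintro ⟨p, q⟩ hx1 ⟨p', q'⟩ hx2 he
    obtain ⟨a1, a2, a3, a4, _⟩ := hprop _ (by exact_mod_cast hx1)
    obtain ⟨b1, b2, b3, b4, _⟩ := hprop _ (by exact_mod_cast hx2)
    simp only at *
    have hd : p ∣ p' * q' := by rw [← he]; exact Dvd.intro _ rfl
    rcases (Nat.Prime.dvd_mul a1).1 hd with h | h
    · have := (Nat.prime_dvd_prime_iff_eq a1 b1).1 h
      subst this
      have := Nat.eq_of_mul_eq_mul_left a1.pos he
      subst this; rfl
    · have := (Nat.prime_dvd_prime_iff_eq a1 b2).1 h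
      subst this
      rw [mul_comm] at he
      have := Nat.eq_of_mul_eq_mul_right a1.pos he
      omega
  have hsub : U.image (fun x => x.1 * x.2) ⊆ Mset 0 ⌊Y⌋₊ z := by
    intro n hn
    rw [Finset.mem_image] at hn
    obtain ⟨x, hxU, rfl⟩ := hn
    obtain ⟨h1, h2, h3, h4, h5, h6⟩ := hprop x hxU
    simp only [Mset, mem_filter, mem_Icc]
    refine ⟨⟨Nat.mul_pos h1.pos h2.pos, Nat.le_floor (by push_cast; exact h5)⟩, ?_, ?_⟩
    · intro p hp hpd
      rcases (Nat.Prime.dvd_mul hp).1 hpd with h | h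
      · rw [(Nat.prime_dvd_prime_iff_eq hp h1).1 h]; exact h3
      · rw [(Nat.prime_dvd_prime_iff_eq hp h2).1 h]; omega
    · rw [ArithmeticFunction.cardFactors_mul h1.ne_zero h2.ne_zero, ArithmeticFunction.cardFactors_apply_prime h1,
        ArithmeticFunction.cardFactors_apply_prime h2]
  calc 1/40 * Real.log B * Y/(Real.log Y)^2 = (Real.log B/4/Real.log Y) * (Y/(10*Real.log Y)) := by ring
    _ ≤ (U.card:ℝ) := hUcard
    _ = ((U.image (fun x => x.1 * x.2)).card:ℝ) := by rw [Finset.card_image_of_injOn hinj]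
    _ = ∑ n ∈ U.image (fun x => x.1 * x.2), (1:ℝ) := by simp
    _ ≤ ∑ n ∈ U.image (fun x => x.1 * x.2), (((⌊Y⌋₊/n)%4:ℕ):ℝ) := by
      apply Finset.sum_le_sum
      intro n hn
      rw [Finset.mem_image] at hn
      obtain ⟨x, hxU, rfl⟩ := hn
      obtain ⟨h1, h2, h3, h4, h5, h6⟩ := hprop x hxU
      have hpos : 0 < x.1 * x.2 := Nat.mul_pos h1.pos h2.pos
      have g1 : 1 ≤ ⌊Y⌋₊/(x.1*x.2) := by
        rw [Nat.one_le_div_iff hpos]; exact Nat.le_floor (by push_cast; exact h5)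
      have g2 : ⌊Y⌋₊/(x.1*x.2) < 4 := by
        rw [Nat.div_lt_iff_lt_mul hpos]
        rw [Nat.floor_lt (by linarith)]
        push_cast; linarith
      have : 1 ≤ (⌊Y⌋₊/(x.1*x.2))%4 := by omega
      exact_mod_cast this
    _ ≤ Mr 0 Y z := by
      rw [Mr, M]
      exact Finset.sum_le_sum_of_subset_of_nonneg hsub (fun _ _ _ => by positivity)

end Jac


namespace Jac
open Finset

lemma Mup : ∃ A : ℝ, 1 ≤ A ∧ ∀ (X : ℝ) (z : ℕ), 3 ≤ z → 4 * (z:ℝ)^2 ≤ X → X < (z:ℝ)^3 →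
    Mr 0 X z ≤ A * Real.log (X/(z:ℝ)^2) * X/(Real.log z)^2 := by
  obtain ⟨A, hA, hrec⟩ := recip
  refine ⟨3 + 30*(A+2), by linarith, fun X z hz hX hX3 => ?_⟩
  have hz2 : (3:ℝ) ≤ z := by exact_mod_cast hz
  have hz0 : (0:ℝ) < z := by linarith
  set B := X/(z:ℝ)^2 with hB
  have hXB : X = B * (z:ℝ)^2 := by rw [hB]; field_simp
  have hB4 : 4 ≤ B := by rw [hB, le_div_iff₀ (by positivity)]; exact hX
  have hlB : 1 ≤ Real.log B := log4_gt.le.trans (Real.log_le_log (by norm_num) hB4)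
  have hlz : 1 ≤ Real.log z := by
    rw [Real.le_log_iff_exp_le hz0]
    have := Real.exp_one_lt_d9
    linarith
  set b := X/z with hb
  have hbz : b = B * z := by rw [hb, hXB]; field_simp
  set w : ℝ := (z:ℝ) - 1/2 with hw
  have hw1 : 1 < w := by rw [hw]; linarith
  have hwb : w ≤ b := by rw [hbz, hw]; nlinarith
  have hb0 : 0 ≤ b := by linarith
  -- log w ≥ log z - 1
  have hlw : Real.log z / 2 ≤ Real.log w := by
    have h1 : (z:ℝ) ≤ w^2 := by rw [hw]; nlinarith
    have := Real.log_le_log hz0 h1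
    rw [Real.log_pow] at this
    push_cast at this; linarith
  have hlw0 : 0 < Real.log w := by linarith
  have hlwz : Real.log z - 1 ≤ Real.log w := by
    have h1 : (z:ℝ) ≤ Real.exp 1 * w := by
      have := Real.exp_one_gt_d9
      rw [hw]; nlinarith
    have := Real.log_le_log hz0 h1
    rw [Real.log_mul (by positivity) (by positivity), Real.log_exp] at this
    linarith
  have hlb : Real.log b = Real.log B + Real.log z := by
    rw [hbz, Real.log_mul (by positivity) (by positivity)]
  have hsum : ∑ p ∈ Pr w b, 1/(p:ℝ) ≤ (A+2) * Real.log B/(Real.log z/2) := by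
    refine (hrec w b hw1 hwb).2.trans ?_
    have h0 : 0 ≤ (A+2) * Real.log B := by positivity
    have : Real.log b - Real.log w + A ≤ (A+2) * Real.log B := by nlinarith
    gcongr
  set U : Finset ((_ : ℕ) × ℕ) := (Pr w b).sigma (fun p => Pr w (X/p)) with hU
  have hUcard : (U.card:ℝ) ≤ 10*(A+2) * Real.log B * X/(Real.log z)^2 := by
    rw [hU, Finset.card_sigma]
    push_cast
    calc _ ≤ ∑ p ∈ Pr w b, 1/(p:ℝ) * (5*X/Real.log z) := by
          apply Finset.sum_le_sum
          intro p hp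
          obtain ⟨h1, h2, h3⟩ := (mem_Pr hb0).1 hp
          have hp0 : (0:ℝ) < p := by linarith
          have hXp : (z:ℝ) ≤ X/p := by
            rw [le_div_iff₀ hp0]
            rw [hb, le_div_iff₀ hz0] at h3; linarith
          have hc : ((Pr w (X/p)).card:ℝ) ≤ 5 * (X/p)/Real.log (X/p) := by
            refine le_trans ?_ (pi_le (by linarith))
            rw [Nat.primeCounting, ← Nat.primesBelow_card_eq_primeCounting']
            norm_cast
            exact Finset.card_le_card (Finset.filter_subset _ _)
          refine hc.trans ?_
          have hl : Real.log z ≤ Real.log (X/p) := Real.log_le_log hz0 hXp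
          have hX0 : 0 < X := by rw [hXB]; positivity
          calc 5 * (X/p)/Real.log (X/p) ≤ 5 * (X/p)/Real.log z := by gcongr
            _ = _ := by field_simp
      _ = (∑ p ∈ Pr w b, 1/(p:ℝ)) * (5*X/Real.log z) := by rw [Finset.sum_mul]
      _ ≤ ((A+2) * Real.log B/(Real.log z/2)) * (5*X/Real.log z) := by
          have hX0 : 0 < X := by rw [hXB]; positivity
          gcongr
      _ = _ := by field_simp; ring
  have hsub : Mset 0 ⌊X⌋₊ z ⊆ insert 1 (U.image (fun x => x.1 * x.2)) := by
    intro n hn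
    simp only [Mset, mem_filter, mem_Icc] at hn
    obtain ⟨⟨h1, h2⟩, h3, h4⟩ := hn
    have hnX : (n:ℝ) ≤ X := (Nat.le_floor_iff' (by omega)).1 h2
    rw [mem_insert]
    by_cases hne : n = 1
    · exact Or.inl hne
    right
    obtain ⟨p, hp, m, rfl⟩ := Nat.exists_prime_and_dvd hne
    have hm0 : m ≠ 0 := by rintro rfl; simp at h1
    rw [ArithmeticFunction.cardFactors_mul hp.ne_zero hm0, ArithmeticFunction.cardFactors_apply_prime hp] at h4
    have hm1 : m ≠ 1 := by rintro rfl; simp at h4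
    obtain ⟨p', hp', m', rfl⟩ := Nat.exists_prime_and_dvd hm1
    have hm0' : m' ≠ 0 := by rintro rfl; simp at hm0
    have a1 := h3 p hp (Dvd.intro _ rfl)
    have a2 := h3 p' hp' ((Dvd.intro _ rfl : p' ∣ p' * m').mul_left p)
    have hm1' : m' = 1 := by
      by_contra hne'
      obtain ⟨p'', hp'', hd⟩ := Nat.exists_prime_and_dvd hne'
      have a3 := h3 p'' hp'' ((hd.mul_left p').mul_left p)
      have a4 := Nat.le_of_dvd (Nat.pos_of_ne_zero hm0') hd
      have : z * (z * z) ≤ p * (p' * m') := Nat.mul_le_mul a1 (Nat.mul_le_mul a2 (a3.trans a4))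
      have : ((z * (z*z) : ℕ):ℝ) ≤ ((p * (p' * m') : ℕ):ℝ) := by exact_mod_cast this
      push_cast at this hnX
      nlinarith
    subst hm1'
    rw [mul_one] at *
    rw [Finset.mem_image]
    refine ⟨⟨p, p'⟩, ?_, rfl⟩
    have e1 : (z:ℝ) ≤ p := by exact_mod_cast a1
    have e2 : (z:ℝ) ≤ p' := by exact_mod_cast a2
    have hp0 : (0:ℝ) < p := by linarith
    push_cast at hnX
    rw [hU, Finset.mem_sigma]
    refine ⟨(mem_Pr hb0).2 ⟨hp, by rw [hw]; linarith, ?_⟩, (mem_Pr ?_).2 ⟨hp', by rw [hw]; linarith, ?_⟩⟩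
    · rw [hb, le_div_iff₀ hz0]; nlinarith
    · have hX0 : 0 < X := by rw [hXB]; positivity
      positivity
    · rw [le_div_iff₀ hp0]; linarith
  have hX0 : 0 < X := by rw [hXB]; positivity
  have hcard : ((Mset 0 ⌊X⌋₊ z).card:ℝ) ≤ (U.card:ℝ) + 1 := by
    have h1 := Finset.card_le_card hsub
    have h2 := Finset.card_insert_le 1 (U.image (fun x => x.1 * x.2))
    have h3 : (U.image (fun x => x.1 * x.2)).card ≤ U.card := Finset.card_image_le
    exact_mod_cast h1.trans (h2.trans (by omega))
  have hone : 1 ≤ Real.log B * X/(Real.log z)^2 := by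
    rw [le_div_iff₀ (by positivity)]
    have h1 : Real.log z ≤ z := (Real.log_le_sub_one_of_pos hz0).trans (by linarith)
    have h2 : (Real.log z)^2 ≤ (z:ℝ)^2 := by gcongr
    nlinarith
  calc Mr 0 X z ≤ ∑ n ∈ Mset 0 ⌊X⌋₊ z, (3:ℝ) := by
        rw [Mr, M]
        apply Finset.sum_le_sum
        intro n _
        have : (⌊X⌋₊ / n) % 4 ≤ 3 := by omega
        exact_mod_cast this
    _ = 3 * ((Mset 0 ⌊X⌋₊ z).card:ℝ) := by simp [mul_comm]
    _ ≤ 3 * (10*(A+2) * Real.log B * X/(Real.log z)^2 + 1) := by linarith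
    _ ≤ 3 * (10*(A+2) * Real.log B * X/(Real.log z)^2 + Real.log B * X/(Real.log z)^2) := by linarith
    _ = (3 + 30*(A+2)) * Real.log B * X/(Real.log z)^2 := by ring

end Jac


namespace Jac
open Finset

set_option maxHeartbeats 1000000 in
lemma badK_low : ∃ K0 : ℝ, 2 ≤ K0 ∧ ∀ K : ℝ, K0 ≤ K → ∀ (Q : ℝ) (l : ℕ), 1 ≤ Q → (l:ℝ)^2 ≤ Q →
    0.255 * Lg Q < Tk l → 2000 * Real.log K ≤ Lg Q →
    1/1000000 * K * (Real.log K)^2 * Q/(Lg Q)^3 ≤ badK K Q l := by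
  obtain ⟨A, hA, hrec⟩ := recip
  obtain ⟨B0, hB0, hM⟩ := Mlow
  have hc0 := c0_ge
  refine ⟨Real.exp (c0 + 12*A + 2*B0), ?_, fun K hK Q l hQ hl hT hLK => ?_⟩
  · have := Real.add_one_le_exp (c0 + 12*A+2*B0)
    linarith
  have hK0 : 0 < K := lt_of_lt_of_le (Real.exp_pos _) hK
  have hlK : c0 + 12*A + 2*B0 ≤ Real.log K := (Real.le_log_iff_exp_le hK0).2 hK
  have hQ0 : 0 < Q := by linarith
  set Λ := Real.log Q with hΛ
  set k := Real.log K with hk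
  have hL : Lg Q = Λ + c0 := rfl
  have hΛk : 1999 * k ≤ Λ := by linarith
  have hΛ0 : 1 ≤ Λ := by linarith
  have hLpos : 0 < Lg Q := by linarith
  have hQe : Q = Real.exp Λ := (Real.exp_log hQ0).symm
  have hKe : K = Real.exp k := (Real.exp_log hK0).symm
  set w1 := Real.exp (0.2505*Λ) with hw1
  set b1 := Real.exp (0.2545*Λ) with hb1
  have hb10 : 0 ≤ b1 := (Real.exp_pos _).le
  have hlpos : 0 < l := by
    rcases Nat.eq_zero_or_pos l with rfl | h
    · have := Tk_le 0
      simp at this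
      have := AT_ge
      have : c0 = 20000 * (AT+3) := rfl
      linarith
    · exact h
  have hbl : b1 < l := by
    rw [hb1, ← Real.lt_log_iff_exp_lt (by exact_mod_cast hlpos)]
    have := Tk_le l
    have := AT_ge
    have : c0 = 20000 * (AT+3) := rfl
    linarith
  have hw1b1 := hrec w1 b1 (by rw [hw1]; exact Real.one_lt_exp_iff.2 (by linarith)) (by rw [hw1, hb1]; gcongr; norm_num)
  have hsum1 : 0.007 ≤ ∑ p ∈ Pr w1 b1, 1/(p:ℝ) := by
    refine le_trans ?_ hw1b1.1
    rw [hw1, hb1, Real.log_exp, Real.log_exp, le_div_iff₀ (by linarith)]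
    linarith
  have hsubP : Pr w1 b1 ⊆ Nat.primesBelow l := by
    intro p hp
    obtain ⟨h1, h2, h3⟩ := (mem_Pr hb10).1 hp
    rw [Nat.mem_primesBelow]
    exact ⟨by exact_mod_cast h3.trans_lt hbl, h1⟩
  have hinner : ∀ p ∈ Pr w1 b1, (1/(p:ℝ)) * (K * k^2 * Q/(3840 * Lg Q^3)) ≤ ∑ q ∈ badq Q p, Mr 0 (K*Q/p/q) q := by
    intro p hp
    obtain ⟨hpp, h2, h3⟩ := (mem_Pr hb10).1 hp
    have hp0 : (0:ℝ) < p := by exact_mod_cast hpp.pos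
    have hlp1 : 0.2505*Λ < Real.log p := (Real.lt_log_iff_exp_lt hp0).2 h2
    have hlp2 : Real.log p ≤ 0.2545*Λ := (Real.log_le_iff_le_exp hp0).2 h3
    set x := (Λ - Real.log p)/3 with hx
    set w2 := Real.exp x with hw2
    set b2 := Real.exp (x + k/6) with hb2
    have hb20 : 0 ≤ b2 := (Real.exp_pos _).le
    have hpe : (p:ℝ) = Real.exp (Real.log p) := (Real.exp_log hp0).symm
    have hw3 : (p:ℝ) * w2^3 = Q := by
      rw [hw2, ← Real.exp_nat_mul, hpe, ← Real.exp_add, hQe, hx]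
      congr 1
      push_cast; ring
    have hb3 : (p:ℝ) * b2^3 = Q * Real.exp (k/2) := by
      rw [hb2, ← Real.exp_nat_mul, hpe, ← Real.exp_add, hQe, hx, ← Real.exp_add]
      congr 1
      push_cast; ring
    have hr := (hrec w2 b2 (by rw [hw2]; exact Real.one_lt_exp_iff.2 (by linarith)) (by rw [hw2, hb2]; gcongr; linarith)).1
    have hsum2 : k/12/Lg Q ≤ ∑ q ∈ Pr w2 b2, 1/(q:ℝ) := by
      refine le_trans ?_ hr
      rw [hw2, hb2, Real.log_exp, Real.log_exp]
      rw [div_le_div_iff₀ hLpos (by linarith)]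
      apply mul_le_mul <;> linarith
    have hsubQ : Pr w2 b2 ⊆ badq Q p := by
      intro q hq
      obtain ⟨g1, g2, g3⟩ := (mem_Pr hb20).1 hq
      rw [badq, mem_filter, Nat.mem_primesBelow]
      refine ⟨⟨?_, g1⟩, ?_⟩
      · have : (q:ℝ) < p := by
          refine g3.trans_lt ?_
          rw [hb2, hpe, Real.exp_lt_exp]
          linarith
        exact_mod_cast this
      · rw [not_le]
        calc Q = (p:ℝ) * w2^3 := hw3.symm
          _ < p * (q:ℝ)^3 := by
            have : 0 < w2 := Real.exp_pos _
            gcongr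
    have hterm : ∀ q ∈ Pr w2 b2, (1/(q:ℝ)) * (K * k * Q/(320 * p * Lg Q^2)) ≤ Mr 0 (K*Q/p/q) q := by
      intro q hq
      obtain ⟨g1, g2, g3⟩ := (mem_Pr hb20).1 hq
      have hq0 : (0:ℝ) < q := by exact_mod_cast g1.pos
      have hq1 : (1:ℝ) ≤ q := by exact_mod_cast g1.pos
      have hp1 : (1:ℝ) ≤ p := by exact_mod_cast hpp.pos
      set Y := K*Q/p/q with hY
      have hY0 : 0 < Y := by positivity
      have hq3 : (p:ℝ) * (q:ℝ)^3 ≤ Q * Real.exp (k/2) := by rw [← hb3]; gcongr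
      have hKs : K = Real.exp (k/2) * Real.exp (k/2) := by rw [← Real.exp_add, hKe]; congr 1; ring
      have hBq : Real.exp (k/2) ≤ Y/(q:ℝ)^2 := by
        rw [hY, le_div_iff₀ (by positivity), le_div_iff₀ hq0, le_div_iff₀ hp0, hKs]
        have := Real.exp_pos (k/2)
        have h9 := mul_le_mul_of_nonneg_left hq3 this.le
        linarith [h9]
      have hB0e : B0 ≤ Real.exp (k/2) := by
        have := Real.add_one_le_exp (k/2)
        linarith
      have hml := hM Y q g1.two_le (by
        have := hB0e.trans hBq
        rwa [le_div_iff₀ (by positivity)] at this)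
      refine le_trans ?_ hml
      have hlB : k/2 ≤ Real.log (Y/(q:ℝ)^2) := (Real.le_log_iff_exp_le (by positivity)).2 hBq
      have hYKQ : Y ≤ K*Q := by
        rw [hY, div_div]; exact div_le_self (by positivity) (one_le_mul_of_one_le_of_one_le hp1 hq1)
      have hlY : Real.log Y ≤ 2 * Lg Q := by
        have := Real.log_le_log hY0 hYKQ
        rw [Real.log_mul hK0.ne' hQ0.ne'] at this
        linarith
      have hlY0 : 0 < Real.log Y := by
        apply Real.log_pos
        have h5 := hB0e.trans hBq
        rw [le_div_iff₀ (by positivity)] at h5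
        have h6 : (1:ℝ) ≤ (q:ℝ)^2 := one_le_pow₀ hq1
        have h7 : B0 * 1 ≤ B0 * (q:ℝ)^2 := by gcongr
        linarith
      calc (1/(q:ℝ)) * (K * k * Q/(320 * p * Lg Q^2)) = 1/40 * (k/2) * Y/(2*Lg Q)^2 := by
            rw [hY]; field_simp; ring
        _ ≤ _ := by
            have hk0 : 0 ≤ k := by linarith
            have hk9 : 0 ≤ Real.log (Y / (q:ℝ)^2) := by linarith
            have hk8 : 0 ≤ 1 / 40 * Real.log (Y / (q:ℝ)^2) * Y := by positivity
            gcongr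
    calc (1/(p:ℝ)) * (K * k^2 * Q/(3840 * Lg Q^3)) = (k/12/Lg Q) * (K * k * Q/(320 * p * Lg Q^2)) := by
          field_simp; ring
      _ ≤ (∑ q ∈ Pr w2 b2, 1/(q:ℝ)) * (K * k * Q/(320 * p * Lg Q^2)) := by
          have : 0 ≤ k := by linarith
          gcongr
      _ = ∑ q ∈ Pr w2 b2, 1/(q:ℝ) * (K * k * Q/(320 * p * Lg Q^2)) := by rw [Finset.sum_mul]
      _ ≤ ∑ q ∈ Pr w2 b2, Mr 0 (K*Q/p/q) q := Finset.sum_le_sum hterm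
      _ ≤ _ := Finset.sum_le_sum_of_subset_of_nonneg hsubQ (fun _ _ _ => Mr_nonneg _ _ _)
  rw [badK]
  calc 1/1000000 * K * k^2 * Q/(Lg Q)^3 = (1/1000000*3840) * (K * k^2 * Q/(3840 * Lg Q^3)) := by field_simp
    _ ≤ 0.007 * (K * k^2 * Q/(3840 * Lg Q^3)) := by
        gcongr
        norm_num
    _ ≤ (∑ p ∈ Pr w1 b1, 1/(p:ℝ)) * (K * k^2 * Q/(3840 * Lg Q^3)) := by gcongr
    _ = ∑ p ∈ Pr w1 b1, 1/(p:ℝ) * (K * k^2 * Q/(3840 * Lg Q^3)) := by rw [Finset.sum_mul]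
    _ ≤ ∑ p ∈ Pr w1 b1, ∑ q ∈ badq Q p, Mr 0 (K*Q/p/q) q := Finset.sum_le_sum hinner
    _ ≤ _ := Finset.sum_le_sum_of_subset_of_nonneg hsubP
      (fun _ _ _ => Finset.sum_nonneg (fun _ _ => Mr_nonneg _ _ _))

end Jac


namespace Jac
open Finset

lemma badK_nonneg (K Q : ℝ) (l : ℕ) : 0 ≤ badK K Q l :=
  Finset.sum_nonneg (fun _ _ => Finset.sum_nonneg (fun _ _ => Mr_nonneg _ _ _))

lemma child_L {Q : ℝ} {l : ℕ} (hQ : 1 ≤ Q) (hl : (l:ℝ)^2 ≤ Q) {p q : ℕ}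
    (hp : p ∈ Nat.primesBelow l) (hq : q ∈ good Q p) : Lg Q / 3 ≤ Lg (Q/p/q) := by
  rw [Nat.mem_primesBelow] at hp
  have h1 := good_log hp.2 hq
  rw [good, mem_filter, Nat.mem_primesBelow] at hq
  have hp0 : (0:ℝ) < p := by exact_mod_cast hp.2.pos
  have hq0 : (0:ℝ) < q := by exact_mod_cast hq.1.2.pos
  have hQ0 : 0 < Q := by linarith
  have h2 := logs_half hQ hl hp.1.le
  have hc := c0_ge
  rw [Lg_div (by positivity) hq0, Lg_div hQ0 hp0]
  rw [Real.log_div hQ0.ne' hp0.ne'] at h1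
  unfold Lg
  linarith

lemma pot0 : ∃ A : ℝ, 0 < A ∧ ∀ (Q : ℝ) (l : ℕ), 1 ≤ Q → (l:ℝ)^2 ≤ Q →
    Hs Q l + ∑ p ∈ Nat.primesBelow l, ∑ q ∈ good Q p, A * ((Q/p/q) * (Tk q^3 / Lg (Q/p/q)^4))
      ≤ A * (Q * (Tk l^3 / Lg Q^4)) := by
  obtain ⟨AH, hAH, hH⟩ := Hs_le
  refine ⟨25*AH, by positivity, fun Q l hQ hl => ?_⟩
  have h1 := hH Q l hQ hl
  have h2 := C4 Q l hQ hl
  simp_rw [← Finset.mul_sum]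
  have hc := c0_ge
  have hL := Lg_ge hQ
  have hT := Tk_pos l
  have h3 : Q * (Tk l^3 / Lg Q^6) ≤ Q * (Tk l^3 / Lg Q^4) := by
    have : Lg Q ^ 4 ≤ Lg Q ^ 6 := pow_le_pow_right₀ (by linarith) (by norm_num)
    have : 0 < Lg Q ^ 4 := by apply pow_pos; linarith
    gcongr
  generalize (∑ p ∈ Nat.primesBelow l, ∑ q ∈ good Q p, (Q/p/q) * (Tk q^3 / Lg (Q/p/q)^4)) = s at *
  generalize Q * (Tk l^3 / Lg Q^6) = x at *
  generalize Q * (Tk l^3 / Lg Q^4) = y at *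
  nlinarith

lemma three_rpow : (3:ℝ)^(1/100:ℝ) ≤ 1.012 := by
  have h : (3:ℝ) ≤ (1.012:ℝ)^(100:ℝ) := by
    rw [show (100:ℝ) = ((100:ℕ):ℝ) by norm_num, Real.rpow_natCast]; norm_num
  calc (3:ℝ)^(1/100:ℝ) ≤ ((1.012:ℝ)^(100:ℝ))^(1/100:ℝ) := Real.rpow_le_rpow (by norm_num) h (by norm_num)
    _ = 1.012 := by rw [← Real.rpow_mul (by norm_num)]; norm_num

noncomputable def phi (L1 L : ℝ) : ℝ := if L ≤ 3*L1 then 1/(L^(1/100:ℝ) * L^4) else (3*L1)^(199/100:ℝ)/L^6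

lemma phi_le1 {L1 L : ℝ} (hL : 1 ≤ L) (hL1 : 0 < L1) : phi L1 L ≤ 1/(L^(1/100:ℝ) * L^4) := by
  unfold phi
  split_ifs with h
  · exact le_rfl
  · push Not at h
    have h1 : (3*L1)^(199/100:ℝ) ≤ L^(199/100:ℝ) := by
      apply Real.rpow_le_rpow (by positivity) h.le (by norm_num)
    have h2 : L^(199/100:ℝ) * L^(1/100:ℝ) = L^2 := by
      rw [← Real.rpow_add (by linarith), ← Real.rpow_natCast]; norm_num
    have h3 : 0 < L^(1/100:ℝ) := Real.rpow_pos_of_pos (by linarith) _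
    rw [div_le_div_iff₀ (by positivity) (by positivity)]
    calc _ ≤ L^(199/100:ℝ) * (L^(1/100:ℝ) * L^4) := by gcongr
      _ = 1 * L^6 := by rw [← mul_assoc, h2]; ring

lemma phi_le2 {L1 L : ℝ} (hL : 1 ≤ L) : phi L1 L ≤ (3*L1)^(199/100:ℝ)/L^6 := by
  unfold phi
  split_ifs with h
  · have h1 : L^(199/100:ℝ) ≤ (3*L1)^(199/100:ℝ) := by
      apply Real.rpow_le_rpow (by positivity) h (by norm_num)
    have h2 : L^(199/100:ℝ) * L^(1/100:ℝ) = L^2 := by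
      rw [← Real.rpow_add (by linarith), ← Real.rpow_natCast]; norm_num
    have h3 : 0 < L^(1/100:ℝ) := Real.rpow_pos_of_pos (by linarith) _
    rw [div_le_div_iff₀ (by positivity) (by positivity)]
    calc 1 * L^6 = L^(199/100:ℝ) * (L^(1/100:ℝ) * L^4) := by rw [← mul_assoc, h2]; ring
      _ ≤ _ := by gcongr
  · exact le_rfl

lemma phi_pos {L1 L : ℝ} (hL : 1 ≤ L) (hL1 : 0 < L1) : 0 < phi L1 L := by
  unfold phi; split_ifs <;> positivity

noncomputable def psi (A L1 Q : ℝ) (l : ℕ) : ℝ :=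
  if 0.255 * Lg Q < Tk l ∧ L1 ≤ Lg Q then 0 else A * (Q * (Tk l^3 * phi L1 (Lg Q)))

lemma psi_le {A L1 Q : ℝ} {l : ℕ} (hA : 0 ≤ A) (hQ : 0 ≤ Q) (hL : 1 ≤ Lg Q) (hL1 : 0 < L1) :
    psi A L1 Q l ≤ A * (Q * (Tk l^3 * phi L1 (Lg Q))) := by
  unfold psi
  have := phi_pos hL hL1
  have := Tk_pos l
  split_ifs
  · positivity
  · exact le_rfl

lemma psi_case1 {AH A L1 : ℝ} (hAH : 0 < AH) (hH : ∀ Q l, 1 ≤ Q → ((l:ℕ):ℝ)^2 ≤ Q → Hs Q l ≤ AH*(Q*(Tk l^3/Lg Q^6)))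
    (hA : A = 40*AH) (hL1 : 0 < L1) {Q : ℝ} {l : ℕ} (hQ : 1 ≤ Q) (hl : (l:ℝ)^2 ≤ Q)
    (hL : Lg Q ≤ 3*L1) :
    Hs Q l + ∑ p ∈ Nat.primesBelow l, ∑ q ∈ good Q p, psi A L1 (Q/p/q) q ≤ A * (Q * (Tk l^3 * phi L1 (Lg Q))) := by
  have h1 := hH Q l hQ hl
  have h2 := C4 Q l hQ hl
  have hAT := AT_ge
  have hc0 : c0 = 20000 * (AT+3) := rfl
  have hLc := Lg_ge hQ
  have hT := Tk_pos l
  have hQ0 : 0 < Q := by linarith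
  set L := Lg Q with hLdef
  set g := L^(1/100:ℝ) with hg
  have hL1' : 1 ≤ L := by linarith
  have hg0 : 0 < g := Real.rpow_pos_of_pos (by linarith) _
  have hgL : g ≤ L^2 := by
    rw [hg, ← Real.rpow_natCast]; exact Real.rpow_le_rpow_of_exponent_le hL1' (by norm_num)
  have hA0 : 0 < A := by rw [hA]; positivity
  have hch : ∑ p ∈ Nat.primesBelow l, ∑ q ∈ good Q p, psi A L1 (Q/p/q) q ≤
      ∑ p ∈ Nat.primesBelow l, ∑ q ∈ good Q p, (A*1.012/g) * ((Q/p/q) * (Tk q^3 / Lg (Q/p/q)^4)) := by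
    refine Finset.sum_le_sum fun p hp => Finset.sum_le_sum fun q hq => ?_
    have hLL := child_L hQ hl hp hq
    rw [← hLdef] at hLL
    set L' := Lg (Q/p/q) with hL'
    have hL'1 : 1 ≤ L' := by linarith
    have hTq := Tk_pos q
    have hx : 0 ≤ Q/p/q := by positivity
    have hgg : g ≤ 1.012 * L'^(1/100:ℝ) := by
      calc g ≤ (3*L')^(1/100:ℝ) := Real.rpow_le_rpow (by linarith) (by linarith) (by norm_num)
        _ = 3^(1/100:ℝ) * L'^(1/100:ℝ) := Real.mul_rpow (by norm_num) (by linarith)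
        _ ≤ _ := by
          have := three_rpow
          gcongr
    have hg'0 : 0 < L'^(1/100:ℝ) := Real.rpow_pos_of_pos (by linarith) _
    have hph : phi L1 L' ≤ 1.012/g * (1/L'^4) := by
      refine (phi_le1 hL'1 hL1).trans ?_
      rw [← mul_div_assoc, mul_one, div_div, div_le_div_iff₀ (by positivity) (by positivity)]
      calc 1 * (g * L'^4) = g * L'^4 := by ring
        _ ≤ (1.012 * L'^(1/100:ℝ)) * L'^4 := by gcongr
        _ = _ := by ring
    calc psi A L1 (Q/p/q) q ≤ A * ((Q/p/q) * (Tk q^3 * phi L1 L')) := psi_le hA0.le hx hL'1 hL1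
      _ ≤ A * ((Q/p/q) * (Tk q^3 * (1.012/g * (1/L'^4)))) := by gcongr
      _ = _ := by ring
  simp_rw [← Finset.mul_sum] at hch
  have hph : phi L1 L = 1/(g * L^4) := by rw [phi, if_pos hL]
  rw [hph]
  have hz : 0 ≤ Q * (Tk l^3 * (1/(g*L^4))) := by positivity
  have k1 : AH*(Q*(Tk l^3/L^6)) ≤ AH * (Q * (Tk l^3 * (1/(g*L^4)))) := by
    have : 1/L^6 ≤ 1/(g*L^4) := by
      apply one_div_le_one_div_of_le (by positivity)
      calc g*L^4 ≤ L^2*L^4 := by gcongr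
        _ = L^6 := by ring
    calc AH*(Q*(Tk l^3/L^6)) = AH*(Q*(Tk l^3*(1/L^6))) := by ring
      _ ≤ _ := by gcongr
  have k2 : (A*1.012/g) * (∑ p ∈ Nat.primesBelow l, ∑ q ∈ good Q p, (Q/p/q) * (Tk q^3 / Lg (Q/p/q)^4)) ≤
     (A * 1.012 * 0.96) * (Q * (Tk l^3 * (1/(g*L^4)))) := by
    calc _ ≤ (A*1.012/g) * (0.96 * (Q * (Tk l^3 / L^4))) := by gcongr
      _ = _ := by field_simp
  generalize Q * (Tk l^3 * (1/(g*L^4))) = z at *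
  have : AH = A/40 := by rw [hA]; ring
  rw [this] at k1
  have : 0 ≤ A * z := by positivity
  nlinarith

lemma psi_case2 {AH A L1 : ℝ} (hAH : 0 < AH) (hH : ∀ Q l, 1 ≤ Q → ((l:ℕ):ℝ)^2 ≤ Q → Hs Q l ≤ AH*(Q*(Tk l^3/Lg Q^6)))
    (hA : A = 40*AH) (hL1 : 1 ≤ L1) {Q : ℝ} {l : ℕ} (hQ : 1 ≤ Q) (hl : (l:ℝ)^2 ≤ Q)
    (hL : 3*L1 < Lg Q) (hTl : Tk l ≤ 0.255 * Lg Q) :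
    Hs Q l + ∑ p ∈ Nat.primesBelow l, ∑ q ∈ good Q p, psi A L1 (Q/p/q) q ≤ A * (Q * (Tk l^3 * phi L1 (Lg Q))) := by
  have h1 := hH Q l hQ hl
  have h2 := C6 Q l hQ hl hTl
  have hAT := AT_ge
  have hc0 : c0 = 20000 * (AT+3) := rfl
  have hLc := Lg_ge hQ
  have hT := Tk_pos l
  have hQ0 : 0 < Q := by linarith
  set L := Lg Q with hLdef
  set B := (3*L1)^(199/100:ℝ) with hB
  have hB1 : 1 ≤ B := Real.one_le_rpow (by linarith) (by norm_num)
  have hA0 : 0 < A := by rw [hA]; positivity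
  have hch : ∑ p ∈ Nat.primesBelow l, ∑ q ∈ good Q p, psi A L1 (Q/p/q) q ≤
      ∑ p ∈ Nat.primesBelow l, ∑ q ∈ (good Q p).filter (fun q => Tk q ≤ 0.255 * Lg (Q/p/q)),
        (A*B) * ((Q/p/q) * (Tk q^3 / Lg (Q/p/q)^6)) := by
    refine Finset.sum_le_sum fun p hp => ?_
    rw [Finset.sum_filter]
    refine Finset.sum_le_sum fun q hq => ?_
    have hLL := child_L hQ hl hp hq
    rw [← hLdef] at hLL
    set L' := Lg (Q/p/q) with hL'
    have hL'1 : 1 ≤ L' := by linarith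
    have hTq := Tk_pos q
    have hx : 0 ≤ Q/p/q := by positivity
    split_ifs with h
    · calc psi A L1 (Q/p/q) q ≤ A * ((Q/p/q) * (Tk q^3 * phi L1 L')) := psi_le hA0.le hx hL'1 (by linarith)
        _ ≤ A * ((Q/p/q) * (Tk q^3 * (B/L'^6))) := by
          have := phi_le2 (L1 := L1) hL'1
          gcongr
        _ = _ := by ring
    · rw [psi, if_pos ⟨not_le.1 h, by linarith⟩]
  simp_rw [← Finset.mul_sum] at hch
  have hph : phi L1 L = B/L^6 := by rw [phi, if_neg (by linarith)]
  rw [hph]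
  have e : A * (Q * (Tk l^3 * (B/L^6))) = A * B * (Q * (Tk l^3/L^6)) := by ring
  rw [e]
  have hz : 0 ≤ Q * (Tk l^3/L^6) := by positivity
  generalize Q * (Tk l^3/L^6) = z at *
  have k2 := mul_le_mul_of_nonneg_left h2 (show 0 ≤ A*B by positivity)
  have : AH ≤ A*B/40 := by rw [hA]; nlinarith
  have := mul_le_mul_of_nonneg_right this hz
  have : 0 ≤ A * B * z := by positivity
  linarith

lemma psi_case3 {AH A L1 : ℝ} (hAH : 0 < AH) (hH : ∀ Q l, 1 ≤ Q → ((l:ℕ):ℝ)^2 ≤ Q → Hs Q l ≤ AH*(Q*(Tk l^3/Lg Q^6)))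
    (hA : 0 < A) (hL1 : 1 ≤ L1) {Q : ℝ} {l : ℕ} (hQ : 1 ≤ Q) (hl : (l:ℝ)^2 ≤ Q) :
    Hs Q l + ∑ p ∈ Nat.primesBelow l, ∑ q ∈ good Q p, psi A L1 (Q/p/q) q ≤
      (AH + 9 * A * (3*L1)^(199/100:ℝ)) * (Q / Lg Q^3) := by
  have h1 := hH Q l hQ hl
  have h2 := C4 Q l hQ hl
  have hAT := AT_ge
  have hc0 : c0 = 20000 * (AT+3) := rfl
  have hLc := Lg_ge hQ
  have hT := Tk_pos l
  have hT2 := Tk_half hQ hl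
  have hQ0 : 0 < Q := by linarith
  set L := Lg Q with hLdef
  set B := (3*L1)^(199/100:ℝ) with hB
  have hB1 : 1 ≤ B := Real.one_le_rpow (by linarith) (by norm_num)
  have hch : ∑ p ∈ Nat.primesBelow l, ∑ q ∈ good Q p, psi A L1 (Q/p/q) q ≤
      ∑ p ∈ Nat.primesBelow l, ∑ q ∈ good Q p, (9*A*B/L^2) * ((Q/p/q) * (Tk q^3 / Lg (Q/p/q)^4)) := by
    refine Finset.sum_le_sum fun p hp => Finset.sum_le_sum fun q hq => ?_
    have hLL := child_L hQ hl hp hq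
    rw [← hLdef] at hLL
    set L' := Lg (Q/p/q) with hL'
    have hL'1 : 1 ≤ L' := by linarith
    have hTq := Tk_pos q
    have hx : 0 ≤ Q/p/q := by positivity
    have hL0 : 0 < L := by linarith
    have hph : phi L1 L' ≤ 9*B/L^2 * (1/L'^4) := by
      refine (phi_le2 hL'1).trans ?_
      rw [← hB, div_mul_div_comm, div_le_div_iff₀ (by positivity) (by positivity)]
      calc B * (L^2*L'^4) ≤ B * ((3*L')^2*L'^4) := by
            have : L ≤ 3*L' := by linarith
            gcongr
        _ = _ := by ring
    calc psi A L1 (Q/p/q) q ≤ A * ((Q/p/q) * (Tk q^3 * phi L1 L')) := psi_le hA.le hx hL'1 (by linarith)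
      _ ≤ A * ((Q/p/q) * (Tk q^3 * (9*B/L^2 * (1/L'^4)))) := by gcongr
      _ = _ := by ring
  simp_rw [← Finset.mul_sum] at hch
  have hL0 : 0 < L := by linarith
  have hT3 : Tk l^3 ≤ L^3 := by gcongr; linarith
  have e1 : Q*(Tk l^3/L^6) ≤ Q/L^3 := by
    calc Q*(Tk l^3/L^6) ≤ Q*(L^3/L^6) := by gcongr
      _ = _ := by field_simp
  have e2 : (9*A*B/L^2) * (0.96 * (Q*(Tk l^3/L^4))) ≤ 9*A*B*(Q/L^3) := by
    calc _ ≤ (9*A*B/L^2) * (1 * (Q*(L^3/L^4))) := by gcongr; norm_num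
      _ = _ := by field_simp
  have e3 := mul_le_mul_of_nonneg_left h2 (show 0 ≤ 9*A*B/L^2 by positivity)
  have e4 := mul_le_mul_of_nonneg_left e1 hAH.le
  linarith

lemma crit (ε : ℝ) (hε : 0 < ε) : ∃ K : ℝ, 2 ≤ K ∧ ∃ P : ℝ → ℕ → ℝ, ∃ L1 : ℝ,
    (∀ (Q : ℝ) (l : ℕ), 1 ≤ Q → (l:ℝ)^2 ≤ Q →
      Hs Q l + ∑ p ∈ Nat.primesBelow l, ∑ q ∈ good Q p, P (Q/p/q) q ≤ P Q l + kap * ε / K * badK K Q l) ∧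
    ∀ (Q : ℝ) (l : ℕ), 0.255 * Lg Q < Tk l → L1 ≤ Lg Q → P Q l = 0 := by
  obtain ⟨AH, hAH, hH⟩ := Hs_le
  obtain ⟨K0, hK0, hb⟩ := badK_low
  have hk := kap_pos
  set A := 40*AH with hA
  -- choose K
  obtain ⟨k, hk1, hk2, hk3⟩ : ∃ k : ℝ, 1 ≤ k ∧ Real.log K0 ≤ k ∧
      AH + 9*A*(6000*k)^(199/100:ℝ) ≤ kap * ε * (1/1000000 * k^2) := by
    have t1 : Filter.Tendsto (fun k : ℝ => k^(1/100:ℝ)) Filter.atTop Filter.atTop := tendsto_rpow_atTop (by norm_num)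
    have ev := (t1.eventually_ge_atTop ((AH + 9*A*6000^(199/100:ℝ)) / (kap*ε*(1/1000000)))).and
      ((Filter.eventually_ge_atTop 1).and (Filter.eventually_ge_atTop (Real.log K0)))
    obtain ⟨k, h1, h2, h3⟩ := ev.exists
    refine ⟨k, h2, h3, ?_⟩
    have hk0 : 0 < k := by linarith
    rw [div_le_iff₀ (by positivity)] at h1
    have e2 : k^(199/100:ℝ) * k^(1/100:ℝ) = k^2 := by
      rw [← Real.rpow_add (by linarith), ← Real.rpow_natCast]; norm_num
    have e3 : 1 ≤ k^(199/100:ℝ) := Real.one_le_rpow h2 (by norm_num)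
    rw [Real.mul_rpow (by norm_num) hk0.le]
    calc AH + 9*A*(6000^(199/100:ℝ) * k^(199/100:ℝ)) ≤ AH * k^(199/100:ℝ) + 9*A*(6000^(199/100:ℝ) * k^(199/100:ℝ)) := by
          nlinarith
      _ = k^(199/100:ℝ) * (AH + 9*A*6000^(199/100:ℝ)) := by ring
      _ ≤ k^(199/100:ℝ) * (k^(1/100:ℝ) * (kap*ε*(1/1000000))) := by gcongr
      _ = (k^(199/100:ℝ) * k^(1/100:ℝ)) * (kap*ε*(1/1000000)) := by ring
      _ = _ := by rw [e2]; ring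
  have hKK : K0 ≤ Real.exp k := by rwa [← Real.log_le_iff_le_exp (by linarith)]
  set K := Real.exp k with hK
  have hKp : 0 < K := Real.exp_pos _
  refine ⟨K, by linarith, psi A (2000*k), 2000*k, ?_, fun Q l h1 h2 => by rw [psi, if_pos ⟨h1, h2⟩]⟩
  intro Q l hQ hl
  have hbn : 0 ≤ kap * ε / K * badK K Q l := mul_nonneg (by positivity) (badK_nonneg _ _ _)
  by_cases hh : 0.255 * Lg Q < Tk l ∧ 2000*k ≤ Lg Q
  · rw [show psi A (2000*k) Q l = 0 from by rw [psi, if_pos hh], zero_add]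
    refine (psi_case3 hAH hH (A := A) (by positivity) (by linarith) hQ hl).trans ?_
    have hlk : Real.log K = k := by rw [hK, Real.log_exp]
    have h5 := hb K hKK Q l hQ hl hh.1 (by rw [hlk]; exact hh.2)
    rw [hlk] at h5
    have hL : 0 < Lg Q := by linarith
    have e6 : 3*(2000*k) = 6000*k := by ring
    rw [e6]
    calc _ ≤ (kap * ε * (1/1000000 * k^2)) * (Q / Lg Q^3) := by gcongr
      _ = kap * ε / K * (1/1000000 * K * k^2 * Q/(Lg Q)^3) := by field_simp
      _ ≤ _ := by gcongr
  · have e : psi A (2000*k) Q l = A * (Q * (Tk l^3 * phi (2000*k) (Lg Q))) := by rw [psi, if_neg hh]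
    rw [e]
    rcases le_or_gt (Lg Q) (3*(2000*k)) with h | h
    · linarith [psi_case1 hAH hH hA (L1 := 2000*k) (by linarith) hQ hl h]
    · have : Tk l ≤ 0.255 * Lg Q := by
        by_contra hc
        exact hh ⟨not_le.1 hc, by linarith⟩
      linarith [psi_case2 hAH hH hA (L1 := 2000*k) (by linarith) hQ hl h this]

end Jac


namespace Jac
open Finset

set_option maxHeartbeats 1000000 in
lemma root : ∃ C : ℕ, 1 ≤ C ∧ ∃ z0 : ℕ, ∀ z : ℕ, z0 ≤ z → ∀ (a : ℕ → ℤ) (x0 : ℤ),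
    (z:ℝ)^2/(Real.log z)^2 ≤ (sft a (prog x0 (C*z^2) 1 0) z).card := by
  obtain ⟨B0, hB0, hlow⟩ := Mlow
  obtain ⟨A, hA, hup⟩ := Mup
  have hA0 : 0 < A := by linarith
  set ε := 1/(1440*A) with hεd
  have hε : 0 < ε := by positivity
  have hε1 : ε ≤ 1 := by rw [hεd, div_le_one (by positivity)]; linarith
  obtain ⟨K, hK, P, L1, hP, hP0⟩ := crit ε hε
  have hk := kap_pos
  obtain ⟨C, hC⟩ := exists_nat_ge (B0 + K + 720*301/kap)
  have hq : 0 < 720*301/kap := by positivity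
  have hCB : B0 ≤ C := by linarith
  have hCK : K ≤ C := by linarith
  have hCk : 720*301/kap ≤ C := by linarith
  have hC0 : (0:ℝ) < C := by linarith
  have hlogC : 1 ≤ Real.log C := by
    rw [Real.le_log_iff_exp_le hC0]
    have := Real.exp_one_lt_d9
    linarith
  have hKC : 0 < Real.log (K*C) := Real.log_pos (by nlinarith)
  have t1 : Filter.Tendsto (fun z : ℕ => (z:ℝ)) Filter.atTop Filter.atTop := tendsto_natCast_atTop_atTop
  have t2 := Real.tendsto_log_atTop.comp t1
  have ev := (t1.eventually_gt_atTop (3 + K*C + C)).and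
    (t2.eventually_gt_atTop ((0.255 * (Real.log C + c0) + AT)*4 + |L1| + 1 + Real.log C))
  obtain ⟨z0, hz0⟩ := Filter.eventually_atTop.1 ev
  have hC1 : 1 ≤ C := by
    have : (1:ℝ) ≤ C := by linarith
    exact_mod_cast this
  refine ⟨C, hC1, z0, fun z hz a x0 => ?_⟩
  obtain ⟨g1, g2⟩ := hz0 z hz
  simp only [Function.comp] at g2
  have hAT := AT_ge
  have hc0 := c0_ge
  have hKC0 : 0 < K*C := by positivity
  have hz3 : (3:ℝ) ≤ z := by linarith
  have hzpos : (0:ℝ) < z := by linarith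
  have hz3' : 3 ≤ z := by exact_mod_cast hz3
  set lz := Real.log z with hlz
  have habs := abs_nonneg L1
  have hlz0 : 0 < lz := by linarith
  have hG := lemG a x0 (C*z^2) ε K hε.le hε1 (by linarith) P hP z 1 0 (by norm_num) (by simp)
  set W : ℝ := C*(z:ℝ)^2 with hW
  have eW : ((C*z^2 : ℕ):ℝ)/((1:ℕ):ℝ) = W := by rw [hW]; push_cast; ring
  rw [eW] at hG
  have hC1' : (1:ℝ) ≤ C := by exact_mod_cast hC1
  have hzW : (z:ℝ)^2 ≤ W := by rw [hW]; exact le_mul_of_one_le_left (sq_nonneg _) hC1'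
  have hW1 : 1 ≤ W := by nlinarith only [hzW, hz3]
  have hG := hG hW1 hzW
  have hlogW : Real.log W = Real.log C + 2 * lz := by
    rw [hW, Real.log_mul (by positivity) (by positivity), Real.log_pow]; push_cast; ring
  have hLW : Lg W = Real.log C + 2 * lz + c0 := by rw [Lg, hlogW]
  have hPz : P W z = 0 := by
    apply hP0
    · have := Tk_ge z
      rw [hLW]
      linarith
    · rw [hLW]
      have := le_abs_self L1
      linarith
  have hWz : W/(z:ℝ)^2 = C := by rw [hW]; field_simp
  have hW0 : 0 < W := by linarith
  have h1 := hlow W z (by omega) (by rw [hW]; gcongr)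
  rw [hWz, hlogW] at h1
  have h1' : 1/360 * (Real.log C * W/lz^2) ≤ Mr 0 W z := by
    refine le_trans ?_ h1
    calc 1/360 * (Real.log C * W/lz^2) = 1/40 * Real.log C * W/(3*lz)^2 := by field_simp; ring
      _ ≤ _ := by
        gcongr
        linarith
  have h2 := hup (K*W) z hz3' (by rw [hW, ← mul_assoc]; exact mul_le_mul_of_nonneg_right (show 4 ≤ K*C by nlinarith only [hK, hCK]) (sq_nonneg (z:ℝ))) (by
    rw [hW]
    calc K*(C*(z:ℝ)^2) = (K*C)*(z:ℝ)^2 := by ring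
      _ < z * (z:ℝ)^2 := by gcongr; linarith
      _ = _ := by ring)
  have e3 : K*W/(z:ℝ)^2 = K*C := by rw [hW]; field_simp
  rw [e3] at h2
  have hlKC : Real.log (K*C) ≤ 2 * Real.log C := by
    rw [Real.log_mul (by linarith) (by linarith)]
    have := Real.log_le_log (by linarith) hCK
    linarith
  have h2' : ε/K * Mr 0 (K*W) z ≤ 1/720 * (Real.log C * W/lz^2) := by
    calc ε/K * Mr 0 (K*W) z ≤ ε/K * (A*(2*Real.log C)*(K*W)/lz^2) := by
          have hKp : 0 < K := by linarith
          refine mul_le_mul_of_nonneg_left (h2.trans ?_) (by positivity)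
          gcongr
      _ = _ := by rw [hεd]; field_simp; ring
  have h3 := card_pb_le (x := z) (l := z) (by linarith) le_rfl
  rw [← pib, ← hlz] at h3
  have h4 : pib z^2 ≤ 25 * ((z:ℝ)^2/lz^2) := by
    calc pib z^2 ≤ (5*z/lz)^2 := by
          have := pib_nonneg z
          gcongr
      _ = _ := by ring
  have h5 : 301 * ((z:ℝ)^2/lz^2) ≤ kap * (1/720 * (Real.log C * W/lz^2)) := by
    rw [div_le_iff₀ hk] at hCk
    have : 301 ≤ kap * (1/720) * Real.log C * C := by
      have h7 : C * kap * 1 ≤ C * kap * Real.log C := by gcongr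
      linarith
    calc _ ≤ (kap * (1/720) * Real.log C * C) * ((z:ℝ)^2/lz^2) := by gcongr
      _ = _ := by rw [hW]; ring
  rw [hPz] at hG
  refine le_trans ?_ hG
  have h6 : kap * (1/720 * (Real.log C * W/lz^2)) ≤ kap * ((1+ε)*Mr 0 W z - ε/K * Mr 0 (K*W) z) := by
    have := Mr_nonneg 0 W z
    have h8 : 0 ≤ ε * Mr 0 W z := by positivity
    gcongr
    linarith
  linarith

end Jac


namespace Jac
open Finset

lemma Mr1_le (Q : ℝ) (l : ℕ) (hQ : 1 < Q) (h : Q < (l:ℝ)^3) : Mr 1 Q l ≤ 15 * (Q/Real.log Q) := by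
  rw [Mr, M]
  have hs : Mset 1 ⌊Q⌋₊ l ⊆ Nat.primesBelow (⌊Q⌋₊+1) := by
    intro n hn
    simp only [Mset, mem_filter, mem_Icc] at hn
    obtain ⟨⟨h1, h2⟩, h3, h4⟩ := hn
    rw [Nat.mem_primesBelow]
    refine ⟨by omega, ?_⟩
    have hnq : n < l^3 := by
      have : (n:ℝ) < (l:ℝ)^3 := lt_of_le_of_lt ((Nat.le_floor_iff' (by omega)).1 h2) h
      exact_mod_cast this
    have hn1 : n ≠ 1 := by rintro rfl; simp at h4
    obtain ⟨p, hp, m, rfl⟩ := Nat.exists_prime_and_dvd hn1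
    have hm0 : m ≠ 0 := by rintro rfl; simp at h1
    rw [ArithmeticFunction.cardFactors_mul hp.ne_zero hm0, ArithmeticFunction.cardFactors_apply_prime hp] at h4
    by_cases hm1 : m = 1
    · rw [hm1, mul_one]; exact hp
    exfalso
    obtain ⟨p', hp', m', rfl⟩ := Nat.exists_prime_and_dvd hm1
    have hm0' : m' ≠ 0 := by rintro rfl; simp at h1
    rw [ArithmeticFunction.cardFactors_mul hp'.ne_zero hm0', ArithmeticFunction.cardFactors_apply_prime hp'] at h4
    have hm1' : m' ≠ 1 := by rintro rfl; simp at h4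
    obtain ⟨p'', hp'', hpm⟩ := Nat.exists_prime_and_dvd hm1'
    have a1 := h3 p hp (Dvd.intro _ rfl)
    have a2 := h3 p' hp' ((Dvd.intro _ rfl : p' ∣ p' * m').mul_left p)
    have a3 := h3 p'' hp'' ((hpm.mul_left p').mul_left p)
    have a4 := Nat.le_of_dvd (Nat.pos_of_ne_zero hm0') hpm
    have : l * (l * l) ≤ p * (p' * m') := Nat.mul_le_mul a1 (Nat.mul_le_mul a2 (a3.trans a4))
    have e : l^3 = l * (l*l) := by ring
    omega
  calc ∑ n ∈ Mset 1 ⌊Q⌋₊ l, (((⌊Q⌋₊ / n) % 4 : ℕ) : ℝ) ≤ ∑ n ∈ Nat.primesBelow (⌊Q⌋₊+1), (((⌊Q⌋₊ / n) % 4 : ℕ) : ℝ) :=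
        Finset.sum_le_sum_of_subset_of_nonneg hs (fun _ _ _ => by positivity)
    _ ≤ ∑ n ∈ Nat.primesBelow (⌊Q⌋₊+1), (3:ℝ) := by
      refine Finset.sum_le_sum fun n _ => ?_
      have : (⌊Q⌋₊ / n) % 4 ≤ 3 := by omega
      exact_mod_cast this
    _ = 3 * (Nat.primeCounting ⌊Q⌋₊ : ℝ) := by
      rw [Finset.sum_const, nsmul_eq_mul, Nat.primesBelow_card_eq_primeCounting', mul_comm]; rfl
    _ ≤ _ := by
      have := pi_le hQ
      calc _ ≤ 3 * (5 * Q / Real.log Q) := by gcongr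
        _ = _ := by ring

lemma sft_anti (a : ℕ → ℤ) (A : Finset ℤ) {l z : ℕ} (h : l ≤ z) : (sft a A z).card ≤ (sft a A l).card := by
  apply Finset.card_le_card
  intro n
  simp only [sft, mem_filter]
  rintro ⟨h1, h2⟩
  refine ⟨h1, fun p hp => h2 p ?_⟩
  rw [Nat.mem_primesBelow] at *
  exact ⟨by omega, hp.2⟩

set_option maxHeartbeats 1000000 in
lemma upper : ∃ A : ℝ, 1 ≤ A ∧ ∀ (a : ℕ → ℤ) (x0 : ℤ) (W d : ℕ) (r : ℤ) (z : ℕ), 0 < d →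
    (∀ p : ℕ, p.Prime → p < z → Nat.Coprime d p) → 1 < (W:ℝ)/d → (W:ℝ)/d < (z:ℝ)^3 →
    ((sft a (prog x0 W d r) z).card : ℝ) ≤ A * (((W:ℝ)/d)/Real.log ((W:ℝ)/d)) := by
  obtain ⟨A, hA, hP⟩ := pot0
  refine ⟨30 + 104 + 1440 + 16*A, by linarith, fun a x0 W d r z hd hcop hQ1 hQz => ?_⟩
  set Q := (W:ℝ)/d with hQd
  have hQ0 : 0 < Q := by linarith
  have hlQ : 0 < Real.log Q := Real.log_pos hQ1
  set y := Q^(1/3:ℝ) with hy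
  have hy3 : y^3 = Q := by
    rw [hy, ← Real.rpow_natCast, ← Real.rpow_mul hQ0.le]; norm_num
  have hy1 : 1 ≤ y := Real.one_le_rpow hQ1.le (by norm_num)
  have hly : Real.log y = Real.log Q/3 := by rw [hy, Real.log_rpow hQ0]; ring
  set l := ⌊y⌋₊ + 1 with hl
  have hly1 : y < l := by rw [hl]; push_cast; exact Nat.lt_floor_add_one y
  have hly2 : (l:ℝ) ≤ y + 1 := by rw [hl]; push_cast; linarith [Nat.floor_le (show 0 ≤ y by linarith)]
  have hyz : y < z := by
    by_contra hc
    push Not at hc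
    have : (z:ℝ)^3 ≤ y^3 := by gcongr
    linarith
  have hlz : l ≤ z := by
    rw [hl, Nat.succ_le_iff]; exact (Nat.floor_lt (by linarith)).2 hyz
  have hpl : ∀ p ∈ Nat.primesBelow l, p.Prime ∧ (p:ℝ) ≤ y ∧ p < z := by
    intro p hp
    rw [Nat.mem_primesBelow] at hp
    refine ⟨hp.2, ?_, by omega⟩
    exact (Nat.le_floor_iff (by linarith)).1 (by omega)
  have h0 : ((sft a (prog x0 W d r) z).card : ℝ) ≤ (sft a (prog x0 W d r) l).card := by
    exact_mod_cast sft_anti a _ hlz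
  refine h0.trans ?_
  rw [sft_buch]
  have hpc := (abs_le.1 (prog_card x0 W d hd r)).2
  rw [← hQd] at hpc
  have hb := (abs_le.1 (Mr_base 1 (by norm_num) Q hQ0.le)).1
  have hbu := Mr_buch 1 (by norm_num) Q l
  have hk := kap_pos
  have hk2 := kap_le
  have hAT := AT_ge
  have hc0 : c0 = 20000 * (AT+3) := rfl
  set L := Lg Q with hL
  have hLlog : L = Real.log Q + c0 := rfl
  have hL0 : 0 < L := by linarith
  -- lower bounds
  have hlo : ∑ p ∈ Nat.primesBelow l, (kap * Mr 0 (Q/p) p - 12 * pib l^2 - (16*A*Q/L^4) * ((1/(p:ℝ)) * Tk p^3)) ≤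
      ∑ p ∈ Nat.primesBelow l, ((sft a (hit a (prog x0 W d r) p) p).card : ℝ) := by
    refine Finset.sum_le_sum fun p hp => ?_
    have hp' := Nat.mem_primesBelow.1 hp
    obtain ⟨hpp, hpy, hpz⟩ := hpl p hp
    have hp0 : (0:ℝ) < p := by exact_mod_cast hpp.pos
    have hp1 : (1:ℝ) ≤ p := by exact_mod_cast hpp.pos
    obtain ⟨r', hr'⟩ := hit_prog a x0 W d p (hcop p hpp hpz) r
    rw [hr']
    have e : (W:ℝ)/((d*p:ℕ):ℝ) = Q/p := by rw [hQd]; push_cast; rw [div_div]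
    have hp3 : (p:ℝ)^3 ≤ Q := by rw [← hy3]; gcongr
    have hp2 : (p:ℝ)^2 ≤ Q/p := by rw [le_div_iff₀ hp0]; linarith
    have hG := lemG a x0 W 0 1 le_rfl zero_le_one le_rfl (fun Q l => A * (Q * (Tk l^3 / Lg Q^4))) (by
      intro Q l hQ hl
      have := hP Q l hQ hl
      simpa using this) p (d*p) r' (Nat.mul_pos hd hpp.pos) (by
        intro p' hp'' hlt
        refine Nat.Coprime.mul_left (hcop p' hp'' (by omega)) ?_
        exact (Nat.coprime_primes hpp hp'').2 (by omega)) (by rw [e]; nlinarith only [hp1, hp2]) (by rw [e]; exact hp2)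
    rw [e] at hG
    refine le_trans ?_ hG
    have hm := pib_mono hp'.1.le
    have hm0 := pib_nonneg p
    have hm2 : pib p^2 ≤ pib l^2 := by gcongr
    have hLp : L/2 ≤ Lg (Q/p) := by
      rw [Lg_div hQ0 hp0, ← hL]
      have := Real.log_le_log hp0 hpy
      rw [hly] at this
      linarith
    have hT := Tk_pos p
    have hlast : A * (Q/p * (Tk p^3 / Lg (Q/p)^4)) ≤ (16*A*Q/L^4) * ((1/(p:ℝ)) * Tk p^3) := by
      calc A * (Q/p * (Tk p^3 / Lg (Q/p)^4)) ≤ A * (Q/p * (Tk p^3 / (L/2)^4)) := by gcongr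
        _ = _ := by field_simp; norm_num
    simp only [add_zero, one_mul, zero_div, zero_mul, sub_zero]
    linarith
  rw [Finset.sum_sub_distrib, Finset.sum_sub_distrib, ← Finset.mul_sum, Finset.sum_const,
    nsmul_eq_mul, ← pib, ← Finset.mul_sum] at hlo
  have hcc := clock_cube l
  have hTl : Tk l ≤ L := by
    have h1 := Tk_le l
    have h2 : Real.log l ≤ Real.log (2*y) := Real.log_le_log (by linarith) (by linarith)
    rw [Real.log_mul (by norm_num) (by linarith), hly] at h2
    have := Real.log_two_lt_d9
    linarith
  have hTl0 := Tk_pos l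
  have f1 : (16*A*Q/L^4) * (∑ p ∈ Nat.primesBelow l, (1/(p:ℝ)) * Tk p^3) ≤ 16*A*(Q/Real.log Q) := by
    calc _ ≤ (16*A*Q/L^4) * (L^3/1) := by
          gcongr
          refine hcc.trans ?_
          gcongr
          norm_num
      _ = 16*A*(Q/L) := by field_simp
      _ ≤ _ := by gcongr; linarith
  have f2 : pib l * (12*pib l^2) ≤ 1440 * (Q/Real.log Q) := by
    have g1 := card_pb_le (x := y+1) (l := l) (by linarith) hly2
    rw [← pib] at g1
    have g2 : pib l ≤ 30*(y/Real.log Q) := by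
      refine g1.trans ?_
      have : Real.log Q/3 ≤ Real.log (y+1) := by rw [← hly]; exact Real.log_le_log (by linarith) (by linarith)
      calc 5*(y+1)/Real.log (y+1) ≤ 5*(y+y)/(Real.log Q/3) := by gcongr
        _ = _ := by field_simp; norm_num
    have g3 : pib l ≤ 2*y := (pib_le_self l).trans (by linarith)
    have g0 := pib_nonneg l
    calc _ ≤ 30*(y/Real.log Q) * (12*(2*y)^2) := by gcongr
      _ = 1440 * (y^3/Real.log Q) := by ring
      _ = _ := by rw [hy3]
  have f3 : 52 * Real.sqrt Q ≤ 104 * (Q/Real.log Q) := by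
    have hs := Real.sqrt_pos.2 hQ0
    have h1 := Real.log_le_sub_one_of_pos hs
    rw [Real.log_sqrt hQ0.le] at h1
    rw [← mul_div_assoc, le_div_iff₀ hlQ]
    have h2 := Real.mul_self_sqrt hQ0.le
    nlinarith only [h1, h2, hs]
  have f4 : 1 ≤ Real.sqrt Q := Real.one_le_sqrt.2 hQ1.le
  have f5 := Mr1_le Q l hQ1 (by rw [← hy3]; gcongr)
  have f6 : kap * Mr 1 Q l ≤ 30 * (Q/Real.log Q) := by
    have hMn := Mr_nonneg 1 Q l
    have : 0 < Q/Real.log Q := by positivity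
    nlinarith only [f5, hk, hk2, this, hMn]
  have f7 : kap * Mr 1 Q l = kap * Mr 1 Q 0 - kap * ∑ p ∈ Nat.primesBelow l, Mr 0 (Q/p) p := by
    rw [hbu]; simp only [Nat.sub_self]; ring
  have f8 : (30 + 104 + 1440 + 16*A) * (Q/Real.log Q) = 30 * (Q/Real.log Q) + 104 * (Q/Real.log Q) + 1440 * (Q/Real.log Q) + 16*A*(Q/Real.log Q) := by ring
  rw [f8]
  generalize (Q/Real.log Q) = X at *
  generalize 16*A*X = AX at *
  generalize ∑ p ∈ Nat.primesBelow l, Mr 0 (Q/p) p = s1 at *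
  generalize (∑ p ∈ Nat.primesBelow l, ((sft a (hit a (prog x0 W d r) p) p).card : ℝ)) = s2 at *
  linarith

end Jac


namespace Jac
open Finset

set_option maxHeartbeats 1000000 in
theorem jacob : ∃ C : ℝ, 0 < C ∧ ∀ N : ℕ, 2 ≤ N → ∀ a : ℕ → ℤ, ∃ lam : ℤ, (|lam| : ℝ) ≤ C * Real.log N ^ 2 ∧
    ∀ p : ℕ, p.Prime → p ∣ N → ¬ lam ≡ a p [ZMOD p] := by
  obtain ⟨C, hC, z0, hroot⟩ := root
  obtain ⟨A, hA, hup⟩ := upper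
  have hC1 : (1:ℝ) ≤ C := by exact_mod_cast hC
  have t1 : Filter.Tendsto (fun z : ℕ => (z:ℝ)) Filter.atTop Filter.atTop := tendsto_natCast_atTop_atTop
  have hlo : ∀ᶠ x : ℝ in Filter.atTop, 2 * Real.log x ≤ Real.sqrt x := by
    have h := (isLittleO_log_rpow_atTop (r := 1/2) (by norm_num)).bound (c := 1/2) (by norm_num)
    filter_upwards [h, Filter.eventually_ge_atTop 1] with x h1 h2
    rw [Real.norm_of_nonneg (Real.log_nonneg h2), Real.norm_of_nonneg (by positivity), ← Real.sqrt_eq_rpow] at h1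
    linarith
  have ev := (t1.eventually hlo).and ((t1.eventually_gt_atTop (C+3:ℝ)).and (Filter.eventually_ge_atTop z0))
  obtain ⟨z1, hz1⟩ := Filter.eventually_atTop.1 ev
  set K' : ℝ := 2*A*C+1 with hK'
  have hK0 : 0 < K' := by positivity
  refine ⟨C*(K'+2+2*z1)^2, by positivity, fun N hN a => ?_⟩
  set n := Real.log N with hn
  have hn2 : 1/2 ≤ n := by
    have h1 : Real.log 2 ≤ n := Real.log_le_log (by norm_num) (by exact_mod_cast hN)
    have := Real.log_two_gt_d9
    linarith
  set z := ⌈K'*n⌉₊ + z1 with hz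
  obtain ⟨g1, g2, g3⟩ := hz1 z (by omega)
  have hz1' : (0:ℝ) ≤ z1 := by positivity
  have hzl : K'*n ≤ z := by
    rw [hz]; push_cast; linarith [Nat.le_ceil (K'*n)]
  have hzu : (z:ℝ) ≤ (K'+2+2*z1)*n := by
    have := Nat.ceil_lt_add_one (show 0 ≤ K'*n by positivity)
    rw [hz]; push_cast
    nlinarith
  have hz3 : (3:ℝ) < z := by linarith
  have hz0 : (0:ℝ) < z := by linarith
  set lz := Real.log z with hlz
  have hlz0 : 0 < lz := Real.log_pos (by linarith)
  set D := C*z^2 with hD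
  have hDr : (D:ℝ) = C*(z:ℝ)^2 := by rw [hD]; push_cast; ring
  set PP := prog 0 D 1 0 with hPP
  have hS := hroot z g3 a 0
  rw [← hD, ← hPP, ← hlz] at hS
  set B := N.primeFactors.filter (fun p => z ≤ p) with hB
  have hBp : ∀ p ∈ B, p.Prime ∧ z ≤ p := by
    intro p hp
    rw [hB, mem_filter] at hp
    exact ⟨Nat.prime_of_mem_primeFactors hp.1, hp.2⟩
  have hBc : (B.card:ℝ) * lz ≤ n := by
    have h1 : ∏ p ∈ B, p ∣ N := (Finset.prod_dvd_prod_of_subset _ _ _ (Finset.filter_subset _ _)).trans (Nat.prod_primeFactors_dvd N)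
    have h2 : z^B.card ≤ ∏ p ∈ B, p := by
      rw [← Finset.prod_const]
      exact Finset.prod_le_prod' (fun p hp => (hBp p hp).2)
    have h3 : z^B.card ≤ N := h2.trans (Nat.le_of_dvd (by omega) h1)
    have h4 : ((z:ℝ))^B.card ≤ N := by exact_mod_cast h3
    have := Real.log_le_log (by positivity) h4
    rwa [Real.log_pow] at this
  have hsq : Real.sqrt z * Real.sqrt z = z := Real.mul_self_sqrt hz0.le
  have hsq1 : 1 ≤ Real.sqrt z := Real.one_le_sqrt.2 (by linarith)
  have hsq2 : 1 < Real.sqrt z := by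
    rw [Real.lt_sqrt (by norm_num)]; linarith
  have hX : 2 * Real.sqrt z ≤ 2*A*C*(z/lz) := by
    have h1 : 2 * Real.sqrt z ≤ z/lz := by
      rw [le_div_iff₀ hlz0]
      calc 2 * Real.sqrt z * lz = Real.sqrt z * (2*lz) := by ring
        _ ≤ Real.sqrt z * Real.sqrt z := by gcongr
        _ = z := hsq
    have h2 : 1 ≤ 2*A*C := by nlinarith
    have h3 : 0 < z/lz := by positivity
    nlinarith only [h1, h2, h3]
  have hcount : ∀ p ∈ B, ((sft a (hit a PP p) z).card : ℝ) ≤ 2*A*C*(z/lz) := by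
    intro p hp
    obtain ⟨hpp, hpz⟩ := hBp p hp
    have hp0 : (0:ℝ) < p := by exact_mod_cast hpp.pos
    have hpz' : (z:ℝ) ≤ p := by exact_mod_cast hpz
    obtain ⟨r', hr'⟩ := hit_prog a 0 D 1 p (by simp) 0
    rw [← hPP, one_mul] at hr'
    rw [hr']
    have hDp : (D:ℝ)/p ≤ C*z := by
      rw [hDr, div_le_iff₀ hp0]
      calc C*(z:ℝ)^2 = C*z*z := by ring
        _ ≤ _ := by gcongr
    rcases le_or_gt (Real.sqrt z) ((D:ℝ)/p) with h | h
    · have h1 := hup a 0 D p r' z hpp.pos (by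
        intro p' hp' hlt
        exact (Nat.coprime_primes hpp hp').2 (by omega)) (by linarith) (by
        refine hDp.trans_lt ?_
        have : (C:ℝ) < z^2 := by nlinarith
        calc (C:ℝ)*z < z^2*z := by gcongr
          _ = _ := by ring)
      refine h1.trans ?_
      have h2 : lz/2 ≤ Real.log ((D:ℝ)/p) := by
        have := Real.log_le_log (by linarith) h
        rwa [Real.log_sqrt hz0.le] at this
      calc _ ≤ A * (C*z/(lz/2)) := by gcongr
        _ = _ := by field_simp
    · have h1 := (abs_le.1 (prog_card 0 D p hpp.pos r')).2
      have h2 : ((sft a (prog 0 D p r') z).card : ℝ) ≤ (prog 0 D p r').card := by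
        exact_mod_cast Finset.card_le_card (Finset.filter_subset _ _)
      linarith
  by_contra hcon
  push Not at hcon
  have hsub : sft a PP z ⊆ B.biUnion (fun p => sft a (hit a PP p) z) := by
    intro m hm
    have hm' := hm
    rw [sft, mem_filter, hPP, prog, mem_filter, mem_Ioc] at hm'
    obtain ⟨⟨⟨k1, k2⟩, -⟩, k3⟩ := hm'
    obtain ⟨p, hp, hpN, hpa⟩ := hcon m (by
      have e1 : (0:ℝ) < (m:ℝ) := by exact_mod_cast k1
      have e2 : (m:ℝ) ≤ D := by
        rw [zero_add] at k2
        exact_mod_cast k2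
      rw [abs_of_pos e1]
      calc (m:ℝ) ≤ C*(z:ℝ)^2 := by rw [← hDr]; exact e2
        _ ≤ C*((K'+2+2*z1)*n)^2 := by gcongr
        _ = _ := by ring)
    rw [mem_biUnion]
    have hpz : z ≤ p := by
      by_contra hc
      exact k3 p (Nat.mem_primesBelow.2 ⟨by omega, hp⟩) hpa
    refine ⟨p, ?_, ?_⟩
    · rw [hB, mem_filter]
      exact ⟨Nat.mem_primeFactors.2 ⟨hp, hpN, by omega⟩, hpz⟩
    · rw [sft, mem_filter] at hm ⊢
      refine ⟨?_, hm.2⟩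
      rw [hit, mem_filter]
      exact ⟨hm.1, hpa⟩
  have hle : ((sft a PP z).card : ℝ) ≤ ∑ p ∈ B, ((sft a (hit a PP p) z).card : ℝ) := by
    exact_mod_cast (Finset.card_le_card hsub).trans Finset.card_biUnion_le
  have hle2 := hle.trans (Finset.sum_le_sum hcount)
  rw [Finset.sum_const, nsmul_eq_mul] at hle2
  have hle3 := hS.trans hle2
  have e1 : (B.card:ℝ) ≤ z/(K'*lz) := by
    rw [le_div_iff₀ (by positivity)]
    calc B.card * (K'*lz) = K' * (B.card * lz) := by ring
      _ ≤ K' * n := by gcongr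
      _ ≤ z := hzl
  have e2 : (B.card:ℝ) * (2*A*C*(z/lz)) ≤ (2*A*C/K') * ((z:ℝ)^2/lz^2) := by
    calc _ ≤ z/(K'*lz) * (2*A*C*(z/lz)) := by gcongr
      _ = _ := by field_simp
  have e3 : 2*A*C/K' < 1 := by rw [div_lt_one hK0]; linarith
  have e4 : 0 < (z:ℝ)^2/lz^2 := by positivity
  nlinarith only [hle3, e2, e3, e4]

end Jac

namespace Jac

lemma short {p r y1 y2 v1 v2 w1 w2 : ℤ} (hp : 2 ≤ p) (hr : 2*|r| ≤ p)
    (e1 : p*y1 = w1 + r*v1) (e2 : p*y2 = w2 + r*v2) (hv : 0 < v1^2+v2^2)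
    (hvw : v1^2+v2^2 ≤ w1^2+w2^2) (hip : |2*(w1*v1+w2*v2)| ≤ v1^2+v2^2)
    (hm : w1^2+w2^2 ≤ y1^2+y2^2) : False := by
  have h1 : p^2*(y1^2+y2^2) = (w1^2+w2^2) + r*(2*(w1*v1+w2*v2)) + r^2*(v1^2+v2^2) := by
    have : p^2*(y1^2+y2^2) = (p*y1)^2+(p*y2)^2 := by ring
    rw [this, e1, e2]; ring
  have h2 : r*(2*(w1*v1+w2*v2)) ≤ |r| * (v1^2+v2^2) := by
    refine (le_abs_self _).trans ?_
    rw [abs_mul]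
    exact mul_le_mul_of_nonneg_left hip (abs_nonneg r)
  rw [← sq_abs r] at h1
  have hr0 := abs_nonneg r
  generalize |r| = s at *
  generalize r*(2*(w1*v1+w2*v2)) = i at *
  generalize w1^2+w2^2 = W at *
  generalize v1^2+v2^2 = V at *
  generalize y1^2+y2^2 = Y at *
  have hW : 0 < W := by linarith
  have h3 : p^2*W ≤ p^2*Y := by gcongr
  have h4 : s*V ≤ s*W := by gcongr
  have h5 : s^2*V ≤ s^2*W := by gcongr
  have h6 : (p^2 - 1 - s - s^2)*W ≤ 0 := by nlinarith
  have h7 : 0 < p^2 - 1 - s - s^2 := by nlinarith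
  nlinarith

lemma ind_iff {v1 v2 w1 w2 : ℤ} (hv : 0 < v1^2+v2^2) :
    (¬ ∃ t : ℝ, ((w1:ℝ), (w2:ℝ)) = (t*(v1:ℝ), t*(v2:ℝ))) ↔ w1*v2 - w2*v1 ≠ 0 := by
  rw [not_iff_not]
  constructor
  · rintro ⟨t, ht⟩
    rw [Prod.mk.injEq] at ht
    have : (w1:ℝ)*v2 - w2*v1 = 0 := by rw [ht.1, ht.2]; ring
    exact_mod_cast this
  · intro h
    have h' : (w1:ℝ)*v2 - w2*v1 = 0 := by exact_mod_cast h
    have hv' : (0:ℝ) < (v1:ℝ)^2+(v2:ℝ)^2 := by exact_mod_cast hv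
    refine ⟨(w1*v1+w2*v2)/((v1:ℝ)^2+(v2:ℝ)^2), ?_⟩
    rw [Prod.mk.injEq]
    constructor
    · rw [div_mul_eq_mul_div, eq_div_iff hv'.ne']
      linear_combination v2 * h'
    · rw [div_mul_eq_mul_div, eq_div_iff hv'.ne']
      linear_combination -v1 * h'

lemma bal (p : ℤ) (hp : 0 < p) (x : ℤ) : ∃ r : ℤ, p ∣ x - r ∧ 2*|r| ≤ p := by
  have h := Int.emod_nonneg x hp.ne'
  have h2 := Int.emod_lt_of_pos x hp
  have h3 := Int.emod_add_mul_ediv x p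
  rcases le_or_gt (2*(x % p)) p with h4 | h4
  · exact ⟨x % p, Int.dvd_self_sub_emod, by rw [abs_of_nonneg h]; exact h4⟩
  · refine ⟨x % p - p, ?_, by rw [abs_of_nonpos (by linarith)]; linarith⟩
    rw [sub_sub_eq_add_sub, add_sub_right_comm]
    exact dvd_add Int.dvd_self_sub_emod (dvd_refl p)

theorem main (N : ℕ) (hN : 2 ≤ N) (hsf : Squarefree N) (u v v1 v2 w1 w2 : ℤ)
    (hvL : (N:ℤ) ∣ v1*v - v2*u) (hv : 0 < v1^2+v2^2) (hwL : (N:ℤ) ∣ w1*v - w2*u)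
    (hdet : w1*v2 - w2*v1 ≠ 0)
    (hvmin : ∀ y1 y2 : ℤ, (N:ℤ) ∣ y1*v - y2*u → 0 < y1^2+y2^2 → v1^2+v2^2 ≤ y1^2+y2^2)
    (hwmin : ∀ y1 y2 : ℤ, (N:ℤ) ∣ y1*v - y2*u → y1*v2 - y2*v1 ≠ 0 → w1^2+w2^2 ≤ y1^2+y2^2)
    (a : ℕ → ℤ) (ha : ∀ p : ℕ, (∃ x : ℤ, (p:ℤ) ∣ w1 + x*v1 ∧ (p:ℤ) ∣ w2 + x*v2) →
      ((p:ℤ) ∣ w1 + a p*v1 ∧ (p:ℤ) ∣ w2 + a p*v2))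
    (lam : ℤ) (hlam : ∀ p : ℕ, p.Prime → p ∣ N → ¬ lam ≡ a p [ZMOD p]) :
    IsCoprime (w1 + lam*v1) (w2+lam*v2) := by
  have hw : 0 < w1^2+w2^2 := by
    by_contra hc
    have h1 : w1 = 0 := by nlinarith
    have h2 : w2 = 0 := by nlinarith
    exact hdet (by rw [h1, h2]; ring)
  have hvw := hvmin w1 w2 hwL hw
  have hip : |2*(w1*v1+w2*v2)| ≤ v1^2+v2^2 := by
    have h1 := hwmin (w1+v1) (w2+v2) (by
      have := dvd_add hwL hvL
      exact this.trans (dvd_of_eq (by ring))) (by convert hdet using 1; ring)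
    have h2 := hwmin (w1-v1) (w2-v2) (by
      have := dvd_sub hwL hvL
      exact this.trans (dvd_of_eq (by ring))) (by convert hdet using 1; ring)
    rw [abs_le]
    constructor <;> nlinarith
  have key : ∀ p r y1 y2 : ℤ, 2 ≤ p → 2*|r| ≤ p → p*y1 = w1+r*v1 → p*y2 = w2+r*v2 →
      (N:ℤ) ∣ y1*v - y2*u → False := by
    intro p r y1 y2 hp hr e1 e2 hy
    refine short hp hr e1 e2 hv hvw hip (hwmin y1 y2 hy ?_)
    intro h0
    apply hdet
    have : p*(y1*v2 - y2*v1) = w1*v2 - w2*v1 := by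
      linear_combination v2*e1 - v1*e2
    rw [← this, h0, mul_zero]
  rw [Int.isCoprime_iff_gcd_eq_one]
  by_contra hg
  obtain ⟨p, hp, hpg⟩ := Nat.exists_prime_and_dvd hg
  have d1 : (p:ℤ) ∣ w1+lam*v1 := (Int.natCast_dvd_natCast.2 hpg).trans (Int.gcd_dvd_left ..)
  have d2 : (p:ℤ) ∣ w2+lam*v2 := (Int.natCast_dvd_natCast.2 hpg).trans (Int.gcd_dvd_right ..)
  have hp2 : (2:ℤ) ≤ p := by exact_mod_cast hp.two_le
  have hpp : Prime (p:ℤ) := Nat.prime_iff_prime_int.1 hp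
  by_cases hpN : p ∣ N
  · by_cases hpv : (p:ℤ) ∣ v1 ∧ (p:ℤ) ∣ v2
    · obtain ⟨⟨v1', rfl⟩, ⟨v2', rfl⟩⟩ := hpv
      have dw1 : (p:ℤ) ∣ w1 := by
        have := dvd_sub d1 ((Dvd.intro v1' rfl : (p:ℤ) ∣ p*v1').mul_left lam)
        simpa using this
      have dw2 : (p:ℤ) ∣ w2 := by
        have := dvd_sub d2 ((Dvd.intro v2' rfl : (p:ℤ) ∣ p*v2').mul_left lam)
        simpa using this
      obtain ⟨w1', rfl⟩ := dw1
      obtain ⟨w2', rfl⟩ := dw2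
      obtain ⟨N', rfl⟩ := hpN
      have hcop : Nat.Coprime p N' := Nat.coprime_of_squarefree_mul hsf
      have hcop' : IsCoprime (p:ℤ) (N':ℤ) := Nat.isCoprime_iff_coprime.2 hcop
      have hp0 : (p:ℤ) ≠ 0 := by linarith
      have hv' : (N':ℤ) ∣ v1'*v - v2'*u := by
        have e : (p:ℤ)*v1'*v - p*v2'*u = p*(v1'*v - v2'*u) := by ring
        rw [e] at hvL; push_cast at hvL
        exact (mul_dvd_mul_iff_left hp0).1 hvL
      have hw' : (N':ℤ) ∣ w1'*v - w2'*u := by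
        have e : (p:ℤ)*w1'*v - p*w2'*u = p*(w1'*v - w2'*u) := by ring
        rw [e] at hwL; push_cast at hwL
        exact (mul_dvd_mul_iff_left hp0).1 hwL
      have hsv : 0 < v1'^2+v2'^2 := by
        by_contra hc
        have h1 : v1' = 0 := by nlinarith
        have h2 : v2' = 0 := by nlinarith
        rw [h1, h2] at hv; simp at hv
      by_cases hf : (p:ℤ) ∣ v1'*v - v2'*u
      · have h1 := hvmin v1' v2' (by push_cast; exact hcop'.mul_dvd hf hv') hsv
        have h4 : (4:ℤ) ≤ (p:ℤ)^2 := by nlinarith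
        nlinarith
      · have hc : IsCoprime (p:ℤ) (v1'*v - v2'*u) := (Prime.coprime_iff_not_dvd hpp).2 hf
        obtain ⟨s, t, hst⟩ := hc
        obtain ⟨r, hr1, hr2⟩ := bal p (by linarith) (-(t*(w1'*v-w2'*u)))
        refine key p r (w1'+r*v1') (w2'+r*v2') hp2 hr2 (by ring) (by ring) ?_
        push_cast
        apply hcop'.mul_dvd
        · obtain ⟨m, hm⟩ := hr1
          refine ⟨s*(w1'*v-w2'*u) - m*(v1'*v-v2'*u), ?_⟩
          linear_combination (-(w1'*v-w2'*u))*hst - (v1'*v-v2'*u)*hm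
        · have := dvd_add hw' (hv'.mul_left r)
          exact this.trans (dvd_of_eq (by ring))
    · obtain ⟨b1, b2⟩ := ha p ⟨lam, d1, d2⟩
      apply hlam p hp hpN
      apply Int.ModEq.symm
      rw [Int.modEq_iff_dvd]
      by_contra hc
      apply hpv
      constructor
      · have : (p:ℤ) ∣ (lam - a p)*v1 := by
          have := dvd_sub d1 b1
          exact this.trans (dvd_of_eq (by ring))
        exact (hpp.dvd_or_dvd this).resolve_left hc
      · have : (p:ℤ) ∣ (lam - a p)*v2 := by
          have := dvd_sub d2 b2
          exact this.trans (dvd_of_eq (by ring))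
        exact (hpp.dvd_or_dvd this).resolve_left hc
  · have hcop : IsCoprime (N:ℤ) (p:ℤ) :=
      (Nat.isCoprime_iff_coprime.2 ((Nat.Prime.coprime_iff_not_dvd hp).2 hpN)).symm
    obtain ⟨r, ⟨m, hm⟩, hr2⟩ := bal p (by linarith) lam
    obtain ⟨y1, hy1⟩ := d1
    obtain ⟨y2, hy2⟩ := d2
    refine key p r (y1 - m*v1) (y2 - m*v2) hp2 hr2 (by linear_combination -hy1 + v1*hm)
      (by linear_combination -hy2+v2*hm) ?_
    have : (N:ℤ) ∣ (p:ℤ) * (y1*v - y2*u) := by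
      have := dvd_add hwL (hvL.mul_left lam)
      exact this.trans (dvd_of_eq (by linear_combination v*hy1 - u*hy2))
    have h2 := hcop.dvd_of_dvd_mul_left this
    have := dvd_sub h2 (hvL.mul_left m)
    exact this.trans (dvd_of_eq (by ring))

end Jac

theorem coprime_representative_exists :
    ∃ C : ℝ, 0 < C ∧ ∀ N : ℕ, 2 ≤ N → Squarefree N →
    ∀ u v : ℤ, Int.gcd u (Int.gcd v (N : ℤ)) = 1 →
    ∀ vP ∈ repLattice N u v, vP ≠ (0, 0) →
      (∀ w ∈ repLattice N u v, w ≠ (0, 0) →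
        vP.1 ^ 2 + vP.2 ^ 2 ≤ w.1 ^ 2 + w.2 ^ 2) →
    ∀ wP ∈ repLattice N u v,
      (¬ ∃ t : ℝ, ((wP.1 : ℝ), (wP.2 : ℝ)) = (t * (vP.1 : ℝ), t * (vP.2 : ℝ))) →
      (∀ w ∈ repLattice N u v,
        (¬ ∃ t : ℝ, ((w.1 : ℝ), (w.2 : ℝ)) = (t * (vP.1 : ℝ), t * (vP.2 : ℝ))) →
        wP.1 ^ 2 + wP.2 ^ 2 ≤ w.1 ^ 2 + w.2 ^ 2) →
    ∃ lam : ℤ, (|lam| : ℝ) ≤ C * Real.log N ^ 2 ∧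
      IsCoprime (wP.1 + lam * vP.1) (wP.2 + lam * vP.2) := by
  classical
  obtain ⟨C, hC, hJ⟩ := Jac.jacob
  refine ⟨C, hC, ?_⟩
  rintro N hN hsf u v - ⟨v1, v2⟩ hvL hv0 hvmin ⟨w1, w2⟩ hwL hwi hwmin
  have pos : ∀ x y : ℤ, (x, y) ≠ (0, 0) → 0 < x^2+y^2 := by
    intro x y h
    by_contra hc
    apply h
    have h1 : x = 0 := by nlinarith [sq_nonneg x, sq_nonneg y]
    have h2 : y = 0 := by nlinarith [sq_nonneg x, sq_nonneg y]
    rw [h1, h2]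
  have hv := pos v1 v2 hv0
  simp only at hvmin hwi hwmin ⊢
  rw [Jac.ind_iff hv] at hwi
  let a : ℕ → ℤ := fun p => if h : ∃ x : ℤ, (p:ℤ) ∣ w1 + x*v1 ∧ (p:ℤ) ∣ w2 + x*v2 then h.choose else 0
  obtain ⟨lam, h1, h2⟩ := hJ N hN a
  refine ⟨lam, h1, Jac.main N hN hsf u v v1 v2 w1 w2 hvL hv hwL hwi ?_ ?_ a ?_ lam h2⟩
  · intro y1 y2 hy hy0
    refine hvmin (y1, y2) hy ?_
    rintro h
    rw [Prod.mk.injEq] at h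
    rw [h.1, h.2] at hy0; simp at hy0
  · intro y1 y2 hy hy0
    exact hwmin (y1, y2) hy ((Jac.ind_iff hv).2 hy0)
  · intro p hp
    simp only [a, dif_pos hp]
    exact hp.choose_spec
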